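/- Every bridgeless planar graph on n vertices has a cycle double cover of size at most 3⌊(n−1)/2⌋. -/

import Mathlib

/-!
The proof is by reduction to 3-connected graphs and, for these, by improving the double cover by
the facial cycles. In the counts, `n` is the number of nonisolated vertices.

*Reduction.* The bound `2 |S| + 5 ≤ 3 n` is proved by induction on `n` (`CDC.good_of_planar`). If
the graph has a separation of order at most one, double covers of the two sides are put together
(`CDC.good_one`). If the smallest order of a separation is two, say with separator `{x, y}`, the
edge `xy` is added on both sides; each side stays bridgeless (`CDC.BL_RE`) and is a minor of the
graph (`CDC.planar_RE`), and cycles through `xy` on the two sides are merged (`CDC.good_two`). A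
graph without separations of order at most two is a triangle or 3-connected.

*Faces.* Planarity is the absence of `K₅` and `K₃,₃` minors, so faces are replaced by peripheral
cycles: chordless cycles whose removal leaves the graph connected. As Tutte showed, in a 3-connected
graph they generate all cycles (`CDC.gen_all`), and every edge lies on such a cycle avoiding a
prescribed vertex (`CDC.exists_per`). An edge on three of them would give a forbidden minor, so
every edge lies on exactly two (`CDC.faces_edge`). Linear algebra over `𝔽₂` then gives the
inequality `m + 2 ≤ f + n` between the numbers of edges, faces and vertices (`CDC.euler`).

*Saving cycles.* The faces form a double cover of size `f`, which is too large if many faces are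
triangles. A triangular face can be deleted if each of the three faces adjacent to it is rerouted
around it, that is, if the common edge is replaced by the other two edges of the triangle. Several
edge-disjoint triangles can be deleted at once provided that the edges they share with each
remaining face pairwise meet (`CDC.delete_dc`). Counting shows that sufficiently many triangles can
be deleted to leave at most `(3 n - 6) / 2` cycles (`CDC.savings`).
-/

open SimpleGraph

attribute [local instance] Classical.propDecidable

/-- A cycle in a graph: a connected, 2-regular subgraph. -/
def IsCycleSubgraph {V : Type*} {G : SimpleGraph V} (C : G.Subgraph) : Prop :=
  C.coe.Connected ∧ ∀ v ∈ C.verts, (C.neighborSet v).ncard = 2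

/-- A cycle double cover: a multiset of cycles covering every edge exactly twice
(counted with multiplicity). -/
def IsCDC {V : Type*} (G : SimpleGraph V) (S : Multiset G.Subgraph) : Prop :=
  (∀ C ∈ S, IsCycleSubgraph C) ∧
  ∀ e ∈ G.edgeSet, S.countP (fun C => e ∈ C.edgeSet) = 2

/-- Graph minor relation (via branch sets). -/
def HasGraphMinor {V : Type*} {W : Type*} (G : SimpleGraph V) (H : SimpleGraph W) : Prop :=
  ∃ f : W → Set V,
    (∀ w, (f w).Nonempty) ∧
    (∀ w, (G.induce (f w)).Connected) ∧
    (Pairwise fun w₁ w₂ => Disjoint (f w₁) (f w₂)) ∧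
    ∀ ⦃w₁ w₂⦄, H.Adj w₁ w₂ → ∃ v₁ ∈ f w₁, ∃ v₂ ∈ f w₂, G.Adj v₁ v₂

/-- Planarity, via Wagner's theorem: no `K₅` minor and no `K_{3,3}` minor. -/
def IsPlanar {V : Type*} (G : SimpleGraph V) : Prop :=
  ¬ HasGraphMinor G (completeGraph (Fin 5)) ∧
  ¬ HasGraphMinor G (completeBipartiteGraph (Fin 3) (Fin 3))

/-- `k`-connectivity: more than `k` vertices, and removing fewer than `k`
vertices leaves a connected graph. -/
def IsKConnected {V : Type*} [Fintype V] (k : ℕ) (G : SimpleGraph V) : Prop :=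
  k < Fintype.card V ∧ ∀ s : Set V, s.ncard < k → (G.induce sᶜ).Connected

/-- A Hamiltonian cycle: a cycle through all vertices. -/
def IsHamCycle {V : Type*} (G : SimpleGraph V) (C : G.Subgraph) : Prop :=
  IsCycleSubgraph C ∧ C.verts = Set.univ

/-! ### Connectivity inside vertex sets, minors and paths -/

namespace CDC

variable {V : Type*} {G : SimpleGraph V}

/-- `In G S a b`: the vertices `a` and `b` are joined by a walk of `G` all of whose vertices
lie in `S`. -/
inductive In (G : SimpleGraph V) (S : Set V) : V → V → Prop
  | refl {a : V} (ha : a ∈ S) : In G S a a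
  | cons {a b c : V} (ha : a ∈ S) (hab : G.Adj a b) (h : In G S b c) : In G S a c

namespace In

variable {S T : Set V} {a b c : V}

theorem left (h : In G S a b) : a ∈ S := by
  cases h <;> assumption

theorem right (h : In G S a b) : b ∈ S := by
  induction h with
  | refl ha => exact ha
  | cons _ _ _ ih => exact ih

theorem trans (h : In G S a b) (h' : In G S b c) : In G S a c := by
  induction h with
  | refl ha => exact h'
  | cons ha hab _ ih => exact .cons ha hab (ih h')

theorem single (ha : a ∈ S) (hb : b ∈ S) (h : G.Adj a b) : In G S a b :=
  .cons ha h (.refl hb)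

theorem symm (h : In G S a b) : In G S b a := by
  induction h with
  | refl ha => exact .refl ha
  | cons ha hab h ih => exact ih.trans (single h.left ha hab.symm)

theorem mono (h : In G S a b) (hST : ∀ z ∈ S, z ∈ T) : In G T a b := by
  induction h with
  | refl ha => exact .refl (hST _ ha)
  | cons ha hab h ih => exact .cons (hST _ ha) hab ih

/-- The walk stays inside the component of its end point. -/
theorem restrict (h : In G S a b) : In G {z | In G S b z} a b := by
  induction h with
  | refl ha => exact .refl (.refl ha)
  | cons ha hab h ih => exact .cons (h.symm.trans (single h.left ha hab.symm)) hab ih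

theorem mono_graph {H : SimpleGraph V} (h : In G S a b)
    (hGH : ∀ x ∈ S, ∀ y ∈ S, G.Adj x y → H.Adj x y) : In H S a b := by
  induction h with
  | refl ha => exact .refl ha
  | cons ha hab h ih => exact .cons ha (hGH _ ha _ h.left hab) ih

/-- The first hit of a set `X` along a walk. -/
theorem firstHit (X : Set V) (h : In G S a b) (ha : a ∉ X) (hb : b ∈ X) :
    ∃ a' n, In G {z | z ∈ S ∧ z ∉ X} a a' ∧ G.Adj a' n ∧ n ∈ X ∧ n ∈ S := by
  induction h with
  | refl h => exact absurd hb ha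
  | @cons a b c haS hab h ih =>
    by_cases hbX : b ∈ X
    · exact ⟨a, b, .refl ⟨haS, ha⟩, hab, hbX, h.left⟩
    · obtain ⟨a', n, h1, h2, h3, h4⟩ := ih hbX hb
      exact ⟨a', n, .cons ⟨haS, ha⟩ hab h1, h2, h3, h4⟩

end In

/-- A nonempty vertex set inducing a connected subgraph. -/
def Conn (G : SimpleGraph V) (S : Set V) : Prop :=
  S.Nonempty ∧ ∀ a ∈ S, ∀ b ∈ S, In G S a b

theorem Conn.of_root {S : Set V} {r : V} (hr : r ∈ S) (h : ∀ a ∈ S, In G S a r) : Conn G S :=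
  ⟨⟨r, hr⟩, fun a ha b hb => (h a ha).trans (h b hb).symm⟩

theorem Conn.singleton (v : V) : Conn G {v} :=
  Conn.of_root (r := v) rfl (fun a ha => by cases ha; exact .refl rfl)

theorem Conn.comp {S : Set V} {a : V} (ha : a ∈ S) : Conn G {z | In G S a z} :=
  Conn.of_root (r := a) (.refl ha) (fun _ hz => hz.symm.restrict)

theorem Conn.union {S T : Set V} (hS : Conn G S) (hT : Conn G T) {a b : V} (ha : a ∈ S)
    (hb : b ∈ T) (hab : G.Adj a b ∨ a = b) : Conn G (S ∪ T) := by
  have key : In G (S ∪ T) a b := by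
    rcases hab with hab | rfl
    · exact .single (.inl ha) (.inr hb) hab
    · exact .refl (.inl ha)
  refine Conn.of_root (r := a) (.inl ha) ?_
  rintro z (hz | hz)
  · exact (hS.2 z hz a ha).mono fun _ h => .inl h
  · exact ((hT.2 z hz b hb).mono fun _ h => .inr h).trans key.symm

theorem In.reachable {S : Set V} {a b : V} (h : In G S a b) :
    (G.induce S).Reachable ⟨a, h.left⟩ ⟨b, h.right⟩ := by
  induction h with
  | refl ha => exact .refl _
  | cons ha hab h ih =>
    exact (SimpleGraph.Adj.reachable (by simpa using hab)).trans ih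

theorem Conn.connected {S : Set V} (h : Conn G S) : (G.induce S).Connected := by
  have : Nonempty S := h.1.to_subtype
  exact ⟨fun a b => (h.2 a a.2 b b.2).reachable⟩

theorem conn_of_connected {S : Set V} (h : (G.induce S).Connected) : Conn G S := by
  obtain ⟨⟨x, hx⟩⟩ := h.nonempty
  have hp := h.preconnected
  refine ⟨⟨x, hx⟩, fun a ha b hb => ?_⟩
  obtain ⟨w⟩ := hp ⟨a, ha⟩ ⟨b, hb⟩
  have : ∀ (a b : S) (w : (G.induce S).Walk a b), In G S a b := by
    intro a b w
    induction w with
    | nil => exact .refl (Subtype.prop _)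
    | cons h _ ih => exact .cons (Subtype.prop _) (by simpa using h) ih
  exact this _ _ w

/-- Six branch sets forming a `K₃,₃` minor contradict planarity. -/
theorem no_K33 (hG : IsPlanar G) (A B : Fin 3 → Set V) (hA : ∀ i, Conn G (A i))
    (hB : ∀ i, Conn G (B i)) (hAA : ∀ i j, i < j → ∀ z ∈ A i, z ∉ A j)
    (hBB : ∀ i j, i < j → ∀ z ∈ B i, z ∉ B j) (hAB : ∀ i j, ∀ z ∈ A i, z ∉ B j)
    (hadj : ∀ i j, ∃ a ∈ A i, ∃ b ∈ B j, G.Adj a b) : False := by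
  refine hG.2 ⟨Sum.elim A B, ?_, ?_, ?_, ?_⟩
  · rintro (i | i)
    exacts [(hA i).1, (hB i).1]
  · rintro (i | i)
    exacts [(hA i).connected, (hB i).connected]
  · rintro (i | i) (j | j) hij
    · rw [Set.disjoint_left]
      rcases lt_trichotomy i j with h | h | h
      · exact fun z => hAA i j h z
      · exact absurd (by rw [h]) hij
      · exact fun z hz hz' => hAA j i h z hz' hz
    · exact Set.disjoint_left.2 (hAB i j)
    · exact (Set.disjoint_left.2 (hAB j i)).symm
    · rw [Set.disjoint_left]
      rcases lt_trichotomy i j with h | h | h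
      · exact fun z => hBB i j h z
      · exact absurd (by rw [h]) hij
      · exact fun z hz hz' => hBB j i h z hz' hz
  · rintro (i | i) (j | j) hij
    · simp at hij
    · exact hadj i j
    · obtain ⟨a, ha, b, hb, h⟩ := hadj j i
      exact ⟨b, hb, a, ha, h.symm⟩
    · simp at hij

/-- Five branch sets forming a `K₅` minor contradict planarity. -/
theorem no_K5 (hG : IsPlanar G) (A : Fin 5 → Set V) (hA : ∀ i, Conn G (A i))
    (hAA : ∀ i j, i < j → ∀ z ∈ A i, z ∉ A j)
    (hadj : ∀ i j, i < j → ∃ a ∈ A i, ∃ b ∈ A j, G.Adj a b) : False := by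
  refine hG.1 ⟨A, fun i => (hA i).1, fun i => (hA i).connected, ?_, ?_⟩
  · intro i j hij
    rw [Set.disjoint_left]
    rcases lt_or_gt_of_ne hij with h | h
    · exact fun z => hAA i j h z
    · exact fun z hz hz' => hAA j i h z hz' hz
  · intro i j hij
    rcases lt_or_gt_of_ne (show i ≠ j by simpa using hij) with h | h
    · exact hadj i j h
    · obtain ⟨a, ha, b, hb, h⟩ := hadj j i h
      exact ⟨b, hb, a, ha, h.symm⟩

/-- `Pth G u w S E`: there is a path of `G` from `u` to `w` with vertex set `S` and
edge set `E`. -/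
inductive Pth (G : SimpleGraph V) : V → V → Finset V → Finset (Sym2 V) → Prop
  | nil (u : V) : Pth G u u {u} ∅
  | cons {u v w : V} {S : Finset V} {E : Finset (Sym2 V)} (h : G.Adj u v) (p : Pth G v w S E)
      (hu : u ∉ S) : Pth G u w (insert u S) (insert s(u, v) E)

namespace Pth

variable {u v w x y z : V} {S T : Finset V} {E F : Finset (Sym2 V)}

theorem left (p : Pth G u w S E) : u ∈ S := by
  cases p <;> simp

theorem right (p : Pth G u w S E) : w ∈ S := by
  induction p with
  | nil => simp
  | cons _ _ _ ih => simp [ih]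

theorem edge (p : Pth G u w S E) (h : s(x, y) ∈ E) : G.Adj x y ∧ x ∈ S ∧ y ∈ S := by
  induction p with
  | nil => simp at h
  | cons hadj p hu ih =>
    rw [Finset.mem_insert] at h
    rcases h with h | h
    · have := p.left
      rw [Sym2.eq_iff] at h
      rcases h with ⟨rfl, rfl⟩ | ⟨rfl, rfl⟩ <;> simp [hadj, hadj.symm, this]
    · have := ih h
      simp [this]

theorem sub (p : Pth G u w S E) {e : Sym2 V} (h : e ∈ E) : e ∈ G.edgeSet := by
  induction e with
  | _ x y => exact (p.edge h).1

theorem single (h : G.Adj u w) : Pth G u w {u, w} {s(u, w)} := by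
  have := Pth.cons h (.nil w) (by simpa using h.ne)
  simpa using this

theorem append (p : Pth G u v S E) (q : Pth G v w T F) (h : ∀ z, z ∈ S → z ∈ T → z = v) :
    Pth G u w (S ∪ T) (E ∪ F) := by
  induction p with
  | nil u =>
    have : {u} ∪ T = T := by simpa using q.left
    rw [this]; simpa using q
  | @cons u v' w S E hadj p hu ih =>
    have h1 := ih q (fun z hz hz' => h z (by simp [hz]) hz')
    rw [Finset.insert_union, Finset.insert_union]
    refine .cons hadj h1 ?_
    rw [Finset.mem_union]
    rintro (h2 | h2)
    · exact hu h2
    · have := h u (by simp) h2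
      subst this
      exact hu p.right

theorem symm (p : Pth G u w S E) : Pth G w u S E := by
  induction p with
  | nil u => exact .nil u
  | @cons u v w S E hadj p hu ih =>
    have := ih.append (single hadj.symm) (by
      intro z hz hz'
      simp only [Finset.mem_insert, Finset.mem_singleton] at hz'
      rcases hz' with rfl | rfl
      · rfl
      · exact absurd hz hu)
    convert this using 1
    · ext z
      have := p.left
      simp only [Finset.mem_insert, Finset.mem_union, Finset.mem_singleton]
      grind
    · rw [Sym2.eq_swap]; ext; simp [or_comm]

/-- Splitting a path at one of its vertices. -/
theorem split (p : Pth G u w S E) (hz : z ∈ S) : ∃ S₁ S₂ E₁ E₂, Pth G u z S₁ E₁ ∧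
    Pth G z w S₂ E₂ ∧ S = S₁ ∪ S₂ ∧ E = E₁ ∪ E₂ ∧ (∀ t, t ∈ S₁ → t ∈ S₂ → t = z) ∧
    (∀ e, e ∈ E₁ → e ∉ E₂) := by
  induction p with
  | nil u =>
    simp only [Finset.mem_singleton] at hz
    subst hz
    exact ⟨_, _, _, _, .nil z, .nil z, by simp, by simp, by simp, by simp⟩
  | @cons u v w S E hadj p hu ih =>
    by_cases h : z = u
    · subst h
      exact ⟨_, _, _, _, .nil z, .cons hadj p hu, by simp, by simp, by simp, by simp⟩
    · obtain ⟨S₁, S₂, E₁, E₂, p1, p2, rfl, rfl, h1, h2⟩ := ih (by simpa [h] using hz)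
      have hu' : u ∉ S₁ ∧ u ∉ S₂ := by simpa using hu
      refine ⟨_, _, _, _, .cons hadj p1 hu'.1, p2, by simp, by simp, ?_, ?_⟩
      · grind
      · intro e he he'
        rw [Finset.mem_insert] at he
        rcases he with rfl | he
        · exact hu'.2 (p2.edge he').2.1
        · exact h2 e he he'

theorem inS (p : Pth G u w S E) : In G S u w := by
  induction p with
  | nil u => exact .refl (by simp)
  | cons hadj p hu ih => exact .cons (by simp) hadj (ih.mono (by simp +contextual))

theorem eq_of_self (p : Pth G u u S E) : S = {u} ∧ E = ∅ := by
  cases p with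
  | nil => simp
  | cons h p hu => exact absurd p.right hu

theorem card (p : Pth G u w S E) : E.card + 1 = S.card := by
  induction p with
  | nil => simp
  | @cons u v w S E hadj p hu ih =>
    rw [Finset.card_insert_of_notMem hu, Finset.card_insert_of_notMem, ih]
    exact fun h => hu (p.edge h).2.1

theorem cover (p : Pth G u w S E) (h : u ≠ w) (hz : z ∈ S) : ∃ t, s(z, t) ∈ E := by
  induction p with
  | nil => simp at h
  | @cons u v w S E hadj p hu ih =>
    rw [Finset.mem_insert] at hz
    by_cases hzu : z = u
    · exact ⟨v, by simp [hzu]⟩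
    · have hz' : z ∈ S := by grind
      by_cases hvw : v = w
      · subst hvw
        have := p.eq_of_self.1
        have : z = v := by simpa [this] using hz'
        exact ⟨u, by simp [this, Sym2.eq_swap]⟩
      · obtain ⟨t, ht⟩ := ih hvw hz'
        exact ⟨t, by simp [ht]⟩

/-- A path containing the edge joining its ends consists of that edge. -/
theorem eq_single (p : Pth G u w S E) (h : s(u, w) ∈ E) : S = {u, w} ∧ E = {s(u, w)} := by
  cases p with
  | nil => simp at h
  | @cons _ v _ S E hadj p hu =>
    rw [Finset.mem_insert] at h
    rcases h with h | h
    · have : v = w := by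
        rw [Sym2.eq_iff] at h
        rcases h with h | h
        · exact h.2.symm
        · rw [h.2, h.1]
      subst this
      obtain ⟨rfl, rfl⟩ := p.eq_of_self
      simp
    · exact absurd (p.edge h).2.1 hu

/-- The interior of a path is connected, and the ends have neighbours in it. -/
theorem inner_aux (p : Pth G u w S E) (hz : z ∈ S) (hzu : z ≠ u) (hzw : z ≠ w) :
    Conn G {t | t ∈ S ∧ t ≠ u ∧ t ≠ w} ∧ ∃ t, t ∈ S ∧ t ≠ u ∧ t ≠ w ∧ s(u, t) ∈ E := by
  cases p with
  | nil => simp at hz; exact absurd hz hzu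
  | @cons _ v _ S E hadj p hu =>
    have hvw : v ≠ w := by
      rintro rfl
      have := p.eq_of_self.1
      simp [this] at hz
      tauto
    have hv := p.left
    refine ⟨Conn.of_root (r := v) ⟨by simp [hv], hadj.ne', hvw⟩ ?_, v, by simp [hv], hadj.ne', hvw,
      by simp⟩
    rintro a ⟨ha, hau, haw⟩
    have ha' : a ∈ S := by grind
    obtain ⟨S₁, S₂, E₁, E₂, p1, p2, rfl, rfl, h1, h2⟩ := p.split ha'
    have hw : w ∉ S₁ := fun hw => haw (h1 w hw p2.right).symm
    refine p1.inS.symm.mono ?_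
    intro t ht
    have ht' : t ∈ S₁ := ht
    refine ⟨by simp [ht'], ?_, ?_⟩
    · rintro rfl; simp [ht'] at hu
    · rintro rfl; exact hw ht'

theorem inner_conn (p : Pth G u w S E) (hz : z ∈ S) (hzu : z ≠ u) (hzw : z ≠ w) :
    Conn G {t | t ∈ S ∧ t ≠ u ∧ t ≠ w} := (p.inner_aux hz hzu hzw).1

theorem inner_left (p : Pth G u w S E) (hz : z ∈ S) (hzu : z ≠ u) (hzw : z ≠ w) :
    ∃ t, t ∈ S ∧ t ≠ u ∧ t ≠ w ∧ G.Adj u t := by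
  obtain ⟨-, t, h1, h2, h3, h4⟩ := p.inner_aux hz hzu hzw
  exact ⟨t, h1, h2, h3, p.sub h4⟩

theorem inner_right (p : Pth G u w S E) (hz : z ∈ S) (hzu : z ≠ u) (hzw : z ≠ w) :
    ∃ t, t ∈ S ∧ t ≠ u ∧ t ≠ w ∧ G.Adj w t := by
  obtain ⟨t, h1, h2, h3, h4⟩ := p.symm.inner_left hz hzw hzu
  exact ⟨t, h1, h3, h2, h4⟩

theorem eq_single_of_inner (p : Pth G u w S E) (h : u ≠ w) (hz : ∀ z ∈ S, z = u ∨ z = w) :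
    s(u, w) ∈ E := by
  cases p with
  | nil => exact absurd rfl h
  | @cons _ v _ S E hadj p hu =>
    rcases hz v (by simp [p.left]) with h | h
    · exact absurd h hadj.ne'
    · simp [h]

theorem deg_left (p : Pth G u w S E) (h : u ≠ w) : ∃ y ∈ S, y ≠ u ∧ ∀ t, s(u, t) ∈ E ↔ t = y := by
  cases p with
  | nil => exact absurd rfl h
  | @cons _ v _ S E hadj p hu =>
    refine ⟨v, by simp [p.left], hadj.ne', fun t => ?_⟩
    rw [Finset.mem_insert]
    constructor
    · rintro (h | h)
      · exact Sym2.congr_right.1 h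
      · exact absurd (p.edge h).2.1 hu
    · rintro rfl; simp

theorem deg_inner (p : Pth G u w S E) (hz : z ∈ S) (hzu : z ≠ u) (hzw : z ≠ w) :
    ∃ y y', y ≠ y' ∧ ∀ t, s(z, t) ∈ E ↔ t = y ∨ t = y' := by
  obtain ⟨S₁, S₂, E₁, E₂, p1, p2, rfl, rfl, h1, h2⟩ := p.split hz
  obtain ⟨y, hy, hyz, h3⟩ := p1.symm.deg_left hzu
  obtain ⟨y', hy', hyz', h4⟩ := p2.deg_left hzw
  refine ⟨y, y', ?_, fun t => by rw [Finset.mem_union, h3, h4]⟩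
  rintro rfl
  exact hyz (h1 y hy hy')

/-- Paths transfer to any graph containing their edges. -/
theorem transfer {H : SimpleGraph V} (p : Pth G u w S E) (h : ∀ e ∈ E, e ∈ H.edgeSet) :
    Pth H u w S E := by
  induction p with
  | nil => exact .nil _
  | cons hadj p hu ih =>
    exact .cons (h s(_, _) (Finset.mem_insert_self _ _)) (ih fun e he => h e (by simp [he])) hu

end Pth

/-- A walk inside `S` contains a path. -/
theorem In.path {S : Set V} {a b : V} (h : In G S a b) :
    ∃ P E, Pth G a b P E ∧ ∀ z ∈ P, z ∈ S := by
  induction h with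
  | refl ha => exact ⟨_, _, .nil _, by simpa using ha⟩
  | @cons a b c ha hab h ih =>
    obtain ⟨P, E, p, hP⟩ := ih
    by_cases haP : a ∈ P
    · obtain ⟨S₁, S₂, E₁, E₂, p1, p2, rfl, rfl, h1, h2⟩ := p.split haP
      exact ⟨_, _, p2, fun z hz => hP z (by simp [hz])⟩
    · exact ⟨_, _, .cons hab p haP, by simpa [ha] using hP⟩

/-- A walk inside `S` from `Y` to `Z` contains a path from `Y` to `Z` with interior outside
`Y ∪ Z`. -/
theorem In.link {S Y Z : Set V} {a b : V} (h : In G S a b) (ha : a ∈ Y) (hb : b ∈ Z) :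
    ∃ y ∈ Y, ∃ z ∈ Z, ∃ P E, Pth G y z P E ∧ (∀ t ∈ P, t ∈ S) ∧
      ∀ t ∈ P, t ≠ y → t ≠ z → t ∉ Y ∧ t ∉ Z := by
  have hex : ∃ n, ∃ y ∈ Y, ∃ z ∈ Z, ∃ P E, Pth G y z P E ∧ (∀ t ∈ P, t ∈ S) ∧ P.card = n := by
    obtain ⟨P, E, p, hP⟩ := h.path
    exact ⟨_, a, ha, b, hb, P, E, p, hP, rfl⟩
  obtain ⟨y, hy, z, hz, P, E, p, hP, hn⟩ := Nat.find_spec hex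
  have hmin := fun m hm => Nat.find_min (H := hex) (m := m) hm
  rw [← hn] at hmin
  refine ⟨y, hy, z, hz, P, E, p, hP, fun t ht hty htz => ?_⟩
  obtain ⟨S₁, S₂, E₁, E₂, p1, p2, rfl, rfl, h1, h2⟩ := p.split ht
  have hzS : z ∉ S₁ := fun h => htz (h1 z h p2.right).symm
  have hyS : y ∉ S₂ := fun h => hty (h1 y p1.left h).symm
  constructor
  · intro htY
    refine hmin S₂.card (Finset.card_lt_card ?_) ⟨t, htY, z, hz, S₂, E₂, p2,
      fun s hs => hP s (by simp [hs]), rfl⟩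
    refine ⟨Finset.subset_union_right, fun h => hyS (h (by simp [p1.left]))⟩
  · intro htZ
    refine hmin S₁.card (Finset.card_lt_card ?_) ⟨y, hy, t, htZ, S₁, E₁, p1,
      fun s hs => hP s (by simp [hs]), rfl⟩
    refine ⟨Finset.subset_union_left, fun h => hzS (h (by simp [p2.right]))⟩

end CDC

/-! ### Cycles as edge sets -/

namespace CDC

set_option linter.unusedSectionVars false

variable {V : Type*} {G : SimpleGraph V}

/-- `Arcs G C u w P Q EP EQ`: the edge set `C` is a cycle of `G`, split by the distinct vertices
`u` and `w` into two arcs with vertex sets `P`, `Q` and edge sets `EP`, `EQ`. -/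
structure Arcs (G : SimpleGraph V) (C : Finset (Sym2 V)) (u w : V) (P Q : Finset V)
    (EP EQ : Finset (Sym2 V)) : Prop where
  ne : u ≠ w
  hp : Pth G u w P EP
  hq : Pth G u w Q EQ
  cap : ∀ z, z ∈ P → z ∈ Q → z = u ∨ z = w
  dj : ∀ e, e ∈ EP → e ∉ EQ
  un : C = EP ∪ EQ

/-- The edge set `C` is a cycle of `G`. -/
def IsCyc (G : SimpleGraph V) (C : Finset (Sym2 V)) : Prop :=
  ∃ u w P Q EP EQ, Arcs G C u w P Q EP EQ

variable [Fintype V]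

/-- The vertices covered by an edge set. -/
noncomputable def vs (C : Finset (Sym2 V)) : Finset V :=
  Finset.univ.filter fun v => ∃ t, s(v, t) ∈ C

theorem mem_vs {C : Finset (Sym2 V)} {v : V} : v ∈ vs C ↔ ∃ t, s(v, t) ∈ C := by
  simp [vs]

theorem mem_vs_left {C : Finset (Sym2 V)} {v t : V} (h : s(v, t) ∈ C) : v ∈ vs C :=
  mem_vs.2 ⟨t, h⟩

theorem mem_vs_right {C : Finset (Sym2 V)} {v t : V} (h : s(v, t) ∈ C) : t ∈ vs C :=
  mem_vs.2 ⟨v, by rwa [Sym2.eq_swap]⟩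

theorem Pth.vs_eq {u w : V} {P : Finset V} {E : Finset (Sym2 V)} (p : Pth G u w P E)
    (h : u ≠ w) : vs E = P := by
  ext z
  rw [mem_vs]
  exact ⟨fun ⟨t, ht⟩ => (p.edge ht).2.1, fun hz => p.cover h hz⟩

theorem vs_union (C D : Finset (Sym2 V)) : vs (C ∪ D) = vs C ∪ vs D := by
  ext z
  simp [mem_vs, exists_or]

namespace Arcs

variable {C : Finset (Sym2 V)} {u w : V} {P Q : Finset V} {EP EQ : Finset (Sym2 V)}

theorem isCyc (h : Arcs G C u w P Q EP EQ) : IsCyc G C := ⟨_, _, _, _, _, _, h⟩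

theorem vs_eq (h : Arcs G C u w P Q EP EQ) : vs C = P ∪ Q := by
  rw [h.un, vs_union, h.hp.vs_eq h.ne, h.hq.vs_eq h.ne]

theorem swap (h : Arcs G C u w P Q EP EQ) : Arcs G C u w Q P EQ EP :=
  ⟨h.ne, h.hq, h.hp, fun z a b => h.cap z b a, fun e a b => h.dj e b a, by
    rw [h.un, Finset.union_comm]⟩

theorem symm (h : Arcs G C u w P Q EP EQ) : Arcs G C w u P Q EP EQ :=
  ⟨h.ne.symm, h.hp.symm, h.hq.symm, fun z a b => (h.cap z a b).symm, h.dj, h.un⟩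

/-- Moving an end of the arcs to an interior vertex of one of them. -/
theorem split (h : Arcs G C u w P Q EP EQ) {n : V} (hn : n ∈ P) (hnu : n ≠ u) (hnw : n ≠ w) :
    ∃ P₁ P₂ E₁ E₂, P = P₁ ∪ P₂ ∧ Arcs G C u n P₁ (Q ∪ P₂) E₁ (EQ ∪ E₂) ∧
      Arcs G C n w P₂ (Q ∪ P₁) E₂ (EQ ∪ E₁) ∧ u ∉ P₂ ∧ w ∉ P₁ := by
  obtain ⟨P₁, P₂, E₁, E₂, p1, p2, rfl, rfl, h1, h2⟩ := h.hp.split hn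
  have hu2 : u ∉ P₂ := fun hu => hnu (h1 u p1.left hu).symm
  have hw1 : w ∉ P₁ := fun hw => hnw (h1 w hw p2.right).symm
  have cap := h.cap
  have dj := h.dj
  have un := h.un
  refine ⟨P₁, P₂, E₁, E₂, rfl, ⟨hnu.symm, p1, ?_, ?_, ?_, ?_⟩, ⟨hnw, p2, ?_, ?_, ?_, ?_⟩, hu2, hw1⟩
  · exact h.hq.append p2.symm (by grind)
  · grind
  · grind
  · rw [un]; grind
  · have := (p1.symm.append h.hq (by grind))
    rwa [Finset.union_comm, Finset.union_comm E₁] at this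
  · grind
  · grind
  · rw [un]; grind

/-- Replacing one arc of a cycle by a path which meets the other arc only in its ends. -/
theorem close (h : Arcs G C u w P Q EP EQ) {J : Finset V} {EJ : Finset (Sym2 V)}
    (j : Pth G u w J EJ) (h1 : ∀ z ∈ J, z ∈ P → z = u ∨ z = w) (h2 : ∀ e ∈ EJ, e ∉ EP) :
    Arcs G (EP ∪ EJ) u w P J EP EJ :=
  ⟨h.ne, h.hp, j, fun z a b => h1 z b a, fun e a b => h2 e b a, rfl⟩

theorem exists_left (h : Arcs G C u w P Q EP EQ) {x : V} (hx : x ∈ vs C) :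
    ∃ w' P' Q' EP' EQ', Arcs G C x w' P' Q' EP' EQ' := by
  by_cases hxu : x = u
  · subst hxu; exact ⟨_, _, _, _, _, h⟩
  by_cases hxw : x = w
  · subst hxw; exact ⟨_, _, _, _, _, h.symm⟩
  rw [h.vs_eq, Finset.mem_union] at hx
  rcases hx with hx | hx
  · obtain ⟨P₁, P₂, E₁, E₂, -, h1, -⟩ := h.split hx hxu hxw
    exact ⟨_, _, _, _, _, h1.symm⟩
  · obtain ⟨P₁, P₂, E₁, E₂, -, h1, -⟩ := h.swap.split hx hxu hxw
    exact ⟨_, _, _, _, _, h1.symm⟩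

theorem exists_right (h : Arcs G C u w P Q EP EQ) {x : V} (hx : x ∈ vs C) (hxu : x ≠ u) :
    ∃ P' Q' EP' EQ', Arcs G C u x P' Q' EP' EQ' := by
  by_cases hxw : x = w
  · subst hxw; exact ⟨_, _, _, _, h⟩
  rw [h.vs_eq, Finset.mem_union] at hx
  rcases hx with hx | hx
  · obtain ⟨P₁, P₂, E₁, E₂, -, h1, -⟩ := h.split hx hxu hxw
    exact ⟨_, _, _, _, h1⟩
  · obtain ⟨P₁, P₂, E₁, E₂, -, h1, -⟩ := h.swap.split hx hxu hxw
    exact ⟨_, _, _, _, h1⟩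

/-- Exchanging crossing pairs: interior vertices `a`, `t` of the two arcs between `u` and `w`
split the cycle into arcs through `u` and through `w`. -/
theorem cross (h : Arcs G C u w P Q EP EQ) {a t : V} (ha : a ∈ P) (hau : a ≠ u) (haw : a ≠ w)
    (ht : t ∈ Q) (htu : t ≠ u) (htw : t ≠ w) :
    ∃ P' Q' EP' EQ', Arcs G C a t P' Q' EP' EQ' ∧ u ∈ P' ∧ w ∈ Q' := by
  obtain ⟨P₁, P₂, E₁, E₂, p1, p2, rfl, rfl, hc, hd⟩ := h.hp.split ha
  obtain ⟨Q₁, Q₂, F₁, F₂, q1, q2, rfl, rfl, hc', hd'⟩ := h.hq.split ht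
  have cap := h.cap
  have dj := h.dj
  have un := h.un
  have hu2 : u ∉ P₂ := fun hu => hau (hc u p1.left hu).symm
  have hw1 : w ∉ P₁ := fun hw => haw (hc w hw p2.right).symm
  have hu2' : u ∉ Q₂ := fun hu => htu (hc' u q1.left hu).symm
  have hw1' : w ∉ Q₁ := fun hw => htw (hc' w hw q2.right).symm
  simp only [Finset.mem_union] at cap dj
  have a1 := p1.symm.append q1 (by grind)
  have a2 := p2.append q2.symm (by grind)
  refine ⟨_, _, _, _, ⟨?_, a1, a2, ?_, ?_, ?_⟩, by simp [p1.left], by simp [p2.right]⟩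
  · rintro rfl
    rw [Finset.mem_union] at ha ht
    rcases cap a ha ht with h | h <;> contradiction
  · grind
  · grind
  · rw [un]; grind

/-- Among all arcs of the cycle through `c` with ends in `N`, a shortest one meets `N` only in
its ends. -/
theorem minimal (h : Arcs G C u w P Q EP EQ) {N : Set V} (hu : u ∈ N) (hw : w ∈ N) {c : V}
    (hc : c ∈ P) : ∃ k k' P' Q' EP' EQ', k ∈ N ∧ k' ∈ N ∧ Arcs G C k k' P' Q' EP' EQ' ∧ c ∈ P' ∧
      ∀ z ∈ P', z ∈ N → z = k ∨ z = k' := by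
  induction hm : P.card using Nat.strong_induction_on generalizing u w P Q EP EQ with
  | _ m ih =>
    by_cases hN : ∀ z ∈ P, z ∈ N → z = u ∨ z = w
    · exact ⟨_, _, _, _, _, _, hu, hw, h, hc, hN⟩
    · push Not at hN
      obtain ⟨z, hz, hzN, hzu, hzw⟩ := hN
      obtain ⟨P₁, P₂, E₁, E₂, rfl, h1, h2, hu2, hw1⟩ := h.split hz hzu hzw
      rw [Finset.mem_union] at hc
      rcases hc with hc | hc
      · refine ih P₁.card ?_ h1 hu hzN hc rfl
        rw [← hm]
        exact Finset.card_lt_card ⟨Finset.subset_union_left,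
          fun h => hw1 (h (by simp [h2.hp.right]))⟩
      · refine ih P₂.card ?_ h2 hzN hw hc rfl
        rw [← hm]
        exact Finset.card_lt_card ⟨Finset.subset_union_right,
          fun h => hu2 (h (by simp [h1.hp.left]))⟩

end Arcs

theorem Pth.eq_of_subset {u w : V} {P Q : Finset V} {E F : Finset (Sym2 V)} (p : Pth G u w P E)
    (q : Pth G u w Q F) (h : E ⊆ F) : E = F := by
  induction p generalizing Q F with
  | nil => rw [q.eq_of_self.2]
  | @cons u v w S E hadj p hu ih =>
    have hs : s(u, v) ∈ F := h (by simp)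
    cases q with
    | nil => simp at hs
    | @cons _ v' _ T F hadj' q hu' =>
      have hv : v' = v := by
        rw [Finset.mem_insert] at hs
        rcases hs with hs | hs
        · exact (Sym2.congr_right.1 hs).symm
        · exact absurd (q.edge hs).2.1 hu'
      subst hv
      rw [ih q]
      intro e he
      have := h (Finset.mem_insert_of_mem he)
      rw [Finset.mem_insert] at this
      rcases this with rfl | this
      · exact absurd (p.edge he).2.1 hu
      · exact this

namespace IsCyc

variable {C D : Finset (Sym2 V)} {u w a b x : V}

theorem sub (h : IsCyc G C) {e : Sym2 V} (he : e ∈ C) : e ∈ G.edgeSet := by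
  obtain ⟨u, w, P, Q, EP, EQ, h⟩ := h
  rw [h.un, Finset.mem_union] at he
  exact he.elim h.hp.sub h.hq.sub

theorem adj (h : IsCyc G C) (he : s(a, b) ∈ C) : G.Adj a b := h.sub he

theorem transfer {H : SimpleGraph V} (h : IsCyc G C) (hC : ∀ e ∈ C, e ∈ H.edgeSet) :
    IsCyc H C := by
  obtain ⟨u, w, P, Q, EP, EQ, h⟩ := h
  have un := h.un
  exact ⟨u, w, P, Q, EP, EQ, h.ne, h.hp.transfer (fun e he => hC e (by simp [un, he])),
    h.hq.transfer (fun e he => hC e (by simp [un, he])), h.cap, h.dj, un⟩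

theorem arcs (h : IsCyc G C) (hu : u ∈ vs C) (hw : w ∈ vs C) (huw : u ≠ w) :
    ∃ P Q EP EQ, Arcs G C u w P Q EP EQ := by
  obtain ⟨u', w', P, Q, EP, EQ, h⟩ := h
  obtain ⟨w'', _, _, _, _, h⟩ := h.exists_left hu
  exact h.exists_right hw huw.symm

theorem deg (h : IsCyc G C) (hx : x ∈ vs C) :
    ∃ y z, y ≠ z ∧ ∀ t, s(x, t) ∈ C ↔ t = y ∨ t = z := by
  obtain ⟨u', w', P, Q, EP, EQ, h⟩ := h
  obtain ⟨w'', _, _, _, _, h⟩ := h.exists_left hx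
  obtain ⟨y, -, -, hy⟩ := h.hp.deg_left h.ne
  obtain ⟨z, -, -, hz⟩ := h.hq.deg_left h.ne
  refine ⟨y, z, ?_, fun t => by rw [h.un, Finset.mem_union, hy, hz]⟩
  rintro rfl
  exact h.dj _ ((hy y).2 rfl) ((hz y).2 rfl)

/-- A cycle is an edge together with a path joining its ends. -/
theorem edge (h : IsCyc G C) (he : s(a, b) ∈ C) :
    ∃ EQ, Pth G a b (vs C) EQ ∧ s(a, b) ∉ EQ ∧ C = insert s(a, b) EQ := by
  have hab := (h.adj he).ne
  obtain ⟨P, Q, EP, EQ, h⟩ := h.arcs (mem_vs_left he) (mem_vs_right he) hab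
  have key : ∀ {P Q EP EQ}, Arcs G C a b P Q EP EQ → s(a, b) ∈ EP →
      ∃ EQ, Pth G a b (vs C) EQ ∧ s(a, b) ∉ EQ ∧ C = insert s(a, b) EQ := by
    intro P Q EP EQ h hab
    obtain ⟨hP, hEP⟩ := h.hp.eq_single hab
    have hv : vs C = Q := by
      rw [h.vs_eq, hP]
      have := h.hq.left
      have := h.hq.right
      grind
    refine ⟨EQ, hv ▸ h.hq, h.dj _ hab, ?_⟩
    rw [h.un, hEP]; rfl
  rw [h.un, Finset.mem_union] at he
  rcases he with he | he
  · exact key h he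
  · exact key h.swap he

theorem of_edge {P : Finset V} {E : Finset (Sym2 V)} (hab : G.Adj a b) (p : Pth G a b P E)
    (h : s(a, b) ∉ E) : IsCyc G (insert s(a, b) E) :=
  ⟨a, b, _, _, _, _, hab.ne, .single hab, p, by simp +contextual, by simpa using h, by rfl⟩

theorem nonempty (h : IsCyc G C) : ∃ a b, s(a, b) ∈ C := by
  obtain ⟨u, w, P, Q, EP, EQ, h⟩ := h
  obtain ⟨t, ht⟩ := h.hp.cover h.ne h.hp.left
  exact ⟨u, t, by rw [h.un]; simp [ht]⟩

theorem card (h : IsCyc G C) : C.card = (vs C).card := by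
  obtain ⟨a, b, hab⟩ := h.nonempty
  obtain ⟨E, p, h1, h2⟩ := h.edge hab
  have h3 := p.card
  rw [← h3]
  rw [h2]
  exact Finset.card_insert_of_notMem h1

theorem third (h : IsCyc G C) (he : s(a, b) ∈ C) : ∃ c ∈ vs C, c ≠ a ∧ c ≠ b := by
  have hab := (h.adj he).ne
  obtain ⟨E, p, h1, h2⟩ := h.edge he
  by_contra! hcon
  exact h1 (p.eq_single_of_inner hab fun z hz => by
    by_contra! h3; exact h3.2 (hcon z hz h3.1))

theorem eq_of_subset (hC : IsCyc G C) (hD : IsCyc G D) (h : C ⊆ D) : C = D := by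
  obtain ⟨a, b, hab⟩ := hC.nonempty
  obtain ⟨E, p, h1, rfl⟩ := hC.edge hab
  obtain ⟨F, q, h1', rfl⟩ := hD.edge (h hab)
  rw [p.eq_of_subset q]
  intro e he
  have := h (Finset.mem_insert_of_mem he)
  rw [Finset.mem_insert] at this
  rcases this with rfl | this
  · exact absurd he h1
  · exact this

/-- Replacing the edge `ab` of a cycle by a path `a, p, b` through a new vertex `p`. -/
theorem detour {p : V} (hC : IsCyc G C) (he : s(a, b) ∈ C) (hp : p ∉ vs C) (hap : G.Adj a p)
    (hpb : G.Adj p b) : IsCyc G (insert s(a, p) (insert s(p, b) (C.erase s(a, b)))) := by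
  have hab := (hC.adj he).ne
  obtain ⟨E, q, h1, h2⟩ := hC.edge he
  have hE : C.erase s(a, b) = E := by rw [h2]; simp [h1]
  rw [hE]
  have q1 := Pth.cons hpb (.nil b) (by simpa using hpb.ne)
  have q2 := Pth.cons hap q1 (by simp [hap.ne, hab])
  refine ⟨a, b, _, _, _, _, hab, q2, q, ?_, ?_, by ext; simp⟩
  · simp only [Finset.mem_insert, Finset.mem_singleton]
    rintro z (rfl | rfl | rfl) hz
    · simp
    · contradiction
    · simp
  · simp only [Finset.mem_insert, Finset.notMem_empty, or_false]
    rintro e (rfl | rfl) hz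
    · exact hp (q.edge hz).2.2
    · exact hp (q.edge hz).2.1

/-- Two cycles through an edge `xy` which otherwise have no common vertex merge into one. -/
theorem merge {x y : V} (hC : IsCyc G C) (hD : IsCyc G D) (h1 : s(x, y) ∈ C) (h2 : s(x, y) ∈ D)
    (h : ∀ z ∈ vs C, z ∈ vs D → z = x ∨ z = y) :
    IsCyc G ((C.erase s(x, y)) ∪ (D.erase s(x, y))) := by
  obtain ⟨E, p, h3, h4⟩ := hC.edge h1
  obtain ⟨F, q, h5, h6⟩ := hD.edge h2
  have hE : C.erase s(x, y) = E := by rw [h4]; simp [h3]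
  have hF : D.erase s(x, y) = F := by rw [h6]; simp [h5]
  rw [hE, hF]
  refine ⟨x, y, _, _, _, _, (hC.adj h1).ne, p, q, h, ?_, rfl⟩
  intro e he he'
  induction e with
  | _ a b =>
    have ha := h a (p.edge he).2.1 (q.edge he').2.1
    have hb := h b (p.edge he).2.2 (q.edge he').2.2
    have hab := (p.edge he).1.ne
    have : s(a, b) = s(x, y) := by
      rw [Sym2.eq_iff]; grind
    rw [this] at he
    exact h3 he

end IsCyc

end CDC

/-! ### Peripheral cycles generate the cycle space -/

namespace CDC

set_option linter.unusedSectionVars false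

variable {V : Type*} {G : SimpleGraph V} [Fintype V]

/-- The vertices of `G` that are not isolated. -/
noncomputable def U (G : SimpleGraph V) : Finset V :=
  Finset.univ.filter fun v => ∃ t, G.Adj v t

theorem mem_U {v : V} : v ∈ U G ↔ ∃ t, G.Adj v t := by simp [U]

theorem IsCyc.vs_sub {C : Finset (Sym2 V)} (h : IsCyc G C) {v : V} (hv : v ∈ vs C) : v ∈ U G := by
  obtain ⟨t, ht⟩ := mem_vs.1 hv
  exact mem_U.2 ⟨t, h.adj ht⟩

/-- Apart from isolated vertices, `G` is 3-connected. -/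
structure TC (G : SimpleGraph V) : Prop where
  four : 4 ≤ (U G).card
  conn : ∀ x y a b, a ∈ U G → b ∈ U G → a ≠ x → a ≠ y → b ≠ x → b ≠ y →
    In G {z | z ≠ x ∧ z ≠ y} a b

theorem TC.exists_ne (h : TC G) (x y z : V) : ∃ t ∈ U G, t ≠ x ∧ t ≠ y ∧ t ≠ z := by
  by_contra! hcon
  have : U G ⊆ {x, y, z} := by
    intro t ht
    have := hcon t ht
    simp only [Finset.mem_insert, Finset.mem_singleton]
    tauto
  have h1 := Finset.card_le_card this
  have h2 := Finset.card_le_three (a := x) (b := y) (c := z)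
  have := h.four
  omega

theorem TC.nbr (h : TC G) {v : V} (hv : v ∈ U G) {y z : V} (hy : v ≠ y) (hz : v ≠ z) :
    ∃ t, G.Adj v t ∧ t ≠ y ∧ t ≠ z := by
  obtain ⟨b, hb, h1, h2, h3⟩ := h.exists_ne v y z
  have := h.conn y z v b hv hb hy hz h2 h3
  cases this with
  | refl => exact absurd rfl h1
  | cons _ hab h => exact ⟨_, hab, h.left⟩

theorem IsCyc.third' {C : Finset (Sym2 V)} (h : IsCyc G C) (y z : V) :
    ∃ c ∈ vs C, c ≠ y ∧ c ≠ z := by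
  obtain ⟨a, b, hab⟩ := h.nonempty
  have := (h.adj hab).ne
  have ha := mem_vs_left hab
  have hb := mem_vs_right hab
  obtain ⟨c, hc, h1, h2⟩ := h.third hab
  grind

/-- The component of `k₀` in the complement of the cycle `C`. -/
def K (G : SimpleGraph V) (C : Finset (Sym2 V)) (k₀ : V) : Set V :=
  {z | In G {z | z ∉ vs C} k₀ z}

/-- The vertices of attachment on `C` of the component of `k₀` in the complement of `C`. -/
def Att (G : SimpleGraph V) (C : Finset (Sym2 V)) (k₀ : V) : Set V :=
  {n | n ∈ vs C ∧ ∃ k ∈ K G C k₀, G.Adj k n}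

theorem K_notMem {C : Finset (Sym2 V)} {k₀ k : V} (h : k ∈ K G C k₀) : k ∉ vs C := In.right h

theorem K_step {C : Finset (Sym2 V)} {k₀ k t : V} (h : k ∈ K G C k₀) (hkt : G.Adj k t)
    (ht : t ∉ vs C) : t ∈ K G C k₀ := In.trans h (.single (In.right h) ht hkt)

/-- By 3-connectivity, a component of the complement of a cycle has at least three attachments. -/
theorem exists_att (hT : TC G) {C : Finset (Sym2 V)} (hC : IsCyc G C) {k₀ y z : V}
    (hk : k₀ ∈ U G) (hkC : k₀ ∉ vs C) (hy : y ∈ vs C) (hz : z ∈ vs C) :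
    ∃ n ∈ Att G C k₀, n ≠ y ∧ n ≠ z := by
  obtain ⟨c, hc, h1, h2⟩ := hC.third' y z
  have := hT.conn y z k₀ c hk (hC.vs_sub hc) (by rintro rfl; contradiction)
    (by rintro rfl; contradiction) h1 h2
  obtain ⟨a', n, h3, h4, h5, h6⟩ := this.firstHit (vs C) hkC hc
  exact ⟨n, ⟨h5, a', h3.mono fun z hz => hz.2, h4⟩, h6⟩

theorem K_mono {C D : Finset (Sym2 V)} {k₀ : V} (h : ∀ k ∈ K G C k₀, k ∉ vs D) :
    K G C k₀ ⊆ K G D k₀ := by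
  intro z hz
  exact (hz.symm.restrict.symm).mono h

theorem K_ssubset {C D : Finset (Sym2 V)} {k₀ n : V} (h : ∀ k ∈ K G C k₀, k ∉ vs D)
    (hn : n ∈ Att G C k₀) (hnD : n ∉ vs D) : K G C k₀ ⊂ K G D k₀ := by
  refine ⟨K_mono h, fun hs => ?_⟩
  obtain ⟨hn, k, hk, hkn⟩ := hn
  exact K_notMem (hs (K_step (K_mono h hk) hkn hnD)) hn

theorem Arcs.no_edge {C : Finset (Sym2 V)} {u w : V} {P Q : Finset V} {EP EQ : Finset (Sym2 V)}
    (h : Arcs G C u w P Q EP EQ) {n n' : V} (hn : n ∈ P) (hnu : n ≠ u) (hnw : n ≠ w)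
    (hn' : n' ∈ Q) (hnu' : n' ≠ u) (hnw' : n' ≠ w) : s(u, w) ∉ C := by
  intro he
  rw [h.un, Finset.mem_union] at he
  rcases he with he | he
  · have := (h.hp.eq_single he).1
    grind
  · have := (h.hq.eq_single he).1
    grind

/-- Edges of a path meeting the cycle `C` only in its ends do not lie on `C`, except possibly
the edge joining the ends. -/
theorem Pth.edge_notMem {C : Finset (Sym2 V)} {u w : V} {J : Finset V} {EJ : Finset (Sym2 V)}
    (j : Pth G u w J EJ) (hJ : ∀ z ∈ J, z ∈ vs C → z = u ∨ z = w) {e : Sym2 V} (he : e ∈ EJ)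
    (heC : e ∈ C) : e = s(u, w) := by
  induction e with
  | _ a b =>
    have ha := hJ a (j.edge he).2.1 (mem_vs_left heC)
    have hb := hJ b (j.edge he).2.2 (mem_vs_right heC)
    have hab := (j.edge he).1.ne
    rw [Sym2.eq_iff]; grind

theorem symmDiff_arcs {EP EQ EJ : Finset (Sym2 V)} (h1 : ∀ e ∈ EP, e ∉ EQ)
    (h2 : ∀ e ∈ EJ, e ∉ EP ∪ EQ) : symmDiff (EP ∪ EJ) (EQ ∪ EJ) = EP ∪ EQ := by
  ext e
  have := h1 e
  have := h2 e
  simp only [Finset.mem_symmDiff, Finset.mem_union] at *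
  tauto

/-- A peripheral cycle: an induced cycle whose removal leaves the graph connected. -/
structure Per (G : SimpleGraph V) (C : Finset (Sym2 V)) : Prop where
  cyc : IsCyc G C
  ind : ∀ u w, u ∈ vs C → w ∈ vs C → G.Adj u w → s(u, w) ∈ C
  con : ∀ a b, a ∈ U G → b ∈ U G → a ∉ vs C → b ∉ vs C → In G {z | z ∉ vs C} a b

section Gen

variable (𝒢 : Finset (Sym2 V) → Prop)

-- `𝒢` is the class of generated edge sets; the hypothesis `hG` below says that it is closed under
-- symmetric difference.

/-- A path `J` joining two vertices of `C` which separate attachments of the component of `k₀`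
writes `C` as a sum of two cycles with a larger component. -/
theorem gen_close (hG : ∀ A B, 𝒢 A → 𝒢 B → 𝒢 (symmDiff A B))
    {C : Finset (Sym2 V)} {k₀ : V} (hkC : k₀ ∉ vs C)
    (himp : ∀ D, IsCyc G D → k₀ ∉ vs D → K G C k₀ ⊂ K G D k₀ → 𝒢 D)
    {u w : V} {P Q : Finset V} {EP EQ : Finset (Sym2 V)} (h : Arcs G C u w P Q EP EQ)
    {J : Finset V} {EJ : Finset (Sym2 V)} (j : Pth G u w J EJ)
    (hJ : ∀ z ∈ J, z ∈ vs C → z = u ∨ z = w) (hJK : ∀ z ∈ J, z ∉ K G C k₀)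
    {n n' : V} (hn : n ∈ P) (hnu : n ≠ u) (hnw : n ≠ w) (hnA : n ∈ Att G C k₀)
    (hn' : n' ∈ Q) (hnu' : n' ≠ u) (hnw' : n' ≠ w) (hnA' : n' ∈ Att G C k₀) : 𝒢 C := by
  have hv := h.vs_eq
  have hne := h.no_edge hn hnu hnw hn' hnu' hnw'
  have hEJ : ∀ e ∈ EJ, e ∉ C := fun e he heC => hne (j.edge_notMem hJ he heC ▸ heC)
  have key : ∀ {P Q EP EQ}, Arcs G C u w P Q EP EQ → (∃ n' ∈ Q, n' ≠ u ∧ n' ≠ w ∧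
      n' ∈ Att G C k₀) → 𝒢 (EP ∪ EJ) := by
    rintro P Q EP EQ h ⟨n', hn', hnu', hnw', hnA'⟩
    have hv := h.vs_eq
    have ha := h.close j (fun z hz hzP => hJ z hz (by simp [hv, hzP]))
      (fun e he heP => hEJ e he (by simp [h.un, heP]))
    have hva := ha.vs_eq
    have hKD : ∀ k ∈ K G C k₀, k ∉ vs (EP ∪ EJ) := by
      intro k hk hkD
      have h1 := K_notMem hk
      have h2 := hJK k
      rw [hva, Finset.mem_union] at hkD
      rw [hv, Finset.mem_union] at h1
      tauto
    refine himp _ ha.isCyc (hKD _ (.refl hkC)) (K_ssubset hKD hnA' ?_)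
    rw [hva, Finset.mem_union]
    have := h.cap n'
    have := hJ n'
    have := hnA'.1
    tauto
  have h1 := key h ⟨n', hn', hnu', hnw', hnA'⟩
  have h2 := key h.swap ⟨n, hn, hnu, hnw, hnA⟩
  have := hG _ _ h1 h2
  rwa [symmDiff_arcs h.dj (by rwa [← h.un]), ← h.un] at this

/-- A cycle with a vertex which is not an attachment of the component of `k₀` is generated by
cycles with a larger component. -/
theorem gen_one (hG : ∀ A B, 𝒢 A → 𝒢 B → 𝒢 (symmDiff A B))
    (hT : TC G) {C : Finset (Sym2 V)} (hC : IsCyc G C) {k₀ c : V} (hk : k₀ ∈ U G)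
    (hkC : k₀ ∉ vs C) (himp : ∀ D, IsCyc G D → k₀ ∉ vs D → K G C k₀ ⊂ K G D k₀ → 𝒢 D)
    (hc : c ∈ vs C) (hcN : c ∉ Att G C k₀) : 𝒢 C := by
  obtain ⟨n₁, hn₁, -, -⟩ := exists_att hT hC hk hkC hc hc
  obtain ⟨n₂, hn₂, hne, -⟩ := exists_att hT hC hk hkC hn₁.1 hn₁.1
  have hcn₁ : c ≠ n₁ := by rintro rfl; contradiction
  have hcn₂ : c ≠ n₂ := by rintro rfl; contradiction
  obtain ⟨k, k', P, Q, EP, EQ, hkN, hkN', h, hcP, hmin⟩ : ∃ k k' P Q EP EQ, k ∈ Att G C k₀ ∧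
      k' ∈ Att G C k₀ ∧ Arcs G C k k' P Q EP EQ ∧ c ∈ P ∧
      ∀ z ∈ P, z ∈ Att G C k₀ → z = k ∨ z = k' := by
    obtain ⟨P, Q, EP, EQ, h⟩ := hC.arcs hn₁.1 hn₂.1 hne.symm
    have hc' := hc
    rw [h.vs_eq, Finset.mem_union] at hc'
    rcases hc' with hc' | hc'
    · exact h.minimal hn₁ hn₂ hc'
    · exact h.swap.minimal hn₁ hn₂ hc'
  have hv := h.vs_eq
  obtain ⟨n₃, hn₃, h31, h32⟩ := exists_att hT hC hk hkC hkN.1 hkN'.1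
  have hn₃Q : n₃ ∈ Q := by
    have h1 := hn₃.1
    have h2 := hmin n₃
    rw [hv, Finset.mem_union] at h1
    tauto
  have hck : c ≠ k := by rintro rfl; contradiction
  have hck' : c ≠ k' := by rintro rfl; contradiction
  have hwalk := hT.conn k k' c n₃ (hC.vs_sub hc) (hC.vs_sub hn₃.1) hck hck' h31 h32
  obtain ⟨y, ⟨hyP, hyk, hyk'⟩, z, ⟨hzQ, hzk, hzk'⟩, J, EJ, j, hJ, hJi⟩ :=
    hwalk.link (Y := {z | z ∈ P ∧ z ≠ k ∧ z ≠ k'}) (Z := {z | z ∈ Q ∧ z ≠ k ∧ z ≠ k'})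
      ⟨hcP, hck, hck'⟩ ⟨hn₃Q, h31, h32⟩
  obtain ⟨P', Q', EP', EQ', h', hkP', hkQ'⟩ := h.cross hyP hyk hyk' hzQ hzk hzk'
  have hJC : ∀ t ∈ J, t ∈ vs C → t = y ∨ t = z := by
    intro t ht htC
    have h1 := hJi t ht
    have h2 := hJ t ht
    rw [hv, Finset.mem_union] at htC
    simp only [Set.mem_ofPred_eq] at h1 h2
    tauto
  refine gen_close 𝒢 hG hkC himp h' j hJC ?_ hkP' hyk.symm hzk.symm hkN hkQ' hyk'.symm hzk'.symm
    hkN'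
  -- if the path met the component of `k₀`, its end `y` would be an attachment
  intro t ht htK
  obtain ⟨S₁, S₂, E₁, E₂, p1, p2, rfl, -, h1, -⟩ := j.split ht
  have htC := K_notMem htK
  have hyC : y ∈ vs C := by simp [hv, hyP]
  have hzC : z ∈ vs C := by simp [hv, hzQ]
  have hzS : z ∉ S₁ := fun hz => htC (h1 z hz p2.right ▸ hzC)
  obtain ⟨a', n, h3, h4, h5, h6⟩ := p1.inS.symm.firstHit (vs C) htC hyC
  have hny : n = y := by
    have h7 := hJC n (Finset.mem_union_left _ h6) h5
    rcases h7 with rfl | rfl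
    · rfl
    · exact absurd h6 hzS
  subst hny
  have haK : a' ∈ K G C k₀ := In.trans htK (h3.mono fun z hz => hz.2)
  rcases hmin n hyP ⟨hyC, a', haK, h4⟩ with h | h <;> contradiction

/-- A cycle which is not peripheral is a sum of cycles with a larger component of `k₀`. -/
theorem gen_step (hG : ∀ A B, 𝒢 A → 𝒢 B → 𝒢 (symmDiff A B))
    (hT : TC G) {C : Finset (Sym2 V)} (hC : IsCyc G C) {k₀ : V} (hk : k₀ ∈ U G)
    (hkC : k₀ ∉ vs C) (himp : ∀ D, IsCyc G D → k₀ ∉ vs D → K G C k₀ ⊂ K G D k₀ → 𝒢 D)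
    (hper : ¬ Per G C) : 𝒢 C := by
  by_cases hall : ∃ c ∈ vs C, c ∉ Att G C k₀
  · obtain ⟨c, hc, hcN⟩ := hall
    exact gen_one 𝒢 hG hT hC hk hkC himp hc hcN
  push Not at hall
  by_cases hind : ∃ u w, u ∈ vs C ∧ w ∈ vs C ∧ G.Adj u w ∧ s(u, w) ∉ C
  · obtain ⟨u, w, hu, hw, huw, he⟩ := hind
    obtain ⟨P, Q, EP, EQ, h⟩ := hC.arcs hu hw huw.ne
    have hv := h.vs_eq
    have key : ∀ {P Q EP EQ}, Arcs G C u w P Q EP EQ → ∃ n ∈ P, n ≠ u ∧ n ≠ w := by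
      intro P Q EP EQ h
      by_contra! hcon
      refine he ?_
      rw [h.un, Finset.mem_union]
      refine .inl (h.hp.eq_single_of_inner h.ne fun z hz => ?_)
      have := hcon z hz
      tauto
    obtain ⟨n, hn, hnu, hnw⟩ := key h
    obtain ⟨n', hn', hnu', hnw'⟩ := key h.swap
    refine gen_close 𝒢 hG hkC himp h (.single huw) ?_ ?_ hn hnu hnw (hall _ (by simp [hv, hn]))
      hn' hnu' hnw' (hall _ (by simp [hv, hn']))
    · intro z hz _
      simpa using hz
    · intro z hz hzK
      have := K_notMem hzK
      simp only [Finset.mem_insert, Finset.mem_singleton] at hz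
      rcases hz with rfl | rfl <;> contradiction
  push Not at hind
  have hcon : ∃ b ∈ U G, b ∉ vs C ∧ b ∉ K G C k₀ := by
    by_contra! hcon
    refine hper ⟨hC, hind, fun a b ha hb haC hbC => ?_⟩
    exact In.trans (In.symm (hcon a ha haC)) (hcon b hb hbC)
  obtain ⟨b, hb, hbC, hbK⟩ := hcon
  obtain ⟨c, hc, -⟩ := hC.third' b b
  obtain ⟨u, ⟨huC, l, hl, hlu⟩, -, -⟩ := exists_att hT hC hb hbC hc hc
  obtain ⟨w, ⟨hwC, l', hl', hlw⟩, hwu, -⟩ := exists_att hT hC hb hbC huC huC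
  have hLK : ∀ t ∈ K G C b, t ∉ K G C k₀ := fun t ht ht' => hbK (In.trans ht' (In.symm ht))
  obtain ⟨T, ET, p, hT'⟩ := (((Conn.comp (G := G) (S := {z | z ∉ vs C}) hbC).2) l hl l' hl').path
  have hlT := p.left
  have hTC : ∀ t ∈ T, t ∉ vs C := fun t ht => K_notMem (hT' t ht)
  have j := (Pth.cons hlu.symm p (fun h => hTC u h huC)).append (Pth.single hlw) (by
    intro z hz hz'
    simp only [Finset.mem_insert, Finset.mem_singleton] at hz hz'
    have := hTC z
    have := hTC l'
    rcases hz' with rfl | rfl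
    · rfl
    · rcases hz with rfl | hz
      · exact absurd rfl hwu
      · exact absurd hwC (hTC _ hz))
  generalize hJdef : insert u T ∪ {l', w} = J at j
  generalize insert s(u, l) ET ∪ {s(l', w)} = EJ at j
  have hlJ : l ∈ J := by simp [← hJdef, hlT]
  have hl'T := p.right
  have hJ : ∀ z ∈ J, z ∈ vs C → z = u ∨ z = w := by
    intro z hz hzC
    have := hTC z
    have := hTC l'
    simp only [← hJdef, Finset.mem_union, Finset.mem_insert, Finset.mem_singleton] at hz
    rcases hz with (rfl | hz) | rfl | rfl <;> tauto
  have hJK : ∀ z ∈ J, z ∉ K G C k₀ := by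
    intro z hz hzK
    have h1 := K_notMem hzK
    have h2 : z ∈ T := by
      simp only [← hJdef, Finset.mem_union, Finset.mem_insert, Finset.mem_singleton] at hz
      rcases hz with (rfl | hz) | rfl | rfl <;> tauto
    exact hLK z (hT' z h2) hzK
  have hlu' : l ≠ u := by rintro rfl; exact hTC _ hlT huC
  have hlw' : l ≠ w := by rintro rfl; exact hTC _ hlT hwC
  have hEJ : ∀ e ∈ EJ, e ∉ C := by
    intro e he heC
    have := j.edge_notMem hJ he heC
    have := (j.eq_single (this ▸ he)).1
    grind
  have key : ∀ {P Q EP EQ}, Arcs G C u w P Q EP EQ → 𝒢 (EP ∪ EJ) := by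
    intro P Q EP EQ h
    have hv := h.vs_eq
    have ha := h.close j (fun z hz hzP => hJ z hz (by simp [hv, hzP]))
      (fun e he heP => hEJ e he (by simp [h.un, heP]))
    have hva := ha.vs_eq
    have hKD : ∀ k ∈ K G C k₀, k ∉ vs (EP ∪ EJ) := by
      intro k hk hkD
      have h1 := K_notMem hk
      have h2 := hJK k
      rw [hva, Finset.mem_union] at hkD
      rw [hv, Finset.mem_union] at h1
      tauto
    have hk₀ := hKD k₀ (.refl hkC)
    rcases (K_mono hKD).eq_or_ssubset with heq | hss
    · refine gen_one 𝒢 hG hT ha.isCyc hk hk₀ (by rwa [← heq]) (c := l) (by simp [hva, hlJ]) ?_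
      rintro ⟨-, k, hkK, hkl⟩
      rw [← heq] at hkK
      exact hLK l hl (K_step hkK hkl (hTC l hlT))
    · exact himp _ ha.isCyc hk₀ hss
  obtain ⟨P, Q, EP, EQ, h⟩ := hC.arcs huC hwC hwu.symm
  have := hG _ _ (key h) (key h.swap)
  rwa [symmDiff_arcs h.dj (by rwa [← h.un]), ← h.un] at this

/-- A cycle avoiding `k₀` is generated by the peripheral cycles avoiding `k₀`, by induction on the
component of `k₀` in the complement of the cycle. -/
theorem gen_avoid (hG : ∀ A B, 𝒢 A → 𝒢 B → 𝒢 (symmDiff A B))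
    (hT : TC G) {k₀ : V} (hk : k₀ ∈ U G)
    (hper : ∀ D, Per G D → k₀ ∉ vs D → 𝒢 D) {C : Finset (Sym2 V)} (hC : IsCyc G C)
    (hkC : k₀ ∉ vs C) : 𝒢 C := by
  induction hS : K G C k₀ using WellFoundedGT.induction generalizing C with
  | _ S ih =>
    subst hS
    by_cases hp : Per G C
    · exact hper C hp hkC
    · exact gen_step 𝒢 hG hT hC hk hkC (fun D hD hkD hs => ih _ hs hD hkD rfl) hp

/-- Peripheral cycles of a 3-connected graph generate all cycles. -/
theorem gen_all (hG : ∀ A B, 𝒢 A → 𝒢 B → 𝒢 (symmDiff A B))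
    (hT : TC G) (hper : ∀ D, Per G D → 𝒢 D) {C : Finset (Sym2 V)} (hC : IsCyc G C) :
    𝒢 C := by
  by_cases hham : ∃ k ∈ U G, k ∉ vs C
  · obtain ⟨k, hk, hkC⟩ := hham
    exact gen_avoid 𝒢 hG hT hk (fun D hD _ => hper D hD) hC hkC
  push Not at hham
  obtain ⟨v, w, hvw⟩ := hC.nonempty
  have hv := mem_vs_left hvw
  obtain ⟨y, z, hyz, hnb⟩ := hC.deg hv
  have hy := hC.adj ((hnb y).2 (.inl rfl))
  have hz := hC.adj ((hnb z).2 (.inr rfl))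
  obtain ⟨t, hvt, hty, htz⟩ := hT.nbr (hC.vs_sub hv) hy.ne hz.ne
  have ht := hham t (mem_U.2 ⟨v, hvt.symm⟩)
  have he : s(v, t) ∉ C := by rw [hnb]; tauto
  have key : ∀ {P Q EP EQ}, Arcs G C v t P Q EP EQ → 𝒢 (EP ∪ {s(v, t)}) := by
    intro P Q EP EQ h
    have hvs := h.vs_eq
    have hn : ∃ n ∈ Q, n ≠ v ∧ n ≠ t := by
      by_contra! hcon
      refine he ?_
      rw [h.un, Finset.mem_union]
      refine .inr (h.hq.eq_single_of_inner h.ne fun z hz => ?_)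
      have := hcon z hz
      tauto
    obtain ⟨n, hn, hnv, hnt⟩ := hn
    have ha := h.close (.single hvt) (fun z hz _ => by simpa using hz) (fun e he' heP => by
      simp only [Finset.mem_singleton] at he'
      subst he'
      exact he (by simp [h.un, heP]))
    refine gen_avoid 𝒢 hG hT (k₀ := n) (hC.vs_sub (by simp [hvs, hn]))
      (fun D hD _ => hper D hD) ha.isCyc ?_
    have := h.cap n
    rw [ha.vs_eq]
    simp only [Finset.mem_union, Finset.mem_insert, Finset.mem_singleton]
    tauto
  obtain ⟨P, Q, EP, EQ, h⟩ := hC.arcs hv ht hvt.ne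
  have := hG _ _ (key h) (key h.swap)
  rwa [symmDiff_arcs h.dj (by rw [← h.un]; simpa using he), ← h.un] at this

end Gen

/-- Every edge lies on a peripheral cycle avoiding a given further vertex: it lies on some cycle
avoiding that vertex, which is generated by peripheral cycles avoiding it. -/
theorem exists_per (hT : TC G) {x y a : V} (hxy : G.Adj x y) (ha : a ∈ U G) (hax : a ≠ x)
    (hay : a ≠ y) : ∃ D, Per G D ∧ s(x, y) ∈ D ∧ a ∉ vs D := by
  by_contra! hcon
  have hxU : x ∈ U G := mem_U.2 ⟨y, hxy⟩
  have hyU : y ∈ U G := mem_U.2 ⟨x, hxy.symm⟩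
  have key := fun {C} => gen_avoid (G := G) (fun X => s(x, y) ∉ X)
    (fun A B hA hB h => by simp [Finset.mem_symmDiff, hA, hB] at h) hT ha
    (fun D hD haD he => haD (hcon D hD he)) (C := C)
  obtain ⟨t, hxt, hty, hta⟩ := hT.nbr hxU hxy.ne hax.symm
  obtain ⟨P, E, p, hP⟩ := (hT.conn x a t y (mem_U.2 ⟨x, hxt.symm⟩) hyU hxt.ne' hta hxy.ne'
    hay.symm).path
  have hxP : x ∉ P := fun h => (hP x h).1 rfl
  have haP : a ∉ P := fun h => (hP a h).2 rfl
  have p' := Pth.cons hxt p hxP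
  have he : s(x, y) ∉ insert s(x, t) E := by
    rw [Finset.mem_insert]
    rintro (h | h)
    · exact hty (Sym2.congr_right.1 h).symm
    · exact hxP (p.edge h).2.1
  have hcyc := IsCyc.of_edge hxy p' he
  refine key hcyc ?_ (by simp)
  rw [Finset.insert_eq, vs_union, p'.vs_eq hxy.ne, (Pth.single hxy).vs_eq hxy.ne]
  simp [haP, hax, hay]

end CDC

/-! ### Every edge lies on exactly two peripheral cycles -/

namespace CDC
set_option linter.unusedSectionVars false
variable {V : Type*} {G : SimpleGraph V} [Fintype V]

set_option maxHeartbeats 1000000 in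
/-- A path `Q` joining two vertices of a peripheral cycle through the complement of the cycle
separates the two arcs it cuts out; otherwise there is a `K₃,₃` minor. -/
theorem Per.separates (hG : IsPlanar G) {C : Finset (Sym2 V)} (hC : Per G C) {u w : V}
    {P P' : Finset V} {EP EP' : Finset (Sym2 V)} (h : Arcs G C u w P P' EP EP')
    {Q : Finset V} {EQ : Finset (Sym2 V)} (q : Pth G u w Q EQ) {q₀ : V} (hq : q₀ ∈ Q)
    (hqC : q₀ ∉ vs C) (hQ : ∀ z ∈ Q, z ∈ vs C → z = u ∨ z = w) {a b : V} (ha : a ∈ P)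
    (hau : a ≠ u) (haw : a ≠ w) (hb : b ∈ P') (hbu : b ≠ u) (hbw : b ≠ w) :
    ¬ In G {z | z ∉ Q} a b := by
  intro hab
  have hv := h.vs_eq
  have hu : u ∈ vs C := by simp [hv, h.hp.left]
  have hw : w ∈ vs C := by simp [hv, h.hp.right]
  have hqu : q₀ ≠ u := by rintro rfl; contradiction
  have hqw : q₀ ≠ w := by rintro rfl; contradiction
  obtain ⟨y, ⟨hyP, hyu, hyw⟩, z, ⟨hzP, hzu, hzw⟩, R, ER, r, hRS, hR⟩ :=
    hab.link (Y := {t | t ∈ P ∧ t ≠ u ∧ t ≠ w}) (Z := {t | t ∈ P' ∧ t ≠ u ∧ t ≠ w})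
      ⟨ha, hau, haw⟩ ⟨hb, hbu, hbw⟩
  have hyz : y ≠ z := by
    rintro rfl
    rcases h.cap y hyP hzP with h | h <;> contradiction
  have hinner : ∃ l ∈ R, l ≠ y ∧ l ≠ z := by
    by_contra! hcon
    have he := r.eq_single_of_inner hyz (fun t ht => by have := hcon t ht; tauto)
    have he := hC.ind y z (by simp [hv, hyP]) (by simp [hv, hzP]) (r.edge he).1
    rw [h.un, Finset.mem_union] at he
    rcases he with he | he
    · rcases h.cap z (h.hp.edge he).2.2 hzP with h | h <;> contradiction
    · rcases h.cap y hyP (h.hq.edge he).2.1 with h | h <;> contradiction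
  obtain ⟨l, hl, hly, hlz⟩ := hinner
  have hRC : ∀ t ∈ R, t ≠ y → t ≠ z → t ∉ vs C ∧ t ∉ Q := by
    intro t ht h1 h2
    have h3 := hR t ht h1 h2
    have h4 : t ∉ Q := hRS t ht
    refine ⟨?_, h4⟩
    rw [hv, Finset.mem_union]
    have h5 : t ≠ u := by rintro rfl; exact h4 q.left
    have h6 : t ≠ w := by rintro rfl; exact h4 q.right
    simp only [Set.mem_ofPred_eq] at h3
    tauto
  obtain ⟨l₁, hl₁, hl₁y, hl₁z, hl₁a⟩ := r.inner_left hl hly hlz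
  obtain ⟨l₂, hl₂, hl₂y, hl₂z, hl₂a⟩ := r.inner_right hl hly hlz
  let M : Set V := {t | t ∉ vs C ∧ t ∉ Q}
  have hlM : l₁ ∈ M := hRC _ hl₁ hl₁y hl₁z
  have hL2 : In G M l₁ l₂ := ((r.inner_conn hl hly hlz).2 l₁ ⟨hl₁, hl₁y, hl₁z⟩ l₂
    ⟨hl₂, hl₂y, hl₂z⟩).mono (fun t ht => hRC t ht.1 ht.2.1 ht.2.2)
  have hlq := hC.con l₁ q₀ (mem_U.2 ⟨y, hl₁a.symm⟩)
    (by obtain ⟨t, -, -, -, ht⟩ := q.inner_left hq hqu hqw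
        obtain ⟨t, ht⟩ := q.cover h.ne hq
        exact mem_U.2 ⟨t, (q.edge ht).1⟩) hlM.1 hqC
  obtain ⟨l₃, n, hl₃, hl₃n, hnQ, hnC⟩ := hlq.firstHit (X := {t | t ∈ Q}) hlM.2 hq
  have hnu : n ≠ u := by rintro rfl; exact hnC hu
  have hnw : n ≠ w := by rintro rfl; exact hnC hw
  obtain ⟨u₁, hu₁, hu₁u, hu₁w, hu₁a⟩ := h.hp.inner_left ha hau haw
  obtain ⟨u₂, hu₂, hu₂u, hu₂w, hu₂a⟩ := h.hq.inner_left hb hbu hbw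
  obtain ⟨u₃, hu₃, hu₃u, hu₃w, hu₃a⟩ := q.inner_left hq hqu hqw
  obtain ⟨w₁, hw₁, hw₁u, hw₁w, hw₁a⟩ := h.hp.inner_right ha hau haw
  obtain ⟨w₂, hw₂, hw₂u, hw₂w, hw₂a⟩ := h.hq.inner_right hb hbu hbw
  obtain ⟨w₃, hw₃, hw₃u, hw₃w, hw₃a⟩ := q.inner_right hq hqu hqw
  have hLM : ∀ {t}, In G M l₁ t → t ∉ vs C ∧ t ∉ Q := fun h => h.right
  refine no_K33 hG ![{u}, {w}, {t | In G M l₁ t}]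
    ![{t | t ∈ P ∧ t ≠ u ∧ t ≠ w}, {t | t ∈ P' ∧ t ≠ u ∧ t ≠ w}, {t | t ∈ Q ∧ t ≠ u ∧ t ≠ w}]
    ?_ ?_ ?_ ?_ ?_ ?_
  · intro i
    fin_cases i
    exacts [Conn.singleton _, Conn.singleton _, Conn.comp hlM]
  · intro i
    fin_cases i
    exacts [h.hp.inner_conn ha hau haw, h.hq.inner_conn hb hbu hbw, q.inner_conn hq hqu hqw]
  · intro i j hij t
    have hne := h.ne
    fin_cases i <;> fin_cases j <;> try exact absurd hij (by decide)
    · rintro rfl; exact hne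
    · rintro rfl h; exact (hLM h).1 hu
    · rintro rfl h; exact (hLM h).1 hw
  · intro i j hij t
    have h1 := h.cap t
    have h2 := hQ t
    rw [hv, Finset.mem_union] at h2
    clear hRC hRS hR hlq hL2 hLM hl₃ hQ
    fin_cases i <;> fin_cases j <;> (try exact absurd hij (by decide)) <;>
      simp <;> tauto
  · intro i j t
    fin_cases i <;> fin_cases j
    · rintro rfl h; exact h.2.1 rfl
    · rintro rfl h; exact h.2.1 rfl
    · rintro rfl h; exact h.2.1 rfl
    · rintro rfl h; exact h.2.2 rfl
    · rintro rfl h; exact h.2.2 rfl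
    · rintro rfl h; exact h.2.2 rfl
    · intro h h'; exact (hLM h).1 (by rw [hv]; exact Finset.mem_union_left _ h'.1)
    · intro h h'; exact (hLM h).1 (by rw [hv]; exact Finset.mem_union_right _ h'.1)
    · intro h h'; exact (hLM h).2 h'.1
  · intro i j
    fin_cases i <;> fin_cases j
    · exact ⟨u, rfl, u₁, ⟨hu₁, hu₁u, hu₁w⟩, hu₁a⟩
    · exact ⟨u, rfl, u₂, ⟨hu₂, hu₂u, hu₂w⟩, hu₂a⟩
    · exact ⟨u, rfl, u₃, ⟨hu₃, hu₃u, hu₃w⟩, hu₃a⟩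
    · exact ⟨w, rfl, w₁, ⟨hw₁, hw₁u, hw₁w⟩, hw₁a⟩
    · exact ⟨w, rfl, w₂, ⟨hw₂, hw₂u, hw₂w⟩, hw₂a⟩
    · exact ⟨w, rfl, w₃, ⟨hw₃, hw₃u, hw₃w⟩, hw₃a⟩
    · exact ⟨l₁, .refl hlM, y, ⟨hyP, hyu, hyw⟩, hl₁a.symm⟩
    · exact ⟨l₂, hL2, z, ⟨hzP, hzu, hzw⟩, hl₂a.symm⟩
    · exact ⟨l₃, hl₃, n, ⟨hnQ, hnu, hnw⟩, hl₃n⟩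

theorem Per.eq_of_vs_subset {C D : Finset (Sym2 V)} (hC : Per G C) (hD : IsCyc G D)
    (h : ∀ z ∈ vs D, z ∈ vs C) : D = C := by
  refine hD.eq_of_subset hC.cyc fun e he => ?_
  induction e with
  | _ a b => exact hC.ind a b (h a (mem_vs_left he)) (h b (mem_vs_right he)) (hD.adj he)

/-- Two distinct peripheral cycles have at most two common vertices. -/
theorem Per.inter (hG : IsPlanar G) (hT : TC G) {C D : Finset (Sym2 V)} (hC : Per G C)
    (hD : Per G D) (hCD : C ≠ D) {x y : V} (hxy : x ≠ y) (hxC : x ∈ vs C) (hxD : x ∈ vs D)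
    (hyC : y ∈ vs C) (hyD : y ∈ vs D) : ∀ z ∈ vs C, z ∈ vs D → z = x ∨ z = y := by
  have hq : ∃ q ∈ vs D, q ∉ vs C := by
    by_contra! hcon
    exact hCD (hC.eq_of_vs_subset hD.cyc hcon).symm
  obtain ⟨q, hqD, hqC⟩ := hq
  have harc : ∃ Q Q' EQ EQ', Arcs G D x y Q Q' EQ EQ' ∧ q ∈ Q := by
    obtain ⟨Q, Q', EQ, EQ', h⟩ := hD.cyc.arcs hxD hyD hxy
    have := h.vs_eq
    rw [this, Finset.mem_union] at hqD
    rcases hqD with hqD | hqD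
    exacts [⟨_, _, _, _, h, hqD⟩, ⟨_, _, _, _, h.swap, hqD⟩]
  obtain ⟨_, _, _, _, h, hq⟩ := harc
  obtain ⟨u, w, Q, Q', EQ, EQ', hu, hw, h, hq, hQ⟩ := h.minimal (N := {z | z ∈ vs C}) hxC hyC hq
  simp only [Set.mem_ofPred_eq] at hu hw hQ
  have hvD := h.vs_eq
  have hqu : q ≠ u := by rintro rfl; contradiction
  have hqw : q ≠ w := by rintro rfl; contradiction
  have key : ∀ z ∈ vs C, z ∈ vs D → z ∈ Q := by
    intro z hzC hzD
    by_contra hzQ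
    have hzu : z ≠ u := by rintro rfl; exact hzQ h.hp.left
    have hzw : z ≠ w := by rintro rfl; exact hzQ h.hp.right
    have hzQ' : z ∈ Q' := by rw [hvD, Finset.mem_union] at hzD; tauto
    have hnuw := h.no_edge hq hqu hqw hzQ' hzu hzw
    have harc : ∃ P P' EP EP', Arcs G C u w P P' EP EP' ∧ z ∈ P := by
      obtain ⟨P, P', EP, EP', h⟩ := hC.cyc.arcs hu hw h.ne
      have := h.vs_eq
      rw [this, Finset.mem_union] at hzC
      rcases hzC with hzC | hzC
      exacts [⟨_, _, _, _, h, hzC⟩, ⟨_, _, _, _, h.swap, hzC⟩]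
    obtain ⟨P, P', EP, EP', k, hzP⟩ := harc
    have hvC := k.vs_eq
    have hb : ∃ b ∈ P', b ≠ u ∧ b ≠ w := by
      by_contra! hcon
      have he := k.hq.eq_single_of_inner k.ne (fun t ht => by have := hcon t ht; tauto)
      exact hnuw (hD.ind u w (by simp [hvD, h.hp.left]) (by simp [hvD, h.hp.right])
        (k.hq.edge he).1)
    obtain ⟨b, hb, hbu, hbw⟩ := hb
    have hbQ : b ∉ Q := fun hbQ => by
      rcases hQ b hbQ (by simp [hvC, hb]) with h | h <;> contradiction
    have star := hC.separates hG k h.hp hq hqC hQ hzP hzu hzw hb hbu hbw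
    have hbQ' : b ∉ Q' := by
      intro hbQ'
      refine star (((h.hq.inner_conn hzQ' hzu hzw).2 z ⟨hzQ', hzu, hzw⟩ b
        ⟨hbQ', hbu, hbw⟩).mono ?_)
      rintro t ⟨h1, h2, h3⟩ h4
      rcases h.cap t h4 h1 with h | h <;> contradiction
    obtain ⟨t₁, t₂, -, hdeg⟩ := hD.cyc.deg hzD
    obtain ⟨t, hzt, ht1, ht2⟩ := hT.nbr (hC.cyc.vs_sub hzC)
      (hD.cyc.adj ((hdeg t₁).2 (.inl rfl))).ne (hD.cyc.adj ((hdeg t₂).2 (.inr rfl))).ne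
    have htD : t ∉ vs D := fun htD => by
      have := (hdeg t).1 (hD.ind z t hzD htD hzt)
      tauto
    refine star (.cons hzQ hzt ((hD.con t b (mem_U.2 ⟨z, hzt.symm⟩)
      (hC.cyc.vs_sub (by simp [hvC, hb])) htD (by simp [hvD, hbQ, hbQ'])).mono ?_))
    intro s hs hsQ
    exact hs (by simp [hvD, hsQ])
  have key' : ∀ z ∈ vs C, z ∈ vs D → z = u ∨ z = w := fun z h1 h2 => hQ z (key z h1 h2) h1
  have h1 := key' x hxC hxD
  have h2 := key' y hyC hyD
  intro z h3 h4
  have h5 := key' z h3 h4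
  grind

/-- Two disjoint connected sets `A`, `A'` that can be joined within `M ∪ A ∪ A'` become adjacent
after adding to `A` either nothing or a component of `M`. -/
theorem half {A A' M : Set V} (hA : Conn G A) (hAA : ∀ z ∈ A, z ∉ A') {a b : V} (ha : a ∈ A)
    (hb : b ∈ A') (h : In G {z | z ∈ M ∨ z ∈ A ∨ z ∈ A'} a b) :
    ∃ L : Set V, L ⊆ M ∧ Conn G (A ∪ L) ∧ (∃ s ∈ A ∪ L, ∃ t ∈ A', G.Adj s t) ∧
      ∀ z ∈ L, L = {t | In G M z t} ∧ (∃ s ∈ L, ∃ t ∈ A, G.Adj s t) ∧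
        ∃ s ∈ L, ∃ t ∈ A', G.Adj s t := by
  obtain ⟨y, hy, z, hz, P, E, p, hP, hin⟩ := h.link ha hb
  have hyz : y ≠ z := by rintro rfl; exact hAA y hy hz
  by_cases hl : ∃ l ∈ P, l ≠ y ∧ l ≠ z
  · obtain ⟨l, hl, hly, hlz⟩ := hl
    obtain ⟨l₁, hl₁, hl₁y, hl₁z, hl₁a⟩ := p.inner_left hl hly hlz
    obtain ⟨l₂, hl₂, hl₂y, hl₂z, hl₂a⟩ := p.inner_right hl hly hlz
    have hM : ∀ t ∈ P, t ≠ y → t ≠ z → t ∈ M := by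
      intro t ht h1 h2
      have h3 := hP t ht
      have h4 := hin t ht h1 h2
      simp only [Set.mem_ofPred_eq] at h3
      tauto
    have h12 : In G M l₁ l₂ := ((p.inner_conn hl hly hlz).2 l₁ ⟨hl₁, hl₁y, hl₁z⟩ l₂
      ⟨hl₂, hl₂y, hl₂z⟩).mono (fun t ht => hM t ht.1 ht.2.1 ht.2.2)
    refine ⟨{t | In G M l₁ t}, fun t ht => ht.right,
      hA.union (Conn.comp h12.left) hy (.refl h12.left) (.inl hl₁a),
      ⟨l₂, .inr h12, z, hz, hl₂a.symm⟩, fun t ht => ⟨?_, ⟨l₁, .refl h12.left, y, hy, hl₁a.symm⟩,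
        ⟨l₂, h12, z, hz, hl₂a.symm⟩⟩⟩
    ext s
    exact ⟨fun h => In.trans (In.symm ht) h, fun h => In.trans ht h⟩
  · push Not at hl
    have he := p.eq_single_of_inner hyz (fun t ht => by have := hl t ht; tauto)
    refine ⟨∅, by simp, by simpa using hA, ⟨y, .inl hy, z, hz, (p.edge he).1⟩, by simp⟩

set_option maxHeartbeats 1000000 in
/-- Three disjoint connected sets `A`, `B`, `C`, each adjacent to two further vertices `x` and `y`
which are adjacent to each other, and such that any two can be joined avoiding `x`, `y` and the third,
give a `K₅` or `K₃,₃` minor. -/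
theorem no_three (hG : IsPlanar G) {x y : V} (hxy : G.Adj x y) {A B C : Set V} (hA : Conn G A)
    (hB : Conn G B) (hC : Conn G C) (hAB : ∀ z ∈ A, z ∉ B) (hBC : ∀ z ∈ B, z ∉ C)
    (hCA : ∀ z ∈ C, z ∉ A) (hx : x ∉ A ∧ x ∉ B ∧ x ∉ C) (hy : y ∉ A ∧ y ∉ B ∧ y ∉ C)
    (hxa : ∃ t ∈ A, G.Adj x t) (hxb : ∃ t ∈ B, G.Adj x t) (hxc : ∃ t ∈ C, G.Adj x t)
    (hya : ∃ t ∈ A, G.Adj y t) (hyb : ∃ t ∈ B, G.Adj y t) (hyc : ∃ t ∈ C, G.Adj y t)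
    (lAB : ∃ a ∈ A, ∃ b ∈ B, In G {z | z ∉ C ∧ z ≠ x ∧ z ≠ y} a b)
    (lBC : ∃ a ∈ B, ∃ b ∈ C, In G {z | z ∉ A ∧ z ≠ x ∧ z ≠ y} a b)
    (lCA : ∃ a ∈ C, ∃ b ∈ A, In G {z | z ∉ B ∧ z ≠ x ∧ z ≠ y} a b) : False := by
  let M : Set V := {z | z ∉ A ∧ z ∉ B ∧ z ∉ C ∧ z ≠ x ∧ z ≠ y}
  obtain ⟨a, ha, b, hb, h⟩ := lAB
  obtain ⟨L₁, hL₁, cL₁, aL₁, L₁'⟩ := half (M := M) hA hAB ha hb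
    (h.mono fun z hz => by simp only [M, Set.mem_ofPred_eq] at hz ⊢; tauto)
  obtain ⟨a, ha, b, hb, h⟩ := lBC
  obtain ⟨L₂, hL₂, cL₂, aL₂, L₂'⟩ := half (M := M) hB hBC ha hb
    (h.mono fun z hz => by simp only [M, Set.mem_ofPred_eq] at hz ⊢; tauto)
  obtain ⟨a, ha, b, hb, h⟩ := lCA
  obtain ⟨L₃, hL₃, cL₃, aL₃, L₃'⟩ := half (M := M) hC hCA ha hb
    (h.mono fun z hz => by simp only [M, Set.mem_ofPred_eq] at hz ⊢; tauto)
  have noL : ∀ L : Set V, L ⊆ M → Conn G L → (∃ s ∈ L, ∃ t ∈ A, G.Adj s t) →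
      (∃ s ∈ L, ∃ t ∈ B, G.Adj s t) → (∃ s ∈ L, ∃ t ∈ C, G.Adj s t) → False := by
    intro L hL cL la lb lc
    have hLx : ∀ z ∈ L, z ≠ x ∧ z ≠ y ∧ z ∉ A ∧ z ∉ B ∧ z ∉ C := fun z hz => by
      have := hL hz
      simp only [M, Set.mem_ofPred_eq] at this
      tauto
    refine no_K33 hG ![{x}, {y}, L] ![A, B, C] ?_ ?_ ?_ ?_ ?_ ?_
    · intro i
      fin_cases i
      exacts [Conn.singleton _, Conn.singleton _, cL]
    · intro i
      fin_cases i
      exacts [hA, hB, hC]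
    · intro i j hij t
      have := hxy.ne
      have := hLx t
      fin_cases i <;> fin_cases j <;> (try exact absurd hij (by decide)) <;> simp <;> grind
    · intro i j hij t
      have := hAB t
      have := hBC t
      have := hCA t
      fin_cases i <;> fin_cases j <;> (try exact absurd hij (by decide)) <;> simp <;> tauto
    · intro i j t
      have := hLx t
      fin_cases i <;> fin_cases j <;> simp <;> grind
    · intro i j
      fin_cases i <;> fin_cases j <;> simp <;> assumption
  have d12 : ∀ z ∈ L₁, z ∉ L₂ := by
    intro z h1 h2
    obtain ⟨e1, p1, q1⟩ := L₁' z h1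
    obtain ⟨e2, p2, q2⟩ := L₂' z h2
    rw [← e1] at e2
    subst e2
    exact noL L₂ hL₁ (by rw [e1]; exact Conn.comp (hL₁ h1)) p1 q1 q2
  have d23 : ∀ z ∈ L₂, z ∉ L₃ := by
    intro z h1 h2
    obtain ⟨e1, p1, q1⟩ := L₂' z h1
    obtain ⟨e2, p2, q2⟩ := L₃' z h2
    rw [← e1] at e2
    subst e2
    exact noL L₃ hL₃ (by rw [e1]; exact Conn.comp (hL₂ h1)) q2 p1 q1
  have d13 : ∀ z ∈ L₁, z ∉ L₃ := by
    intro z h1 h2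
    obtain ⟨e1, p1, q1⟩ := L₁' z h1
    obtain ⟨e2, p2, q2⟩ := L₃' z h2
    rw [← e1] at e2
    subst e2
    exact noL L₃ hL₃ (by rw [e1]; exact Conn.comp (hL₁ h1)) p1 q1 p2
  have up : ∀ {v : V} {S : Set V} (L : Set V), (∃ t ∈ S, G.Adj v t) →
      ∃ s ∈ ({v} : Set V), ∃ t ∈ S ∪ L, G.Adj s t :=
    fun L ⟨t, h1, h2⟩ => ⟨_, rfl, t, .inl h1, h2⟩
  have up2 : ∀ {S T : Set V} (L : Set V), (∃ s ∈ S, ∃ t ∈ T, G.Adj s t) →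
      ∃ s ∈ S, ∃ t ∈ T ∪ L, G.Adj s t :=
    fun L ⟨s, h0, t, h1, h2⟩ => ⟨s, h0, t, .inl h1, h2⟩
  have hM : ∀ z, z ∈ L₁ ∨ z ∈ L₂ ∨ z ∈ L₃ → z ≠ x ∧ z ≠ y ∧ z ∉ A ∧ z ∉ B ∧ z ∉ C := by
    intro z hz
    have : z ∈ M := by
      rcases hz with h | h | h
      exacts [hL₁ h, hL₂ h, hL₃ h]
    simp only [M, Set.mem_ofPred_eq] at this
    tauto
  refine no_K5 hG ![{x}, {y}, A ∪ L₁, B ∪ L₂, C ∪ L₃] ?_ ?_ ?_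
  · intro i
    fin_cases i
    exacts [Conn.singleton _, Conn.singleton _, cL₁, cL₂, cL₃]
  · intro i j hij t
    have m1 : t ∈ L₁ → _ := fun h => hM t (.inl h)
    have m2 : t ∈ L₂ → _ := fun h => hM t (.inr (.inl h))
    have m3 : t ∈ L₃ → _ := fun h => hM t (.inr (.inr h))
    fin_cases i <;> fin_cases j <;> (try exact absurd hij (by decide))
    · rintro rfl; exact hxy.ne
    · rintro rfl h; exact h.elim hx.1 fun h => (m1 h).1 rfl
    · rintro rfl h; exact h.elim hx.2.1 fun h => (m2 h).1 rfl
    · rintro rfl h; exact h.elim hx.2.2 fun h => (m3 h).1 rfl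
    · rintro rfl h; exact h.elim hy.1 fun h => (m1 h).2.1 rfl
    · rintro rfl h; exact h.elim hy.2.1 fun h => (m2 h).2.1 rfl
    · rintro rfl h; exact h.elim hy.2.2 fun h => (m3 h).2.1 rfl
    · rintro (h' | h') (h | h)
      exacts [hAB t h' h, (m2 h).2.2.1 h', (m1 h').2.2.2.1 h, d12 t h' h]
    · rintro (h' | h') (h | h)
      exacts [hCA t h h', (m3 h).2.2.1 h', (m1 h').2.2.2.2 h, d13 t h' h]
    · rintro (h' | h') (h | h)
      exacts [hBC t h' h, (m3 h).2.2.2.1 h', (m2 h').2.2.2.2 h, d23 t h' h]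
  · intro i j hij
    fin_cases i <;> fin_cases j <;> (try exact absurd hij (by decide))
    · exact ⟨x, rfl, y, rfl, hxy⟩
    · exact up L₁ hxa
    · exact up L₂ hxb
    · exact up L₃ hxc
    · exact up L₁ hya
    · exact up L₂ hyb
    · exact up L₃ hyc
    · exact up2 L₂ aL₁
    · obtain ⟨s, h0, t, h1, h2⟩ := aL₃
      exact ⟨t, .inl h1, s, h0, h2.symm⟩
    · exact up2 L₃ aL₂

/-- An edge `xy` of a planar 3-connected graph lies on at most two peripheral cycles: the remainders
of three such cycles would be three sets as in `CDC.no_three`. -/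
theorem Per.no_three (hG : IsPlanar G) (hT : TC G) {C₁ C₂ C₃ : Finset (Sym2 V)} (h₁ : Per G C₁)
    (h₂ : Per G C₂) (h₃ : Per G C₃) (h12 : C₁ ≠ C₂) (h23 : C₂ ≠ C₃) (h31 : C₃ ≠ C₁) {x y : V}
    (e₁ : s(x, y) ∈ C₁) (e₂ : s(x, y) ∈ C₂) (e₃ : s(x, y) ∈ C₃) : False := by
  have hxy := h₁.cyc.adj e₁
  have prop : ∀ {C}, Per G C → s(x, y) ∈ C → Conn G {t | t ∈ vs C ∧ t ≠ x ∧ t ≠ y} ∧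
      (∃ t ∈ {t | t ∈ vs C ∧ t ≠ x ∧ t ≠ y}, G.Adj x t) ∧
      (∃ t ∈ {t | t ∈ vs C ∧ t ≠ x ∧ t ≠ y}, G.Adj y t) := by
    intro C hC he
    obtain ⟨c, hc, hcx, hcy⟩ := hC.cyc.third he
    obtain ⟨E, p, -, -⟩ := hC.cyc.edge he
    refine ⟨p.inner_conn hc hcx hcy, ?_, ?_⟩
    · obtain ⟨t, a, b, c, d⟩ := p.inner_left hc hcx hcy
      exact ⟨t, ⟨a, b, c⟩, d⟩
    · obtain ⟨t, a, b, c, d⟩ := p.inner_right hc hcx hcy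
      exact ⟨t, ⟨a, b, c⟩, d⟩
  have dis : ∀ {C D}, Per G C → Per G D → s(x, y) ∈ C → s(x, y) ∈ D → C ≠ D →
      ∀ z ∈ {t | t ∈ vs C ∧ t ≠ x ∧ t ≠ y}, z ∉ {t | t ∈ vs D ∧ t ≠ x ∧ t ≠ y} := by
    rintro C D hC hD he he' hne z ⟨ha, hb, hc⟩ ⟨ha', hb', hc'⟩
    have := hC.inter hG hT hD hne hxy.ne (mem_vs_left he) (mem_vs_left he') (mem_vs_right he)
      (mem_vs_right he') z ha ha'
    tauto
  have link : ∀ {C D E}, Per G C → Per G D → Per G E → s(x, y) ∈ C → s(x, y) ∈ D → s(x, y) ∈ E →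
      C ≠ E → D ≠ E → ∃ a ∈ {t | t ∈ vs C ∧ t ≠ x ∧ t ≠ y}, ∃ b ∈ {t | t ∈ vs D ∧ t ≠ x ∧ t ≠ y},
        In G {z | z ∉ {t | t ∈ vs E ∧ t ≠ x ∧ t ≠ y} ∧ z ≠ x ∧ z ≠ y} a b := by
    intro C D E hC hD hE hc hd he hCE hDE
    obtain ⟨a, ha, hax, hay⟩ := hC.cyc.third hc
    obtain ⟨b, hb, hbx, hby⟩ := hD.cyc.third hd
    refine ⟨a, ⟨ha, hax, hay⟩, b, ⟨hb, hbx, hby⟩, (hE.con a b (hC.cyc.vs_sub ha) (hD.cyc.vs_sub hb)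
      ?_ ?_).mono ?_⟩
    · exact fun h => dis hC hE hc he hCE a ⟨ha, hax, hay⟩ ⟨h, hax, hay⟩
    · exact fun h => dis hD hE hd he hDE b ⟨hb, hbx, hby⟩ ⟨h, hbx, hby⟩
    · intro z hz
      have hz : z ∉ vs E := hz
      refine ⟨fun h => hz h.1, ?_, ?_⟩
      · rintro rfl; exact hz (mem_vs_left he)
      · rintro rfl; exact hz (mem_vs_right he)
  obtain ⟨cA, xA, yA⟩ := prop h₁ e₁
  obtain ⟨cB, xB, yB⟩ := prop h₂ e₂
  obtain ⟨cC, xC, yC⟩ := prop h₃ e₃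
  refine CDC.no_three hG hxy cA cB cC (dis h₁ h₂ e₁ e₂ h12) (dis h₂ h₃ e₂ e₃ h23)
    (dis h₃ h₁ e₃ e₁ h31) (by simp) (by simp) xA xB xC yA yB yC
    (link h₁ h₂ h₃ e₁ e₂ e₃ h31.symm h23) (link h₂ h₃ h₁ e₂ e₃ e₁ h12.symm h31)
    (link h₃ h₁ h₂ e₃ e₁ e₂ h23.symm h12)

/-- The peripheral cycles, which play the role of the faces. -/
noncomputable def faces (G : SimpleGraph V) : Finset (Finset (Sym2 V)) :=
  Finset.univ.filter (Per G)

theorem mem_faces {C : Finset (Sym2 V)} : C ∈ faces G ↔ Per G C := by simp [faces]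

/-- Every edge lies on exactly two faces: on at least two, because a peripheral cycle through the
edge can be chosen to avoid a given vertex of another one. -/
theorem faces_edge (hG : IsPlanar G) (hT : TC G) {e : Sym2 V} (he : e ∈ G.edgeSet) :
    ((faces G).filter (e ∈ ·)).card = 2 := by
  induction e with
  | _ x y =>
    have hxy : G.Adj x y := he
    obtain ⟨a, ha, hax, hay, -⟩ := hT.exists_ne x y y
    obtain ⟨C, hC, heC, haC⟩ := exists_per hT hxy ha hax hay
    obtain ⟨c, hc, hcx, hcy⟩ := hC.cyc.third heC
    obtain ⟨D, hD, heD, hcD⟩ := exists_per hT hxy (hC.cyc.vs_sub hc) hcx hcy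
    have hCD : C ≠ D := by rintro rfl; contradiction
    rw [Finset.card_eq_two]
    refine ⟨C, D, hCD, ?_⟩
    ext F
    simp only [Finset.mem_filter, mem_faces, Finset.mem_insert, Finset.mem_singleton]
    constructor
    · rintro ⟨hF, heF⟩
      by_contra! hne
      exact Per.no_three hG hT hC hD hF hCD hne.2.symm hne.1 heC heD heF
    · rintro (rfl | rfl)
      exacts [⟨hC, heC⟩, ⟨hD, heD⟩]

end CDC

/-! ### Euler's inequality -/

namespace CDC
set_option linter.unusedSectionVars false
variable {V : Type*} {G : SimpleGraph V} [Fintype V]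

/-- The indicator of an edge set, as a vector over `𝔽₂`. -/
noncomputable def ind (G : SimpleGraph V) (C : Finset (Sym2 V)) : G.edgeSet → ZMod 2 :=
  fun e => if (e : Sym2 V) ∈ C then 1 else 0

theorem ind_symmDiff (C D : Finset (Sym2 V)) : ind G (symmDiff C D) = ind G C + ind G D := by
  funext e
  simp only [ind, Pi.add_apply, Finset.mem_symmDiff]
  by_cases h1 : (e : Sym2 V) ∈ C <;> by_cases h2 : (e : Sym2 V) ∈ D <;> simp [h1, h2]
  decide

/-- The boundary map of the graph over `𝔽₂`. -/
noncomputable def bd (G : SimpleGraph V) : (G.edgeSet → ZMod 2) →ₗ[ZMod 2] (U G → ZMod 2) where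
  toFun f v := ∑ e : G.edgeSet, if (v : V) ∈ (e : Sym2 V) then f e else 0
  map_add' f g := by
    funext v
    simp only [Pi.add_apply, ← Finset.sum_add_distrib]
    refine Finset.sum_congr rfl fun e _ => ?_
    split_ifs <;> simp
  map_smul' c f := by
    funext v
    simp only [Pi.smul_apply, smul_eq_mul, Finset.mul_sum, RingHom.id_apply]
    refine Finset.sum_congr rfl fun e _ => ?_
    split_ifs <;> simp

theorem bd_apply (f : G.edgeSet → ZMod 2) (v : U G) :
    bd G f v = ∑ e : G.edgeSet, if (v : V) ∈ (e : Sym2 V) then f e else 0 := rfl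

theorem zmod2 {a : ZMod 2} (h : a ≠ 0) : a = 1 := by
  revert a; decide

theorem ind_cyc {D : Finset (Sym2 V)} (hD : IsCyc G D) : bd G (ind G D) = 0 := by
  funext v
  rw [bd_apply]
  by_cases hv : (v : V) ∈ vs D
  · obtain ⟨y, z, hyz, h⟩ := hD.deg hv
    have hy := (h y).2 (.inl rfl)
    have hz := (h z).2 (.inr rfl)
    rw [Finset.sum_eq_add (⟨s(v, y), hD.sub hy⟩ : G.edgeSet) ⟨s(v, z), hD.sub hz⟩]
    · simp [ind, hy, hz]; decide
    · simp only [ne_eq, Subtype.mk.injEq, Sym2.congr_right]; exact hyz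
    · rintro ⟨e, he⟩ - ⟨h1, h2⟩
      rw [ite_eq_right_iff]
      intro hve
      obtain ⟨t, rfl⟩ := hve
      simp only [ind, ite_eq_right_iff, one_ne_zero, imp_false]
      intro ht
      rcases (h t).1 ht with rfl | rfl
      · exact h1 rfl
      · exact h2 rfl
    · simp
    · simp
  · refine Finset.sum_eq_zero fun e _ => ?_
    obtain ⟨e, he⟩ := e
    rw [ite_eq_right_iff]
    intro hve
    obtain ⟨t, rfl⟩ := hve
    simp only [ind, ite_eq_right_iff, one_ne_zero, imp_false]
    exact fun ht => hv (mem_vs_left ht)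

/-- A vertex covered by a vector in the kernel of the boundary map is covered twice. -/
theorem another {f : G.edgeSet → ZMod 2} (hf : bd G f = 0) {u v : V} (huv : G.Adj u v)
    (h1 : f ⟨s(u, v), huv⟩ = 1) : ∃ t, t ≠ v ∧ ∃ h : G.Adj u t, f ⟨s(u, t), h⟩ = 1 := by
  by_contra! hcon
  have := congrFun hf ⟨u, mem_U.2 ⟨v, huv⟩⟩
  rw [bd_apply, Finset.sum_eq_single ⟨s(u, v), huv⟩] at this
  · simp [h1] at this
  · rintro ⟨e, he⟩ - hne
    rw [ite_eq_right_iff]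
    intro hve
    obtain ⟨t, rfl⟩ := hve
    by_contra h0
    exact hcon t (by rintro rfl; exact hne rfl) he (zmod2 h0)
  · simp

/-- A nonzero vector of the kernel of the boundary map has a cycle in its support, found by
extending a longest path. -/
theorem exists_cyc {f : G.edgeSet → ZMod 2} (hf : bd G f = 0) (h0 : f ≠ 0) :
    ∃ D, IsCyc G D ∧ ∀ e : G.edgeSet, (e : Sym2 V) ∈ D → f e = 1 := by
  let good (n : ℕ) : Prop := ∃ u w P E, u ≠ w ∧ Pth G u w P E ∧
    (∀ e : G.edgeSet, (e : Sym2 V) ∈ E → f e = 1) ∧ P.card = n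
  have hex : ∃ n, good n := by
    obtain ⟨⟨e, he⟩, h⟩ := Function.ne_iff.1 h0
    induction e with
    | _ a b =>
      have hab : G.Adj a b := he
      refine ⟨_, a, b, _, _, hab.ne, .single hab, ?_, rfl⟩
      rintro ⟨e, he⟩ h'
      simp only [Finset.mem_singleton] at h'
      subst h'
      exact zmod2 h
  obtain ⟨n₀, hn₀⟩ := hex
  have hbd : ∀ n, good n → n ≤ Fintype.card V := by
    rintro n ⟨u, w, P, E, -, -, -, rfl⟩
    exact Finset.card_le_univ _
  have hmax := Nat.findGreatest_spec (P := good) (hbd _ hn₀) hn₀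
  obtain ⟨u, w, P, E, huw, p, hE, hn⟩ := hmax
  obtain ⟨y, hyP, -, hy⟩ := p.deg_left huw
  have huy := (hy y).2 rfl
  obtain ⟨t, hty, hut, h1⟩ := another hf (p.edge huy).1 (hE ⟨_, p.sub huy⟩ huy)
  by_cases htP : t ∈ P
  · obtain ⟨P₁, P₂, E₁, E₂, p1, p2, rfl, rfl, h3, h4⟩ := p.split htP
    have hn : s(u, t) ∉ E₁ := fun h => hty ((hy t).1 (by simp [h]))
    refine ⟨_, IsCyc.of_edge hut p1 hn, ?_⟩
    rintro ⟨e, he⟩ h'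
    simp only [Finset.mem_insert] at h'
    rcases h' with rfl | h'
    · exact h1
    · exact hE _ (by simp [h'])
  · exfalso
    have hg : good (P.card + 1) := by
      refine ⟨t, w, _, _, ?_, .cons hut.symm p htP, ?_, by simp [htP]⟩
      · rintro rfl; exact htP p.right
      · rintro ⟨e, he⟩ h'
        simp only [Finset.mem_insert] at h'
        rcases h' with rfl | h'
        · have : (⟨s(t, u), he⟩ : G.edgeSet) = ⟨s(u, t), hut⟩ := Subtype.ext Sym2.eq_swap
          rw [this]; exact h1
        · exact hE _ h'
    have := Nat.le_findGreatest (hbd _ hg) hg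
    omega

/-- The cycle space is spanned by the faces. -/
theorem ker_le_span (hT : TC G) :
    LinearMap.ker (bd G) ≤ Submodule.span (ZMod 2) (ind G '' (faces G : Set (Finset (Sym2 V)))) := by
  intro f hf
  rw [LinearMap.mem_ker] at hf
  induction hn : (Finset.univ.filter (fun e => f e ≠ 0)).card using Nat.strong_induction_on
    generalizing f with
  | _ n ih =>
    by_cases h0 : f = 0
    · rw [h0]; exact Submodule.zero_mem _
    obtain ⟨D, hD, hDf⟩ := exists_cyc hf h0
    have h1 : ind G D ∈ Submodule.span (ZMod 2) (ind G '' (faces G : Set (Finset (Sym2 V)))) := by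
      refine gen_all (fun C => ind G C ∈ Submodule.span (ZMod 2)
        (ind G '' (faces G : Set (Finset (Sym2 V))))) ?_ hT ?_ hD
      · intro A B hA hB
        rw [ind_symmDiff]
        exact Submodule.add_mem _ hA hB
      · intro F hF
        exact Submodule.subset_span ⟨F, mem_faces.2 hF, rfl⟩
    have h2 : f - ind G D ∈ Submodule.span (ZMod 2)
        (ind G '' (faces G : Set (Finset (Sym2 V)))) := by
      refine ih _ ?_ (by rw [map_sub, hf, ind_cyc hD, sub_zero]) rfl
      rw [← hn]
      refine Finset.card_lt_card ⟨?_, ?_⟩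
      · intro e
        simp only [Finset.mem_filter, Finset.mem_univ, true_and, Pi.sub_apply]
        intro h hfe
        refine h ?_
        rw [hfe, ind, if_neg, sub_zero]
        intro h'
        have := hDf e h'
        simp [hfe] at this
      · intro hs
        obtain ⟨a, b, hab⟩ := hD.nonempty
        have h3 := hDf ⟨s(a, b), hD.sub hab⟩ hab
        have h4 := (Finset.mem_filter.1 (@hs ⟨s(a, b), hD.sub hab⟩
          (Finset.mem_filter.2 ⟨Finset.mem_univ _, by rw [h3]; decide⟩))).2
        rw [Pi.sub_apply, h3, ind, if_pos hab] at h4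
        exact h4 (sub_self _)
    have := Submodule.add_mem _ h2 h1
    rwa [sub_add_cancel] at this

theorem sum_faces (hG : IsPlanar G) (hT : TC G) : ∑ F ∈ faces G, ind G F = 0 := by
  funext e
  rw [Finset.sum_apply]
  simp only [ind]
  rw [Finset.sum_ite, Finset.sum_const_zero, add_zero, Finset.sum_const, faces_edge hG hT e.2]
  simp only [Pi.zero_apply]; decide

/-- The faces sum to zero, so their span has dimension less than their number. -/
theorem finrank_span_faces (hG : IsPlanar G) (hT : TC G) (hne : (faces G).Nonempty) :
    Module.finrank (ZMod 2)
      (Submodule.span (ZMod 2) (ind G '' (faces G : Set (Finset (Sym2 V))))) + 1 ≤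
      (faces G).card := by
  obtain ⟨F, hF⟩ := hne
  have h1 : Submodule.span (ZMod 2) (ind G '' (faces G : Set (Finset (Sym2 V)))) ≤
      Submodule.span (ZMod 2) (((faces G).erase F).image (ind G) : Set (G.edgeSet → ZMod 2)) := by
    rw [Submodule.span_le]
    rintro _ ⟨D, hD, rfl⟩
    by_cases hDF : D = F
    · subst hDF
      have := sum_faces hG hT
      rw [← Finset.add_sum_erase _ _ hF] at this
      rw [eq_neg_of_add_eq_zero_left this]
      refine Submodule.neg_mem _ (Submodule.sum_mem _ fun E hE => Submodule.subset_span ?_)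
      exact Finset.mem_coe.2 (Finset.mem_image_of_mem _ hE)
    · exact Submodule.subset_span (Finset.mem_coe.2 (Finset.mem_image_of_mem _
        (Finset.mem_erase.2 ⟨hDF, hD⟩)))
  have h2 := Submodule.finrank_mono h1
  have h3 := finrank_span_finset_le_card (R := ZMod 2) (((faces G).erase F).image (ind G))
  have h4 : (((faces G).erase F).image (ind G)).card ≤ ((faces G).erase F).card :=
    Finset.card_image_le
  have h5 := Finset.card_erase_add_one hF
  unfold Set.finrank at h3
  omega

theorem sum_bd (f : G.edgeSet → ZMod 2) : ∑ v, bd G f v = 0 := by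
  simp only [bd_apply]
  rw [Finset.sum_comm]
  refine Finset.sum_eq_zero fun e _ => ?_
  obtain ⟨e, he⟩ := e
  induction e with
  | _ a b =>
    have hab : G.Adj a b := he
    rw [Finset.sum_eq_add (⟨a, mem_U.2 ⟨b, hab⟩⟩ : U G) ⟨b, mem_U.2 ⟨a, hab.symm⟩⟩]
    · simp only [Sym2.mem_iff, true_or, or_true, if_true]
      generalize f _ = c
      revert c; decide
    · simpa using hab.ne
    · rintro ⟨v, hv⟩ - ⟨h1, h2⟩
      simp only [ne_eq, Subtype.mk.injEq] at h1 h2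
      simp [h1, h2]
    · simp
    · simp

/-- The inequality half of Euler's formula that is needed: the cycle space has dimension at least
`|E| - |V| + 1`, and at most the number of faces minus one. -/
theorem euler (hG : IsPlanar G) (hT : TC G) :
    Fintype.card G.edgeSet + 2 ≤ (faces G).card + (U G).card := by
  have hU : (U G).Nonempty := Finset.card_pos.1 (by have := hT.four; omega)
  obtain ⟨r, hr⟩ := hU
  have hfn : (faces G).Nonempty := by
    obtain ⟨t, hrt⟩ := mem_U.1 hr
    have := faces_edge hG hT (e := s(r, t)) hrt
    obtain ⟨F, hF⟩ := Finset.card_pos.1 (by rw [this]; norm_num :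
      0 < ((faces G).filter (s(r, t) ∈ ·)).card)
    exact ⟨F, (Finset.mem_filter.1 hF).1⟩
  have h1 := finrank_span_faces hG hT hfn
  have h2 := Submodule.finrank_mono (ker_le_span (G := G) hT)
  have h3 := LinearMap.finrank_range_add_finrank_ker (bd G)
  let φ : (U G → ZMod 2) →ₗ[ZMod 2] ZMod 2 := ∑ v, LinearMap.proj v
  have hφ : ∀ g, φ g = ∑ v, g v := fun g => by simp [φ]
  have h4 : LinearMap.range (bd G) ≤ LinearMap.ker φ := by
    rintro _ ⟨f, rfl⟩
    rw [LinearMap.mem_ker, hφ, sum_bd]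
  have h5 := Submodule.finrank_mono h4
  have h6 := LinearMap.finrank_range_add_finrank_ker φ
  have h7 : LinearMap.range φ = ⊤ := by
    rw [LinearMap.range_eq_top]
    intro c
    refine ⟨Pi.single ⟨r, hr⟩ c, ?_⟩
    rw [hφ, Finset.sum_pi_single']
    simp
  rw [h7, finrank_top, Module.finrank_self, Module.finrank_fintype_fun_eq_card,
    Fintype.card_coe] at h6
  rw [Module.finrank_fintype_fun_eq_card] at h3
  omega

end CDC

/-! ### The 3-connected case: saving triangular faces -/

namespace CDC
set_option linter.unusedSectionVars false
variable {V : Type*} {G : SimpleGraph V} [Fintype V]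

/-- A double cover of the edges of `G` by cycles, given by their edge sets. -/
def DC (G : SimpleGraph V) (S : Multiset (Finset (Sym2 V))) : Prop :=
  (∀ C ∈ S, IsCyc G C) ∧ ∀ e ∈ G.edgeSet, S.countP (e ∈ ·) = 2

theorem IsCyc.three_le {C : Finset (Sym2 V)} (h : IsCyc G C) : 3 ≤ C.card := by
  obtain ⟨a, b, hab⟩ := h.nonempty
  obtain ⟨c, hc, hca, hcb⟩ := h.third hab
  have hne := (h.adj hab).ne
  have h1 : ({a, b, c} : Finset V).card = 3 := by
    rw [Finset.card_eq_three]; exact ⟨a, b, c, hne, hca.symm, hcb.symm, rfl⟩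
  rw [h.card, ← h1]
  refine Finset.card_le_card ?_
  simp only [Finset.insert_subset_iff, Finset.singleton_subset_iff]
  exact ⟨mem_vs_left hab, mem_vs_right hab, hc⟩

theorem IsCyc.triangle {T : Finset (Sym2 V)} (h : IsCyc G T) (h3 : T.card = 3) {a b : V}
    (hab : s(a, b) ∈ T) : ∃ p, p ≠ a ∧ p ≠ b ∧ T = {s(a, b), s(a, p), s(p, b)} ∧
      vs T = {a, b, p} := by
  obtain ⟨p, hp, hpa, hpb⟩ := h.third hab
  have hne := (h.adj hab).ne
  have h1 : ({a, b, p} : Finset V).card = 3 := by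
    rw [Finset.card_eq_three]; exact ⟨a, b, p, hne, hpa.symm, hpb.symm, rfl⟩
  have hv : {a, b, p} = vs T := by
    refine Finset.eq_of_subset_of_card_le ?_ (by rw [← h.card, h3, h1])
    simp only [Finset.insert_subset_iff, Finset.singleton_subset_iff]
    exact ⟨mem_vs_left hab, mem_vs_right hab, hp⟩
  obtain ⟨y, z, hyz, hd⟩ := h.deg hp
  have hy := (hd y).2 (.inl rfl)
  have hz := (hd z).2 (.inr rfl)
  have hyv := mem_vs_right hy
  have hzv := mem_vs_right hz
  have hyp := (h.adj hy).ne
  have hzp := (h.adj hz).ne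
  rw [← hv] at hyv hzv
  simp only [Finset.mem_insert, Finset.mem_singleton] at hyv hzv
  have hpa' : s(p, a) ∈ T := (hd a).2 (by grind)
  have hpb' : s(p, b) ∈ T := (hd b).2 (by grind)
  refine ⟨p, hpa, hpb, ?_, hv.symm⟩
  symm
  refine Finset.eq_of_subset_of_card_le ?_ ?_
  · simp only [Finset.insert_subset_iff, Finset.singleton_subset_iff]
    exact ⟨hab, by rwa [Sym2.eq_swap], hpb'⟩
  · rw [h3]
    refine le_of_eq (Eq.symm ?_)
    rw [Finset.card_eq_three]
    refine ⟨_, _, _, ?_, ?_, ?_, rfl⟩ <;> simp only [ne_eq, Sym2.eq_iff] <;> grind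

/-- A cycle without chords. -/
def Induced (G : SimpleGraph V) (C : Finset (Sym2 V)) : Prop :=
  IsCyc G C ∧ ∀ u w, u ∈ vs C → w ∈ vs C → G.Adj u w → s(u, w) ∈ C

/-- A triangle sharing an edge with a chordless cycle other than itself has its third vertex, the
apex, off the cycle. -/
theorem Induced.apex {F T : Finset (Sym2 V)} (hF : Induced G F) (hT : IsCyc G T)
    (hTF : T ≠ F) (h3 : T.card = 3) {e : Sym2 V} (he : e ∈ T) (heF : e ∈ F) :
    ∃ a b p, e = s(a, b) ∧ p ∉ vs F ∧ T = {s(a, b), s(a, p), s(p, b)} ∧ vs T = {a, b, p} := by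
  induction e with
  | _ a b =>
    obtain ⟨p, hpa, hpb, h1, h2⟩ := hT.triangle h3 he
    refine ⟨a, b, p, rfl, fun hp => hTF ?_, h1, h2⟩
    refine hT.eq_of_subset hF.1 fun e he' => ?_
    have hv : ∀ z ∈ vs T, z ∈ vs F := by
      intro z hz
      rw [h2] at hz
      simp only [Finset.mem_insert, Finset.mem_singleton] at hz
      rcases hz with rfl | rfl | rfl
      exacts [mem_vs_left heF, mem_vs_right heF, hp]
    induction e with
    | _ c d => exact hF.2 c d (hv _ (mem_vs_left he')) (hv _ (mem_vs_right he')) (hT.adj he')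

/-- A triangle shares at most one edge with another chordless cycle. -/
theorem Induced.one_edge {F T : Finset (Sym2 V)} (hF : Induced G F) (hT : IsCyc G T)
    (hTF : T ≠ F) (h3 : T.card = 3) {e e' : Sym2 V} (he : e ∈ T) (heF : e ∈ F) (he' : e' ∈ T)
    (heF' : e' ∈ F) : e = e' := by
  obtain ⟨a, b, p, rfl, hp, h1, -⟩ := hF.apex hT hTF h3 he heF
  rw [h1] at he'
  simp only [Finset.mem_insert, Finset.mem_singleton] at he'
  rcases he' with h | rfl | rfl
  · exact h.symm
  · exact absurd (mem_vs_right heF') hp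
  · exact absurd (mem_vs_left heF') hp

/-- The cycle `F` rerouted around the triangles of `𝒯`. -/
noncomputable def reroute (𝒯 : Finset (Finset (Sym2 V))) (F : Finset (Sym2 V)) :
    Finset (Sym2 V) := symmDiff F (𝒯.biUnion id)

/-- If edge-disjoint triangles each meet `F` in one edge, and the edges of `F` met by any two of
them have a common end, then rerouting `F` around all of them gives a cycle: the apexes are
distinct, since triangles with the same apex would share an edge. -/
theorem reroute_cyc {F : Finset (Sym2 V)} (hF : Induced G F) (𝒯 : Finset (Finset (Sym2 V)))
    (hcyc : ∀ T ∈ 𝒯, IsCyc G T ∧ T.card = 3 ∧ T ≠ F ∧ ∃ e ∈ T, e ∈ F)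
    (hdis : ∀ T ∈ 𝒯, ∀ T' ∈ 𝒯, T ≠ T' → ∀ e ∈ T, e ∉ T')
    (hend : ∀ T ∈ 𝒯, ∀ T' ∈ 𝒯, T ≠ T' → ∀ e ∈ T, ∀ e' ∈ T', e ∈ F → e' ∈ F →
      ∃ c, c ∈ e ∧ c ∈ e') :
    IsCyc G (reroute 𝒯 F) ∧ ∀ z ∈ vs (reroute 𝒯 F), z ∈ vs F ∨ ∃ T ∈ 𝒯, z ∈ vs T := by
  induction 𝒯 using Finset.induction_on with
  | empty =>
    have : reroute ∅ F = F := by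
      ext e; simp [reroute, Finset.mem_symmDiff]
    rw [this]
    exact ⟨hF.1, fun z hz => .inl hz⟩
  | insert T 𝒯 hT ih =>
    obtain ⟨ih1, ih2⟩ := ih (fun T h => hcyc T (by simp [h]))
      (fun T h T' h' => hdis T (by simp [h]) T' (by simp [h']))
      (fun T h T' h' => hend T (by simp [h]) T' (by simp [h']))
    obtain ⟨hTc, h3, hTF, e, heT, heF⟩ := hcyc T (by simp)
    obtain ⟨a, b, p, rfl, hp, hTe, hTv⟩ := hF.apex hTc hTF h3 heT heF
    have hap : s(a, p) ∈ T := by simp [hTe]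
    have hpb : s(p, b) ∈ T := by simp [hTe]
    have hpn : p ∉ vs (reroute 𝒯 F) := by
      intro hpr
      rcases ih2 p hpr with h | ⟨T', hT', hpT'⟩
      · exact hp h
      obtain ⟨hTc', h3', hTF', e', heT', heF'⟩ := hcyc T' (by simp [hT'])
      have hne : T ≠ T' := by rintro rfl; exact hT hT'
      obtain ⟨c, hc, hc'⟩ := hend T (by simp) T' (by simp [hT']) hne _ heT e' heT' heF heF'
      obtain ⟨a', b', p', rfl, hp', hTe', hTv'⟩ := hF.apex hTc' hTF' h3' heT' heF'
      have hpp : p = p' := by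
        rw [hTv'] at hpT'
        simp only [Finset.mem_insert, Finset.mem_singleton] at hpT'
        rcases hpT' with rfl | rfl | h
        · exact absurd (mem_vs_left heF') hp
        · exact absurd (mem_vs_right heF') hp
        · exact h
      subst hpp
      have h1 : s(p, c) ∈ T := by
        rw [Sym2.mem_iff] at hc
        rcases hc with rfl | rfl
        · rwa [Sym2.eq_swap]
        · exact hpb
      have h2 : s(p, c) ∈ T' := by
        rw [Sym2.mem_iff] at hc'
        rcases hc' with rfl | rfl
        · rw [Sym2.eq_swap]; simp [hTe']
        · simp [hTe']
      exact hdis T (by simp) T' (by simp [hT']) hne _ h1 h2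
    have hdj : ∀ e ∈ T, e ∉ 𝒯.biUnion id := by
      intro e he he'
      simp only [Finset.mem_biUnion, id] at he'
      obtain ⟨T', hT', he'⟩ := he'
      exact hdis T (by simp) T' (by simp [hT']) (by rintro rfl; exact hT hT') e he he'
    have hab' : s(a, b) ∈ reroute 𝒯 F := by
      rw [reroute, Finset.mem_symmDiff]
      exact .inl ⟨heF, hdj _ heT⟩
    have hkey : insert s(a, p) (insert s(p, b) ((reroute 𝒯 F).erase s(a, b))) =
        reroute (insert T 𝒯) F := by
      have h1 : s(a, p) ∉ F := fun h => hp (mem_vs_right h)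
      have h2 : s(p, b) ∉ F := fun h => hp (mem_vs_left h)
      ext e
      have h4 := hdj e
      have hTm : e ∈ T ↔ e = s(a, b) ∨ e = s(a, p) ∨ e = s(p, b) := by rw [hTe]; simp
      simp only [Finset.mem_insert, Finset.mem_erase, reroute, Finset.mem_symmDiff,
        Finset.biUnion_insert, Finset.mem_union, id_eq]
      generalize 𝒯.biUnion id = X at *
      clear hTe hTv hdj hpn ih1 ih2
      grind
    have hd := ih1.detour hab' hpn (hTc.adj hap) (hTc.adj hpb)
    rw [hkey] at hd
    refine ⟨hd, fun z hz => ?_⟩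
    obtain ⟨t, ht⟩ := mem_vs.1 hz
    simp only [reroute, Finset.mem_symmDiff, Finset.mem_biUnion, id_eq] at ht
    rcases ht with ⟨h, -⟩ | ⟨⟨T', h1, h2⟩, -⟩
    · exact .inl (mem_vs_left h)
    · exact .inr ⟨T', h1, mem_vs_left h2⟩

/-- Two edges of a triangle meet. -/
theorem IsCyc.triangle_meet {T : Finset (Sym2 V)} (h : IsCyc G T) (h3 : T.card = 3) {e e' : Sym2 V}
    (he : e ∈ T) (he' : e' ∈ T) : ∃ c, c ∈ e ∧ c ∈ e' := by
  induction e with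
  | _ a b =>
    obtain ⟨p, hpa, hpb, h1, -⟩ := h.triangle h3 he
    rw [h1] at he'
    simp only [Finset.mem_insert, Finset.mem_singleton] at he'
    rcases he' with rfl | rfl | rfl
    · exact ⟨a, by simp, by simp⟩
    · exact ⟨a, by simp, by simp⟩
    · exact ⟨b, by simp, by simp⟩

section Savings

variable {𝓕 : Finset (Finset (Sym2 V))}

/-- Each edge of a face lies on exactly one other face. -/
theorem other_card (h𝓕 : ∀ F ∈ 𝓕, Induced G F)
    (h2 : ∀ e ∈ G.edgeSet, (𝓕.filter (e ∈ ·)).card = 2)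
    {F : Finset (Sym2 V)} (hF : F ∈ 𝓕) {e : Sym2 V} (he : e ∈ F) :
    (𝓕.filter (fun T => T ≠ F ∧ e ∈ T)).card = 1 := by
  have h1 := h2 e ((h𝓕 F hF).1.sub he)
  have h3 : 𝓕.filter (fun T => T ≠ F ∧ e ∈ T) = (𝓕.filter (e ∈ ·)).erase F := by
    ext T
    simp only [Finset.mem_filter, Finset.mem_erase]
    tauto
  rw [h3, Finset.card_erase_of_mem (by simp [hF, he]), h1]

/-- Deleting a suitable set `𝒟` of edge-disjoint triangular faces and rerouting the remaining
faces around them keeps a cycle double cover. -/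
theorem delete_dc (h𝓕 : ∀ F ∈ 𝓕, Induced G F)
    (h2 : ∀ e ∈ G.edgeSet, (𝓕.filter (e ∈ ·)).card = 2)
    {𝒟 : Finset (Finset (Sym2 V))} (hsub : 𝒟 ⊆ 𝓕) (h3 : ∀ T ∈ 𝒟, T.card = 3)
    (hdis : ∀ T ∈ 𝒟, ∀ T' ∈ 𝒟, T ≠ T' → ∀ e ∈ T, e ∉ T')
    (hend : ∀ F ∈ 𝓕, F.card ≠ 3 → ∃ b, ∀ T ∈ 𝒟, ∀ e ∈ T, e ∈ F → b ∈ e) :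
    ∃ S, DC G S ∧ Multiset.card S + 𝒟.card = 𝓕.card := by
  let tr (F : Finset (Sym2 V)) := 𝒟.filter (fun T => ∃ e ∈ T, e ∈ F)
  refine ⟨(𝓕 \ 𝒟).val.map (fun F => reroute (tr F) F), ⟨?_, ?_⟩, ?_⟩
  · intro C hC
    simp only [Multiset.mem_map, Finset.mem_val, Finset.mem_sdiff] at hC
    obtain ⟨F, ⟨hF, hFD⟩, rfl⟩ := hC
    refine (reroute_cyc (h𝓕 F hF) (tr F) ?_ ?_ ?_).1
    · intro T hT
      simp only [tr, Finset.mem_filter] at hT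
      exact ⟨(h𝓕 T (hsub hT.1)).1, h3 T hT.1, by rintro rfl; exact hFD hT.1, hT.2⟩
    · intro T hT T' hT'
      exact hdis T (Finset.mem_filter.1 hT).1 T' (Finset.mem_filter.1 hT').1
    · intro T hT T' hT' hne e he e' he' heF heF'
      by_cases hF3 : F.card = 3
      · exact (h𝓕 F hF).1.triangle_meet hF3 heF heF'
      · obtain ⟨b, hb⟩ := hend F hF hF3
        exact ⟨b, hb T (Finset.mem_filter.1 hT).1 e he heF,
          hb T' (Finset.mem_filter.1 hT').1 e' he' heF'⟩
  · intro e he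
    rw [Multiset.countP_map]
    change ((𝓕 \ 𝒟).filter (fun F => e ∈ reroute (tr F) F)).card = 2
    by_cases hD : ∃ T ∈ 𝒟, e ∈ T
    · obtain ⟨T, hT, heT⟩ := hD
      have hTc := (h𝓕 T (hsub hT)).1
      have huniq : ∀ T' ∈ 𝒟, e ∈ T' → T' = T := by
        intro T' hT' he'
        by_contra hne
        exact hdis T' hT' T hT hne e he' heT
      have hx : ∃ e₁ e₂, e₁ ∈ T ∧ e₂ ∈ T ∧ e₁ ≠ e₂ ∧ e₁ ≠ e ∧ e₂ ≠ e ∧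
          ∀ e' ∈ T, e' = e ∨ e' = e₁ ∨ e' = e₂ := by
        have h5 := h3 T hT
        have h6 := Finset.card_erase_of_mem heT
        rw [h5] at h6
        obtain ⟨e₁, e₂, hne, h7⟩ := Finset.card_eq_two.1 h6
        have m1 : e₁ ∈ T.erase e := by simp [h7]
        have m2 : e₂ ∈ T.erase e := by simp [h7]
        rw [Finset.mem_erase] at m1 m2
        refine ⟨e₁, e₂, m1.2, m2.2, hne, m1.1, m2.1, fun e' he' => ?_⟩
        by_cases h8 : e' = e
        · exact .inl h8
        · have : e' ∈ T.erase e := Finset.mem_erase.2 ⟨h8, he'⟩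
          rw [h7] at this
          simpa using Or.inr (a := e' = e) this
      obtain ⟨e₁, e₂, he₁, he₂, h12, h1, h2', hall⟩ := hx
      have hset : (𝓕 \ 𝒟).filter (fun F => e ∈ reroute (tr F) F) =
          𝓕.filter (fun F => F ≠ T ∧ e₁ ∈ F) ∪ 𝓕.filter (fun F => F ≠ T ∧ e₂ ∈ F) := by
        have hnD : ∀ {F e'}, F ≠ T → e' ∈ T → e' ∈ F → F ∉ 𝒟 := fun h h' h'' hFD =>
          hdis _ hFD T hT h _ h'' h'
        have hone : ∀ {F e'}, F ∈ 𝓕 → F ≠ T → e' ∈ T → e' ∈ F → e ∈ F → e' = e :=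
          fun hF hne h4 h5 h6 => (h𝓕 _ hF).one_edge hTc hne.symm (h3 T hT) h4 h5 heT h6
        have hmem : ∀ F, e ∈ (tr F).biUnion id ↔ ∃ e' ∈ T, e' ∈ F := by
          intro F
          simp only [tr, Finset.mem_biUnion, Finset.mem_filter, id_eq]
          constructor
          · rintro ⟨T', ⟨hT', hF⟩, he'⟩
            rwa [huniq T' hT' he'] at hF
          · exact fun h => ⟨T, ⟨hT, h⟩, heT⟩
        ext F
        simp only [Finset.mem_filter, Finset.mem_sdiff, Finset.mem_union, reroute,
          Finset.mem_symmDiff, hmem]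
        constructor
        · rintro ⟨⟨hF, hFD⟩, ⟨h4, h5⟩ | ⟨⟨e', h4, h5⟩, h6⟩⟩
          · exact absurd ⟨e, heT, h4⟩ h5
          · have hne : F ≠ T := by rintro rfl; exact hFD hT
            rcases hall e' h4 with rfl | rfl | rfl
            · exact absurd h5 h6
            · exact .inl ⟨hF, hne, h5⟩
            · exact .inr ⟨hF, hne, h5⟩
        · rintro (⟨hF, hne, h5⟩ | ⟨hF, hne, h5⟩)
          · exact ⟨⟨hF, hnD hne he₁ h5⟩, .inr ⟨⟨e₁, he₁, h5⟩, fun h6 => h1 (hone hF hne he₁ h5 h6)⟩⟩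
          · exact ⟨⟨hF, hnD hne he₂ h5⟩, .inr ⟨⟨e₂, he₂, h5⟩, fun h6 => h2' (hone hF hne he₂ h5 h6)⟩⟩
      rw [hset, Finset.card_union_of_disjoint, other_card h𝓕 h2 (hsub hT) he₁,
        other_card h𝓕 h2 (hsub hT) he₂]
      rw [Finset.disjoint_left]
      intro F hF hF'
      simp only [Finset.mem_filter] at hF hF'
      exact h12 ((h𝓕 F hF.1).one_edge hTc hF.2.1.symm (h3 T hT) he₁ hF.2.2 he₂ hF'.2.2)
    · push Not at hD
      rw [← h2 e he]
      congr 1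
      ext F
      have hn : e ∉ (tr F).biUnion id := by
        simp only [tr, Finset.mem_biUnion, Finset.mem_filter, id_eq]
        rintro ⟨T, ⟨hT, -⟩, h⟩
        exact hD T hT h
      have := hD F
      simp only [Finset.mem_filter, Finset.mem_sdiff, reroute, Finset.mem_symmDiff]
      tauto
  · rw [Multiset.card_map, Finset.card_val]
    exact Finset.card_sdiff_add_card_eq_card hsub

theorem sum_card (h𝓕 : ∀ F ∈ 𝓕, Induced G F)
    (h2 : ∀ e ∈ G.edgeSet, (𝓕.filter (e ∈ ·)).card = 2) : ∑ F ∈ 𝓕, F.card = 2 * Fintype.card G.edgeSet := by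
  have h1 : ∀ F ∈ 𝓕, F.card = ∑ e ∈ G.edgeFinset, if e ∈ F then 1 else 0 := by
    intro F hF
    rw [← Finset.sum_filter, Finset.sum_const, smul_eq_mul, mul_one]
    congr 1
    ext e
    simp only [Finset.mem_filter, mem_edgeFinset]
    exact ⟨fun h => ⟨(h𝓕 F hF).1.sub h, h⟩, fun h => h.2⟩
  rw [Finset.sum_congr rfl h1, Finset.sum_comm]
  have h3 : ∀ e ∈ G.edgeFinset, (∑ F ∈ 𝓕, if e ∈ F then 1 else 0) = 2 := by
    intro e he
    rw [← h2 e (mem_edgeFinset.1 he), ← Finset.sum_filter, Finset.sum_const, smul_eq_mul, mul_one]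
  rw [Finset.sum_congr rfl h3, Finset.sum_const, smul_eq_mul, mul_comm, edgeFinset_card]

set_option maxHeartbeats 800000 in
/-- Let `f` be the number of faces and `m` the number of edges. Each nontriangular face `F` gets a
base vertex `b F`, and a triangle is a candidate for deletion if the edges it shares with each such
`F` are incident with `b F`; at most `∑ (|F| - 2)`, summed over the nontriangular faces, triangles
are not candidates. A maximal edge-disjoint set of candidates contains at least a quarter of them.
If `d` triangles are deleted, summing over the faces gives `10 f ≤ 6 m + 4 d`, and with Euler's
inequality the number `f - d` of remaining cycles is at most `(3 n - 6) / 2`. -/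
theorem savings (h𝓕 : ∀ F ∈ 𝓕, Induced G F)
    (h2 : ∀ e ∈ G.edgeSet, (𝓕.filter (e ∈ ·)).card = 2)
    [Nonempty V] {n : ℕ} (heul : Fintype.card G.edgeSet + 2 ≤ 𝓕.card + n) :
    ∃ S, DC G S ∧ 2 * Multiset.card S + 6 ≤ 3 * n := by
  have hb : ∀ F ∈ 𝓕, ∃ b, b ∈ vs F := fun F hF => by
    obtain ⟨a, b, h⟩ := (h𝓕 F hF).1.nonempty
    exact ⟨a, mem_vs_left h⟩
  choose! b hb using hb
  let tri := 𝓕.filter (·.card = 3)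
  obtain ⟨ok, hok⟩ : ∃ ok : Finset (Sym2 V) → Prop, ∀ T, ok T ↔
    ∀ F ∈ 𝓕, F.card ≠ 3 → ∀ e ∈ T, e ∈ F → b F ∈ e := ⟨_, fun _ => Iff.rfl⟩
  let cand := tri.filter ok
  have hcand : ∀ T ∈ cand, T ∈ 𝓕 ∧ T.card = 3 ∧
      ∀ F ∈ 𝓕, F.card ≠ 3 → ∀ e ∈ T, e ∈ F → b F ∈ e := by
    intro T hT
    simp only [cand, tri, Finset.mem_filter] at hT
    exact ⟨hT.1.1, hT.1.2, (hok T).1 hT.2⟩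
  let g (F : Finset (Sym2 V)) : ℕ := if F.card = 3 then 0 else F.card - 2
  have hexcl : tri.card ≤ cand.card + ∑ F ∈ 𝓕, g F := by
    have hs : tri ⊆ cand ∪ (𝓕.filter (·.card ≠ 3)).biUnion (fun F =>
        (F.filter (b F ∉ ·)).biUnion (fun e => 𝓕.filter (fun T => T ≠ F ∧ e ∈ T))) := by
      intro T hT
      by_cases hc : T ∈ cand
      · exact Finset.mem_union_left _ hc
      · have : ¬ ∀ F ∈ 𝓕, F.card ≠ 3 → ∀ e ∈ T, e ∈ F → b F ∈ e := fun h =>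
          hc (Finset.mem_filter.2 ⟨hT, (hok T).2 h⟩)
        push Not at this
        obtain ⟨F, hF, hF3, e, heT, heF, hbe⟩ := this
        refine Finset.mem_union_right _ ?_
        simp only [Finset.mem_biUnion, Finset.mem_filter]
        refine ⟨F, ⟨hF, hF3⟩, e, ⟨heF, hbe⟩, (Finset.mem_filter.1 hT).1, ?_, heT⟩
        rintro rfl
        exact hF3 (Finset.mem_filter.1 hT).2
    refine (Finset.card_le_card hs).trans ((Finset.card_union_le _ _).trans ?_)
    refine Nat.add_le_add_left (Finset.card_biUnion_le.trans ?_) _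
    rw [Finset.sum_filter]
    refine Finset.sum_le_sum fun F hF => ?_
    by_cases hF3 : F.card = 3
    · simp [hF3]
    · rw [if_pos hF3]
      simp only [g, if_neg hF3]
      refine Finset.card_biUnion_le.trans ?_
      rw [Finset.sum_congr rfl (g := fun _ => 1) (fun e he => other_card h𝓕 h2 hF
        (Finset.mem_filter.1 he).1), Finset.sum_const, smul_eq_mul, mul_one]
      obtain ⟨y, z, hyz, hd⟩ := (h𝓕 F hF).1.deg (hb F hF)
      have h5 : (F.filter (b F ∈ ·)).card = 2 := by
        rw [Finset.card_eq_two]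
        refine ⟨s(b F, y), s(b F, z), by rw [ne_eq, Sym2.congr_right]; exact hyz, ?_⟩
        ext e
        simp only [Finset.mem_filter, Finset.mem_insert, Finset.mem_singleton]
        constructor
        · rintro ⟨h6, t, rfl⟩
          rcases (hd t).1 h6 with rfl | rfl <;> simp
        · rintro (rfl | rfl)
          · exact ⟨(hd _).2 (.inl rfl), by simp⟩
          · exact ⟨(hd _).2 (.inr rfl), by simp⟩
      have h6 := Finset.card_filter_add_card_filter_not (s := F) (b F ∈ ·)
      omega
  let good (n : ℕ) : Prop := ∃ 𝒟 ⊆ cand, (∀ T ∈ 𝒟, ∀ T' ∈ 𝒟, T ≠ T' → ∀ e ∈ T, e ∉ T') ∧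
    𝒟.card = n
  have hbd : ∀ n, good n → n ≤ cand.card := by
    rintro n ⟨𝒟, h, -, rfl⟩
    exact Finset.card_le_card h
  have hg0 : good 0 := ⟨∅, by simp, by simp, by simp⟩
  obtain ⟨𝒟, hsub, hdis, hcard⟩ := Nat.findGreatest_spec (P := good) (hbd _ hg0) hg0
  have hmax : ∀ T ∈ cand, T ∈ 𝒟 ∨ ∃ D ∈ 𝒟, ∃ e ∈ D, e ∈ T := by
    intro T hT
    by_contra! hcon
    have hg : good (𝒟.card + 1) := by
      refine ⟨insert T 𝒟, Finset.insert_subset hT hsub, ?_, by simp [hcon.1]⟩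
      intro A hA B hB hne e he he'
      rw [Finset.mem_insert] at hA hB
      rcases hA with rfl | hA <;> rcases hB with rfl | hB
      · exact hne rfl
      · exact hcon.2 B hB e he' he
      · exact hcon.2 A hA e he he'
      · exact hdis A hA B hB hne e he he'
    have := Nat.le_findGreatest (hbd _ hg) hg
    omega
  have h4 : cand.card ≤ 4 * 𝒟.card := by
    have hs : cand ⊆ 𝒟.biUnion (fun D => {D} ∪ D.biUnion (fun e =>
        𝓕.filter (fun T => T ≠ D ∧ e ∈ T))) := by
      intro T hT
      simp only [Finset.mem_biUnion, Finset.mem_union, Finset.mem_singleton, Finset.mem_filter]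
      rcases hmax T hT with h | ⟨D, hD, e, he, heT⟩
      · exact ⟨T, h, .inl rfl⟩
      · by_cases hTD : T = D
        · exact ⟨D, hD, .inl hTD⟩
        · exact ⟨D, hD, .inr ⟨e, he, (hcand T hT).1, hTD, heT⟩⟩
    refine (Finset.card_le_card hs).trans (Finset.card_biUnion_le.trans ?_)
    rw [mul_comm, ← smul_eq_mul]
    refine Finset.sum_le_card_nsmul _ _ _ fun D hD => ?_
    have hDc := hcand D (hsub hD)
    refine (Finset.card_union_le _ _).trans ?_
    have h5 := Finset.card_biUnion_le (s := D) (t := fun e => 𝓕.filter (fun T => T ≠ D ∧ e ∈ T))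
    rw [Finset.sum_congr rfl (g := fun _ => 1) (fun e he => other_card h𝓕 h2 hDc.1 he),
      Finset.sum_const, smul_eq_mul, mul_one, hDc.2.1] at h5
    rw [Finset.card_singleton]
    omega
  obtain ⟨S, hS, hSc⟩ := delete_dc h𝓕 h2 (𝒟 := 𝒟) (fun T hT => (hcand T (hsub hT)).1)
    (fun T hT => (hcand T (hsub hT)).2.1) hdis
    (fun F hF hF3 => ⟨b F, fun T hT e he heF => (hcand T (hsub hT)).2.2 F hF hF3 e he heF⟩)
  refine ⟨S, hS, ?_⟩
  have hsum := sum_card h𝓕 h2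
  have htri : tri.card = ∑ F ∈ 𝓕, if F.card = 3 then 1 else 0 := by
    simp only [tri, Finset.card_filter]
  have hkey : ∑ F ∈ 𝓕, (10 + g F) ≤ ∑ F ∈ 𝓕, (3 * F.card + if F.card = 3 then 1 else 0) := by
    refine Finset.sum_le_sum fun F hF => ?_
    have := (h𝓕 F hF).1.three_le
    simp only [g]
    split_ifs <;> omega
  rw [Finset.sum_add_distrib, Finset.sum_add_distrib, Finset.sum_const, smul_eq_mul,
    ← Finset.mul_sum, hsum, ← htri] at hkey
  omega

end Savings

/-- The 3-connected case. -/
theorem TC.dc (hG : IsPlanar G) (hT : TC G) :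
    ∃ S, DC G S ∧ 2 * Multiset.card S + 6 ≤ 3 * (U G).card := by
  obtain ⟨r, hr⟩ := Finset.card_pos.1 (by have := hT.four; omega : 0 < (U G).card)
  have : Nonempty V := ⟨r⟩
  exact savings (𝓕 := faces G) (fun F hF => ⟨(mem_faces.1 hF).cyc, (mem_faces.1 hF).ind⟩)
    (fun e he => faces_edge hG hT he) (euler hG hT)

end CDC

/-! ### Separations of order at most two -/

namespace CDC
set_option linter.unusedSectionVars false
variable {V : Type*} {G : SimpleGraph V} [Fintype V]

/-- Bridgelessness in terms of cuts: no cut consists of a single edge. -/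
def BL (G : SimpleGraph V) : Prop :=
  ∀ (Z : Set V) (a b : V), a ∈ Z → b ∉ Z → G.Adj a b →
    ∃ c d, c ∈ Z ∧ d ∉ Z ∧ G.Adj c d ∧ s(c, d) ≠ s(a, b)

/-- A separation of `G` (ignoring isolated vertices) with both sides proper. -/
structure Sep (G : SimpleGraph V) (A B : Finset V) : Prop where
  un : ∀ v, v ∈ U G ↔ v ∈ A ∨ v ∈ B
  cov : ∀ a b, G.Adj a b → (a ∈ A ∧ b ∈ A) ∨ (a ∈ B ∧ b ∈ B)
  left : ∃ a ∈ A, a ∉ B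
  right : ∃ b ∈ B, b ∉ A

theorem Sep.symm {A B : Finset V} (h : Sep G A B) : Sep G B A :=
  ⟨fun v => by rw [h.un v, or_comm], fun a b hab => (h.cov a b hab).symm, h.right, h.left⟩

theorem Sep.card_left {A B : Finset V} (h : Sep G A B) : A.card < (U G).card := by
  obtain ⟨b, hb, hbA⟩ := h.right
  refine Finset.card_lt_card ⟨fun v hv => (h.un v).2 (.inl hv), fun hs => hbA (hs ?_)⟩
  exact (h.un b).2 (.inr hb)

theorem Sep.card {A B : Finset V} (h : Sep G A B) :
    A.card + B.card = (U G).card + (A ∩ B).card := by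
  have : U G = A ∪ B := by ext v; rw [h.un, Finset.mem_union]
  rw [this, Finset.card_union_add_card_inter]

/-- An edge of `G[A]` across a cut `Z` that avoids `A ∩ B` is not the only such edge. -/
theorem cut_lift (hB : BL G) {A B : Finset V} (h : Sep G A B) {Z : Set V}
    (hZ : ∀ z ∈ Z, z ∈ A → z ∉ B) {a b : V} (ha : a ∈ Z) (hb : b ∉ Z) (haA : a ∈ A)
    (hab : G.Adj a b) :
    ∃ c d, c ∈ Z ∧ d ∉ Z ∧ c ∈ A ∧ d ∈ A ∧ G.Adj c d ∧ s(c, d) ≠ s(a, b) := by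
  obtain ⟨c, d, hc, hd, hcd, hne⟩ := hB {z | z ∈ Z ∧ z ∈ A} a b ⟨ha, haA⟩ (fun h => hb h.1) hab
  have hcB := hZ c hc.1 hc.2
  have := h.cov c d hcd
  have hdA : d ∈ A := by tauto
  exact ⟨c, d, hc.1, fun h => hd ⟨h, hdA⟩, hc.2, hdA, hcd, hne⟩

/-- `G` restricted to `A`. -/
def R (G : SimpleGraph V) (A : Finset V) : SimpleGraph V where
  Adj a b := G.Adj a b ∧ a ∈ A ∧ b ∈ A
  symm := ⟨fun _ _ h => ⟨h.1.symm, h.2.2, h.2.1⟩⟩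
  loopless := ⟨fun _ h => h.1.ne rfl⟩

/-- `G` restricted to `A`, with the edge `xy` added. -/
def RE (G : SimpleGraph V) (A : Finset V) (x y : V) : SimpleGraph V where
  Adj a b := a ≠ b ∧ a ∈ A ∧ b ∈ A ∧ (G.Adj a b ∨ s(a, b) = s(x, y))
  symm := ⟨fun a b h => ⟨h.1.symm, h.2.2.1, h.2.1, by
    rw [G.adj_comm, Sym2.eq_swap (a := b)]; exact h.2.2.2⟩⟩
  loopless := ⟨fun _ h => h.1 rfl⟩

theorem minor_mono {W : Type*} {M : SimpleGraph W} {H : SimpleGraph V} (hH : H ≤ G)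
    (h : HasGraphMinor H M) : HasGraphMinor G M := by
  obtain ⟨f, h1, h2, h3, h4⟩ := h
  refine ⟨f, h1, fun w => (h2 w).mono fun a b hab => hH hab, h3, fun w₁ w₂ hw => ?_⟩
  obtain ⟨a, ha, b, hb, hab⟩ := h4 hw
  exact ⟨a, ha, b, hb, hH hab⟩

theorem planar_mono {H : SimpleGraph V} (hH : H ≤ G) (h : IsPlanar G) : IsPlanar H :=
  ⟨fun h' => h.1 (minor_mono hH h'), fun h' => h.2 (minor_mono hH h')⟩

/-- If `H` arises from a subgraph of `G` by adding an edge `xy`, and `G` has a connected set `K`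
of vertices, isolated in `H`, which is adjacent to `x` and `y`, then minors of `H` are minors
of `G`: contract `K` into `x`. -/
theorem minor_lift {W : Type*} {M : SimpleGraph W} (hM : ∀ w, ∃ w', M.Adj w w')
    {H : SimpleGraph V} {x y : V} (hH : ∀ a b, H.Adj a b → G.Adj a b ∨ s(a, b) = s(x, y))
    {K : Set V} (hK : Conn G K) (hKH : ∀ k ∈ K, ∀ t, ¬ H.Adj k t)
    (hx : ∃ k ∈ K, G.Adj k x) (hy : ∃ k ∈ K, G.Adj k y) (h : HasGraphMinor H M) :
    HasGraphMinor G M := by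
  obtain ⟨f, h1, h2, h3, h4⟩ := h
  have hc : ∀ w, Conn H (f w) := fun w => conn_of_connected (h2 w)
  have hfK : ∀ w, ∀ z ∈ f w, z ∉ K := by
    intro w z hz hzK
    obtain ⟨w', hw⟩ := hM w
    obtain ⟨a, ha, b, hb, hab⟩ := h4 hw
    cases (hc w).2 z hz a ha with
    | refl => exact hKH z hzK b hab
    | cons _ h _ => exact hKH z hzK _ h
  obtain ⟨kx, hkx, hkxa⟩ := hx
  obtain ⟨ky, hky, hkya⟩ := hy
  let f' (w : W) : Set V := {z | z ∈ f w ∨ (x ∈ f w ∧ z ∈ K)}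
  have hkk : ∀ w, x ∈ f w → In G (f' w) kx ky := fun w hw =>
    (hK.2 kx hkx ky hky).mono fun z hz => .inr ⟨hw, hz⟩
  have hstep : ∀ w a b, In H (f w) a b → In G (f' w) a b := by
    intro w a b hab
    induction hab with
    | refl ha => exact .refl (.inl ha)
    | @cons a b c ha hab hbc ih =>
      refine In.trans ?_ ih
      have hb := hbc.left
      rcases hH a b hab with h | h
      · exact .single (.inl ha) (.inl hb) h
      · rw [Sym2.eq_iff] at h
        rcases h with ⟨rfl, rfl⟩ | ⟨rfl, rfl⟩
        · exact ((In.single (.inl ha) (.inr ⟨ha, hkx⟩) hkxa.symm).trans (hkk w ha)).trans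
            (.single (.inr ⟨ha, hky⟩) (.inl hb) hkya)
        · exact ((In.single (.inl ha) (.inr ⟨hb, hky⟩) hkya.symm).trans (hkk w hb).symm).trans
            (.single (.inr ⟨hb, hkx⟩) (.inl hb) hkxa)
  refine ⟨f', fun w => ?_, fun w => Conn.connected ?_, ?_, ?_⟩
  · obtain ⟨z, hz⟩ := h1 w
    exact ⟨z, .inl hz⟩
  · by_cases hxw : x ∈ f w
    · refine Conn.of_root (r := x) (.inl hxw) ?_
      rintro z (hz | ⟨-, hz⟩)
      · exact hstep w z x ((hc w).2 z hz x hxw)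
      · exact ((hK.2 z hz kx hkx).mono fun t ht => Or.inr ⟨hxw, ht⟩).trans
          (.single (.inr ⟨hxw, hkx⟩) (.inl hxw) hkxa)
    · obtain ⟨r, hr⟩ := h1 w
      refine Conn.of_root (r := r) (.inl hr) ?_
      rintro z (hz | ⟨h, -⟩)
      · exact hstep w z r ((hc w).2 z hz r hr)
      · exact absurd h hxw
  · intro w₁ w₂ hne
    have hd := Set.disjoint_left.1 (h3 hne)
    rw [Set.disjoint_left]
    rintro z (hz | ⟨hx1, hz⟩) (hz' | ⟨hx2, hz'⟩)
    · exact hd hz hz'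
    · exact hfK _ z hz hz'
    · exact hfK _ z hz' hz
    · exact hd hx1 hx2
  · intro w₁ w₂ hw
    obtain ⟨a, ha, b, hb, hab⟩ := h4 hw
    rcases hH a b hab with h | h
    · exact ⟨a, .inl ha, b, .inl hb, h⟩
    · rw [Sym2.eq_iff] at h
      rcases h with ⟨rfl, rfl⟩ | ⟨rfl, rfl⟩
      · exact ⟨ky, .inr ⟨ha, hky⟩, b, .inl hb, hkya⟩
      · exact ⟨a, .inl ha, ky, .inr ⟨hb, hky⟩, hkya.symm⟩

theorem planar_lift {H : SimpleGraph V} {x y : V}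
    (hH : ∀ a b, H.Adj a b → G.Adj a b ∨ s(a, b) = s(x, y))
    {K : Set V} (hK : Conn G K) (hKH : ∀ k ∈ K, ∀ t, ¬ H.Adj k t)
    (hx : ∃ k ∈ K, G.Adj k x) (hy : ∃ k ∈ K, G.Adj k y) (h : IsPlanar G) : IsPlanar H := by
  refine ⟨fun h' => h.1 (minor_lift ?_ hH hK hKH hx hy h'),
    fun h' => h.2 (minor_lift ?_ hH hK hKH hx hy h')⟩
  · intro w
    exact ⟨w + 1, by simp⟩
  · rintro (w | w)
    · exact ⟨.inr 0, by simp⟩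
    · exact ⟨.inl 0, by simp⟩

/-- The bound proved for all bridgeless planar graphs with an edge, in terms of the number of
nonisolated vertices; it is slightly weaker than the one for 3-connected graphs. -/
def Good (G : SimpleGraph V) : Prop := ∃ S, DC G S ∧ 2 * Multiset.card S + 5 ≤ 3 * (U G).card

theorem U_R_sub {A : Finset V} : U (R G A) ⊆ A := by
  intro v hv
  obtain ⟨t, ht⟩ := mem_U.1 hv
  exact ht.2.1

theorem U_RE_sub {A : Finset V} {x y : V} : U (RE G A x y) ⊆ A := by
  intro v hv
  obtain ⟨t, ht⟩ := mem_U.1 hv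
  exact ht.2.1

theorem BL_R (hB : BL G) {A B : Finset V} (h : Sep G A B) (h1 : (A ∩ B).card ≤ 1) :
    BL (R G A) := by
  intro Z a b ha hb ⟨hab, haA, hbA⟩
  by_cases hZ : ∀ z ∈ Z, z ∈ A → z ∉ B
  · obtain ⟨c, d, hc, hd, hcA, hdA, hcd, hne⟩ := cut_lift hB h hZ ha hb haA hab
    exact ⟨c, d, hc, hd, ⟨hcd, hcA, hdA⟩, hne⟩
  · push Not at hZ
    obtain ⟨s, hsZ, hsA, hsB⟩ := hZ
    obtain ⟨c, d, hc, hd, hcA, hdA, hcd, hne⟩ := cut_lift hB h (Z := Zᶜ) (by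
      intro z hz hzA hzB
      have := Finset.card_le_one.1 h1 z (by simp [hzA, hzB]) s (by simp [hsA, hsB])
      subst this
      exact hz hsZ) hb (fun h => h ha) hbA hab.symm
    refine ⟨d, c, not_not.1 hd, hc, ⟨hcd.symm, hdA, hcA⟩, ?_⟩
    rwa [Sym2.eq_swap, Sym2.eq_swap (a := a)]

theorem count_zero {H : SimpleGraph V} {S : Multiset (Finset (Sym2 V))} (h : DC H S) {e : Sym2 V}
    (he : e ∉ H.edgeSet) : S.countP (e ∈ ·) = 0 := by
  rw [Multiset.countP_eq_zero]
  exact fun C hC heC => he ((h.1 C hC).sub heC)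

/-- Double covers of the two sides of a separation of order at most one are put together. -/
theorem good_one {A B : Finset V} (h : Sep G A B) (h1 : (A ∩ B).card ≤ 1) (hA : Good (R G A))
    (hB : Good (R G B)) : Good G := by
  obtain ⟨S, hS, hSc⟩ := hA
  obtain ⟨S', hS', hSc'⟩ := hB
  have htr : ∀ {A C}, IsCyc (R G A) C → IsCyc G C := by
    intro A C hC
    refine hC.transfer fun e he => ?_
    induction e with
    | _ a b => exact (hC.adj he).1
  refine ⟨S + S', ⟨?_, ?_⟩, ?_⟩
  · intro C hC
    rw [Multiset.mem_add] at hC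
    rcases hC with hC | hC
    · exact htr (hS.1 C hC)
    · exact htr (hS'.1 C hC)
  · intro e he
    rw [Multiset.countP_add]
    induction e with
    | _ a b =>
      have hab : G.Adj a b := he
      have hnot : ¬ (a ∈ A ∧ b ∈ A ∧ a ∈ B ∧ b ∈ B) := by
        rintro ⟨p, q, r, s⟩
        exact hab.ne (Finset.card_le_one.1 h1 a (by simp [p, r]) b (by simp [q, s]))
      rcases h.cov a b hab with ⟨p, q⟩ | ⟨p, q⟩
      · rw [hS.2 s(a, b) ⟨hab, p, q⟩, count_zero hS' (fun h : (R G B).Adj a b => hnot ⟨p, q, h.2.1, h.2.2⟩)]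
      · rw [hS'.2 s(a, b) ⟨hab, p, q⟩, count_zero hS (fun h : (R G A).Adj a b => hnot ⟨h.2.1, h.2.2, p, q⟩)]
  · have h2 := h.card
    have h3 := Finset.card_le_card (U_R_sub (G := G) (A := A))
    have h4 := Finset.card_le_card (U_R_sub (G := G) (A := B))
    rw [Multiset.card_add]
    omega

theorem U_R_nonempty {A B : Finset V} (h : Sep G A B) : (U (R G A)).Nonempty := by
  obtain ⟨a, haA, haB⟩ := h.left
  obtain ⟨t, hat⟩ := mem_U.1 ((h.un a).2 (.inl haA))
  have := h.cov a t hat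
  exact ⟨a, mem_U.2 ⟨t, hat, haA, by tauto⟩⟩

section Two

variable {A B : Finset V} {x y : V}

/-- If `A ∩ B ⊆ {p, q}`, with `q` outside `Z`, and all edges inside `A` leaving `Z` lie in `A ∩ B`,
then `A ∩ Z` is one side of a separation of order at most one. -/
theorem no_side (hno : ∀ A B, Sep G A B → 2 ≤ (A ∩ B).card) (h : Sep G A B) {Z : Set V} {p q : V}
    (hAB : ∀ z, z ∈ A → z ∈ B → z = p ∨ z = q)
    (hcross : ∀ c d, c ∈ Z → d ∉ Z → c ∈ A → d ∈ A → G.Adj c d → c ∈ B ∧ d ∈ B)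
    (hqZ : q ∉ Z) (hqB : q ∈ B) {a : V} (ha : a ∈ A) (haB : a ∉ B) (haZ : a ∈ Z) : False := by
  obtain ⟨A', hA'⟩ : ∃ A' : Finset V, ∀ v, v ∈ A' ↔ v ∈ A ∧ v ∈ Z :=
    ⟨A.filter (fun v => v ∈ Z), fun v => by simp only [Finset.mem_filter]⟩
  obtain ⟨B', hB'⟩ : ∃ B' : Finset V, ∀ v, v ∈ B' ↔ v ∈ B ∨ (v ∈ A ∧ v ∉ Z) :=
    ⟨B ∪ A.filter (fun v => v ∉ Z), fun v => by simp only [Finset.mem_filter, Finset.mem_union]⟩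
  have hs : Sep G A' B' := by
    refine ⟨fun v => ?_, fun c d hcd => ?_, ⟨a, by rw [hA']; exact ⟨ha, haZ⟩, ?_⟩,
      ⟨q, by rw [hB']; exact .inl hqB, by rw [hA']; exact fun h => hqZ h.2⟩⟩
    · rw [h.un, hA', hB']
      by_cases hv : v ∈ Z <;> simp only [hv] <;> grind
    · have h2 := hcross c d
      have h3 := hcross d c
      rw [hA', hA', hB', hB']
      rcases h.cov c d hcd with ⟨h4, h5⟩ | ⟨h4, h5⟩
      · by_cases hc : c ∈ Z <;> by_cases hd : d ∈ Z
        · exact .inl ⟨⟨h4, hc⟩, h5, hd⟩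
        · have := h2 hc hd h4 h5 hcd
          exact .inr ⟨.inl this.1, .inl this.2⟩
        · have := h3 hd hc h5 h4 hcd.symm
          exact .inr ⟨.inl this.2, .inl this.1⟩
        · exact .inr ⟨.inr ⟨h4, hc⟩, .inr ⟨h5, hd⟩⟩
      · exact .inr ⟨.inl h4, .inl h5⟩
    · rw [hB']
      rintro (h | h)
      exacts [haB h, h.2 haZ]
  have h1 : A' ∩ B' ⊆ {p} := by
    intro z hz
    rw [Finset.mem_inter, hA', hB'] at hz
    rw [Finset.mem_singleton]
    obtain ⟨⟨h1, h2⟩, h3 | h3⟩ := hz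
    · refine (hAB z h1 h3).resolve_right ?_
      rintro rfl
      exact hqZ h2
    · exact absurd h2 h3.2
  have h2 := Finset.card_le_card h1
  have h3 := hno _ _ hs
  rw [Finset.card_singleton] at h2
  omega

/-- Adding the virtual edge `xy` to one side of a separation of order two keeps bridgelessness: a
bridge would be a bridge of `G`, or would yield a separation of order at most one. -/
theorem BL_RE (hB : BL G) (hno : ∀ A B, Sep G A B → 2 ≤ (A ∩ B).card) (h : Sep G A B)
    (hxy : x ≠ y) (hAB : ∀ z, z ∈ A ∧ z ∈ B ↔ z = x ∨ z = y) : BL (RE G A x y) := by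
  have hx := (hAB x).2 (.inl rfl)
  have hy := (hAB y).2 (.inr rfl)
  intro Z a b ha hb ⟨hne, haA, hbA, hab⟩
  by_cases hZ : ∀ z ∈ Z, z ∈ A → z ∉ B
  · have hab : G.Adj a b := by
      refine hab.resolve_right fun h => ?_
      rw [Sym2.eq_iff] at h
      rcases h with ⟨rfl, rfl⟩ | ⟨rfl, rfl⟩
      · exact hZ a ha hx.1 hx.2
      · exact hZ a ha hy.1 hy.2
    obtain ⟨c, d, hc, hd, hcA, hdA, hcd, hne⟩ := cut_lift hB h hZ ha hb haA hab
    exact ⟨c, d, hc, hd, ⟨hcd.ne, hcA, hdA, .inl hcd⟩, hne⟩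
  by_cases hZ' : ∀ z ∈ Zᶜ, z ∈ A → z ∉ B
  · have hab : G.Adj a b := by
      refine hab.resolve_right fun h => ?_
      rw [Sym2.eq_iff] at h
      rcases h with ⟨rfl, rfl⟩ | ⟨rfl, rfl⟩
      · exact hZ' b hb hy.1 hy.2
      · exact hZ' b hb hx.1 hx.2
    obtain ⟨c, d, hc, hd, hcA, hdA, hcd, hne⟩ := cut_lift hB h hZ' hb (fun h => h ha) hbA hab.symm
    refine ⟨d, c, not_not.1 hd, hc, ⟨hcd.ne.symm, hdA, hcA, .inl hcd.symm⟩, ?_⟩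
    rwa [Sym2.eq_swap, Sym2.eq_swap (a := a)]
  push Not at hZ hZ'
  obtain ⟨p, hpZ, hpA, hpB⟩ := hZ
  obtain ⟨q, hqZ, hqA, hqB⟩ := hZ'
  have hqZ : q ∉ Z := hqZ
  have hpq : p ≠ q := by rintro rfl; exact hqZ hpZ
  have hp := (hAB p).1 ⟨hpA, hpB⟩
  have hq := (hAB q).1 ⟨hqA, hqB⟩
  have hpq' : s(p, q) = s(x, y) := by
    rw [Sym2.eq_iff]
    rcases hp with rfl | rfl <;> rcases hq with rfl | rfl <;> simp_all
  have hAB' : ∀ z, z ∈ A → z ∈ B → z = p ∨ z = q := by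
    intro z h1 h2
    have := (hAB z).1 ⟨h1, h2⟩
    grind
  by_cases hs : s(a, b) = s(p, q)
  swap
  · exact ⟨p, q, hpZ, hqZ, ⟨hpq, hpA, hqA, .inr hpq'⟩, Ne.symm hs⟩
  by_contra! hcon
  have hcross : ∀ c d, c ∈ Z → d ∉ Z → c ∈ A → d ∈ A → G.Adj c d → c ∈ B ∧ d ∈ B := by
    intro c d hc hd hcA hdA hcd
    have := hcon c d hc hd ⟨hcd.ne, hcA, hdA, .inl hcd⟩
    rw [hs, Sym2.eq_iff] at this
    rcases this with ⟨rfl, rfl⟩ | ⟨rfl, rfl⟩ <;> exact ⟨by assumption, by assumption⟩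
  obtain ⟨a₀, ha₀, ha₀B⟩ := h.left
  by_cases ha₀Z : a₀ ∈ Z
  · exact no_side hno h hAB' hcross hqZ hqB ha₀ ha₀B ha₀Z
  · refine no_side hno h (Z := Zᶜ) (p := q) (q := p) (fun z h1 h2 => (hAB' z h1 h2).symm) ?_
      (fun h => h hpZ) hpB ha₀ ha₀B ha₀Z
    intro c d hc hd hcA hdA hcd
    exact (hcross d c (not_not.1 hd) hc hdA hcA hcd.symm).symm

/-- In the absence of smaller separations, a component of `G - {x, y}` is adjacent to `x`. -/
theorem comp_adj (hno : ∀ A B, Sep G A B → 2 ≤ (A ∩ B).card) (hx : x ∈ U G) (hy : y ∈ U G)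
    (hxy : x ≠ y) {b : V} (hb : b ∈ U G) (hbx : b ≠ x) (hby : b ≠ y) :
    ∃ k ∈ {z | In G {z | z ≠ x ∧ z ≠ y} b z}, G.Adj k x := by
  by_contra! hcon
  obtain ⟨K, hK⟩ : ∃ K : Finset V, ∀ z, z ∈ K ↔ In G {z | z ≠ x ∧ z ≠ y} b z :=
    ⟨Finset.univ.filter (fun z => In G {z | z ≠ x ∧ z ≠ y} b z), fun z => by
       simp only [Finset.mem_filter, Finset.mem_univ, true_and]⟩
  have hbK : b ∈ K := (hK b).2 (.refl ⟨hbx, hby⟩)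
  have hKxy : ∀ z ∈ K, z ≠ x ∧ z ≠ y := fun z hz => ((hK z).1 hz).right
  have hstep : ∀ k ∈ K, ∀ t, G.Adj k t → t ∈ K ∨ t = y := by
    intro k hk t hkt
    by_cases hty : t = y
    · exact .inr hty
    have htx : t ≠ x := by
      rintro rfl
      exact hcon k ((hK k).1 hk) hkt
    exact .inl ((hK t).2 (In.trans ((hK k).1 hk) (.single (hKxy k hk) ⟨htx, hty⟩ hkt)))
  have hKU : ∀ z ∈ K, z ∈ U G := by
    intro z hz
    cases ((hK z).1 hz).symm with
    | refl => exact hb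
    | cons _ h _ => exact mem_U.2 ⟨_, h⟩
  have := hno (insert y K) (U G \ K) ⟨?_, ?_, ?_, ?_⟩
  · have h1 : insert y K ∩ (U G \ K) ⊆ {y} := by
      intro z hz
      simp only [Finset.mem_inter, Finset.mem_insert, Finset.mem_sdiff] at hz
      simp only [Finset.mem_singleton]
      tauto
    have := Finset.card_le_card h1
    simp only [Finset.card_singleton] at this
    omega
  · intro v
    simp only [Finset.mem_insert, Finset.mem_sdiff]
    have := hKU v
    constructor
    · tauto
    · rintro ((rfl | h) | h)
      exacts [hy, this h, h.1]
  · intro c d hcd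
    have h1 := hstep c
    have h2 := hstep d
    have h3 : c ∈ U G := mem_U.2 ⟨d, hcd⟩
    have h4 : d ∈ U G := mem_U.2 ⟨c, hcd.symm⟩
    simp only [Finset.mem_insert, Finset.mem_sdiff]
    by_cases hc : c ∈ K
    · have := h1 hc d hcd
      tauto
    · by_cases hd : d ∈ K
      · have := h2 hd c hcd.symm
        tauto
      · tauto
  · exact ⟨b, by simp [hbK], by simp [hbK]⟩
  · refine ⟨x, ?_, ?_⟩
    · simp only [Finset.mem_sdiff]
      exact ⟨hx, fun h => (hKxy x h).1 rfl⟩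
    · simp only [Finset.mem_insert]
      rintro (h | h)
      · exact hxy h
      · exact (hKxy x h).1 rfl

/-- A side of a separation with the virtual edge `xy` is a minor of `G`, in the absence of smaller
separations: contract a component of the other side. -/
theorem planar_RE (hG : IsPlanar G) (hno : ∀ A B, Sep G A B → 2 ≤ (A ∩ B).card) (h : Sep G A B)
    (hxy : x ≠ y) (hAB : ∀ z, z ∈ A ∧ z ∈ B ↔ z = x ∨ z = y) : IsPlanar (RE G A x y) := by
  have hx := (hAB x).2 (.inl rfl)
  have hy := (hAB y).2 (.inr rfl)
  obtain ⟨b, hb, hbA⟩ := h.right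
  have hbx : b ≠ x := by rintro rfl; exact hbA hx.1
  have hby : b ≠ y := by rintro rfl; exact hbA hy.1
  have hxU := (h.un x).2 (.inl hx.1)
  have hyU := (h.un y).2 (.inl hy.1)
  have hbU := (h.un b).2 (.inr hb)
  have hKA : ∀ k, In G {z | z ≠ x ∧ z ≠ y} b k → k ∉ A := by
    intro k hk hkA
    obtain ⟨c, d, hc, hcd, hd, hd'⟩ := hk.firstHit (X := {z | z ∈ A}) hbA hkA
    have hd' : d ≠ x ∧ d ≠ y := hd'
    have hd : d ∈ A := hd
    have h1 := h.cov c d hcd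
    have h2 : c ∉ A := hc.right.2
    have h3 := hAB d
    tauto
  refine planar_lift (x := x) (y := y) (fun a b hab => hab.2.2.2) 
    (Conn.comp (S := {z | z ≠ x ∧ z ≠ y}) (a := b) ⟨hbx, hby⟩)
    (fun k hk t ht => hKA k hk ht.2.1) (comp_adj hno hxU hyU hxy hbU hbx hby) ?_ hG
  have := comp_adj hno hyU hxU hxy.symm hbU hby hbx
  simpa only [and_comm] using this

theorem pull_two {S : Multiset (Finset (Sym2 V))} {e : Sym2 V} (h : S.countP (e ∈ ·) = 2) :
    ∃ C D S', S = C ::ₘ D ::ₘ S' ∧ e ∈ C ∧ e ∈ D ∧ ∀ F ∈ S', e ∉ F := by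
  obtain ⟨C, hC, heC⟩ := Multiset.countP_pos.1 (by rw [h]; norm_num : 0 < S.countP (e ∈ ·))
  obtain ⟨S₁, rfl⟩ := Multiset.exists_cons_of_mem hC
  rw [Multiset.countP_cons_of_pos (p := fun F => e ∈ F) _ heC] at h
  obtain ⟨D, hD, heD⟩ := Multiset.countP_pos.1 (by omega : 0 < S₁.countP (e ∈ ·))
  obtain ⟨S₂, rfl⟩ := Multiset.exists_cons_of_mem hD
  rw [Multiset.countP_cons_of_pos (p := fun F => e ∈ F) _ heD] at h
  exact ⟨C, D, S₂, rfl, heC, heD, Multiset.countP_eq_zero.1 (by omega)⟩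

end Two

end CDC

/-! ### Reduction to the 3-connected case -/

namespace CDC
set_option linter.unusedSectionVars false
variable {V : Type*} {G : SimpleGraph V} [Fintype V]

section Two

variable {A B : Finset V} {x y : V}

theorem vs_RE {C : Finset (Sym2 V)} (hC : IsCyc (RE G A x y) C) : ∀ z ∈ vs C, z ∈ A :=
  fun _ hz => U_RE_sub (hC.vs_sub hz)

theorem RE_edge {C : Finset (Sym2 V)} (hC : IsCyc (RE G A x y) C) {e : Sym2 V} (he : e ∈ C)
    (hne : e ≠ s(x, y)) : e ∈ G.edgeSet := by
  induction e with
  | _ a b => exact (hC.adj he).2.2.2.resolve_right hne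

/-- Two cycles through the virtual edge `xy`, one on each side of the separation, combine to a
cycle of `G`. -/
theorem merge_RE (hAB : ∀ z, z ∈ A ∧ z ∈ B ↔ z = x ∨ z = y)
    {C D : Finset (Sym2 V)} (hC : IsCyc (RE G A x y) C) (hD : IsCyc (RE G B x y) D)
    (h1 : s(x, y) ∈ C) (h2 : s(x, y) ∈ D) :
    IsCyc G (C.erase s(x, y) ∪ D.erase s(x, y)) := by
  have key : ∀ {A C}, IsCyc (RE G A x y) C → IsCyc (RE G Finset.univ x y) C := by
    intro A C hC
    refine hC.transfer fun e he => ?_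
    induction e with
    | _ a b =>
      have := hC.adj he
      exact ⟨this.1, Finset.mem_univ _, Finset.mem_univ _, this.2.2.2⟩
  refine ((key hC).merge (key hD) h1 h2 fun z hz hz' =>
    (hAB z).1 ⟨vs_RE hC z hz, vs_RE hD z hz'⟩).transfer fun e he => ?_
  rw [Finset.mem_union, Finset.mem_erase, Finset.mem_erase] at he
  rcases he with he | he
  · exact RE_edge hC he.2 he.1
  · exact RE_edge hD he.2 he.1

/-- Double covers of the two sides of a separation of order two, each completed by the virtual edge
`xy`, are put together by merging a cycle through `xy` on one side with one on the other side; if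
`xy` is not an edge of `G`, both pairs of such cycles are merged. -/
theorem good_two (h : Sep G A B) (hxy : x ≠ y) (hAB : ∀ z, z ∈ A ∧ z ∈ B ↔ z = x ∨ z = y)
    (hA : Good (RE G A x y)) (hB : Good (RE G B x y)) : Good G := by
  have hx := (hAB x).2 (.inl rfl)
  have hy := (hAB y).2 (.inr rfl)
  obtain ⟨S, hS, hSc⟩ := hA
  obtain ⟨S', hS', hSc'⟩ := hB
  obtain ⟨C₁, C₂, T, rfl, hC₁, hC₂, hT⟩ := pull_two
    (hS.2 s(x, y) ⟨hxy, hx.1, hy.1, .inr rfl⟩)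
  obtain ⟨D₁, D₂, T', rfl, hD₁, hD₂, hT'⟩ := pull_two
    (hS'.2 s(x, y) ⟨hxy, hx.2, hy.2, .inr rfl⟩)
  have cC₁ := hS.1 C₁ (by simp)
  have cC₂ := hS.1 C₂ (by simp)
  have cT : ∀ F ∈ T, IsCyc (RE G A x y) F := fun F hF => hS.1 F (by simp [hF])
  have cD₁ := hS'.1 D₁ (by simp)
  have cD₂ := hS'.1 D₂ (by simp)
  have cT' : ∀ F ∈ T', IsCyc (RE G B x y) F := fun F hF => hS'.1 F (by simp [hF])
  have gT : ∀ F ∈ T + T', IsCyc G F := by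
    intro F hF
    rcases Multiset.mem_add.1 hF with hF | hF
    · refine (cT F hF).transfer fun e he => RE_edge (cT F hF) he ?_
      rintro rfl
      exact hT F hF he
    · refine (cT' F hF).transfer fun e he => RE_edge (cT' F hF) he ?_
      rintro rfl
      exact hT' F hF he
  have hM := merge_RE hAB cC₁ cD₁ hC₁ hD₁
  have hM' := merge_RE hAB cC₂ cD₂ hC₂ hD₂
  have hcard := h.card
  have hU := Finset.card_le_card (U_RE_sub (G := G) (A := A) (x := x) (y := y))
  have hU' := Finset.card_le_card (U_RE_sub (G := G) (A := B) (x := x) (y := y))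
  have hABc : (A ∩ B).card = 2 := by
    rw [← Finset.card_pair hxy]
    congr 1
    ext z
    simpa using hAB z
  -- Every edge of `G` other than `xy` belongs to exactly one side.
  have hside : ∀ e ∈ G.edgeSet, e ≠ s(x, y) →
      (e ∈ (RE G A x y).edgeSet ∧ e ∉ (RE G B x y).edgeSet) ∨
      (e ∈ (RE G B x y).edgeSet ∧ e ∉ (RE G A x y).edgeSet) := by
    intro e he hne
    induction e with
    | _ a b =>
      have hab : G.Adj a b := he
      have hnot : ¬ (a ∈ A ∧ b ∈ A ∧ a ∈ B ∧ b ∈ B) := by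
        rintro ⟨p, q, r, s⟩
        have h1 := (hAB a).1 ⟨p, r⟩
        have h2 := (hAB b).1 ⟨q, s⟩
        have h3 := hab.ne
        rw [Ne, Sym2.eq_iff] at hne
        grind
      rcases h.cov a b hab with ⟨p, q⟩ | ⟨p, q⟩
      · exact .inl ⟨⟨hab.ne, p, q, .inl hab⟩,
          fun h : (RE G B x y).Adj a b => hnot ⟨p, q, h.2.1, h.2.2.1⟩⟩
      · exact .inr ⟨⟨hab.ne, p, q, .inl hab⟩,
          fun h : (RE G A x y).Adj a b => hnot ⟨h.2.1, h.2.2.1, p, q⟩⟩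
  have hmem : ∀ (C D : Finset (Sym2 V)) e, e ≠ s(x, y) →
      (e ∈ C.erase s(x, y) ∪ D.erase s(x, y) ↔ e ∈ C ∨ e ∈ D) := by
    intro C D e hne
    simp [hne]
  -- The counts of an edge other than `xy` on the two sides.
  have hcnt : ∀ e ∈ G.edgeSet, e ≠ s(x, y) →
      (T.countP (e ∈ ·) + (if e ∈ C₂ then 1 else 0) + (if e ∈ C₁ then 1 else 0) = 2 ∧
        T'.countP (e ∈ ·) = 0 ∧ e ∉ D₁ ∧ e ∉ D₂) ∨
      (T'.countP (e ∈ ·) + (if e ∈ D₂ then 1 else 0) + (if e ∈ D₁ then 1 else 0) = 2 ∧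
        T.countP (e ∈ ·) = 0 ∧ e ∉ C₁ ∧ e ∉ C₂) := by
    intro e he hne
    rcases hside e he hne with ⟨h1, h2⟩ | ⟨h1, h2⟩
    · left
      have h3 := hS.2 e h1
      rw [Multiset.countP_cons, Multiset.countP_cons] at h3
      exact ⟨h3, Multiset.countP_eq_zero.2 fun F hF hF' => h2 ((cT' F hF).sub hF'),
        fun h => h2 (cD₁.sub h), fun h => h2 (cD₂.sub h)⟩
    · right
      have h3 := hS'.2 e h1
      rw [Multiset.countP_cons, Multiset.countP_cons] at h3
      exact ⟨h3, Multiset.countP_eq_zero.2 fun F hF hF' => h2 ((cT F hF).sub hF'),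
        fun h => h2 (cC₁.sub h), fun h => h2 (cC₂.sub h)⟩
  simp only [Multiset.card_cons] at hSc hSc'
  by_cases hadj : G.Adj x y
  · refine ⟨(C₁.erase s(x, y) ∪ D₁.erase s(x, y)) ::ₘ C₂ ::ₘ D₂ ::ₘ (T + T'), ⟨?_, ?_⟩, ?_⟩
    · intro F hF
      simp only [Multiset.mem_cons] at hF
      rcases hF with rfl | rfl | rfl | hF
      · exact hM
      · refine cC₂.transfer fun e he => ?_
        by_cases hne : e = s(x, y)
        · rw [hne]; exact hadj
        · exact RE_edge cC₂ he hne
      · refine cD₂.transfer fun e he => ?_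
        by_cases hne : e = s(x, y)
        · rw [hne]; exact hadj
        · exact RE_edge cD₂ he hne
      · exact gT F hF
    · intro e he
      rw [Multiset.countP_cons, Multiset.countP_cons, Multiset.countP_cons, Multiset.countP_add]
      by_cases hne : e = s(x, y)
      · subst hne
        rw [Multiset.countP_eq_zero.2 hT, Multiset.countP_eq_zero.2 hT']
        simp [hC₂, hD₂]
      · simp only [hmem _ _ e hne]
        rcases hcnt e he hne with ⟨h1, h2, h3, h4⟩ | ⟨h1, h2, h3, h4⟩
        · simp only [h2, h3, h4, or_false, if_false]
          omega
        · simp only [h2, h3, h4, false_or, if_false]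
          omega
    · simp only [Multiset.card_cons, Multiset.card_add]
      omega
  · refine ⟨(C₁.erase s(x, y) ∪ D₁.erase s(x, y)) ::ₘ (C₂.erase s(x, y) ∪ D₂.erase s(x, y)) ::ₘ
      (T + T'), ⟨?_, ?_⟩, ?_⟩
    · intro F hF
      simp only [Multiset.mem_cons] at hF
      rcases hF with rfl | rfl | hF
      exacts [hM, hM', gT F hF]
    · intro e he
      rw [Multiset.countP_cons, Multiset.countP_cons, Multiset.countP_add]
      have hne : e ≠ s(x, y) := by
        rintro rfl
        exact hadj he
      simp only [hmem _ _ e hne]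
      rcases hcnt e he hne with ⟨h1, h2, h3, h4⟩ | ⟨h1, h2, h3, h4⟩
      · simp only [h2, h3, h4, or_false]
        omega
      · simp only [h2, h3, h4, false_or]
        omega
    · simp only [Multiset.card_cons, Multiset.card_add]
      omega

end Two

/-- Each nonisolated vertex of a bridgeless graph has degree at least two. -/
theorem BL.two (hB : BL G) {a b : V} (hab : G.Adj a b) : ∃ c, c ≠ b ∧ G.Adj a c := by
  obtain ⟨c, d, hc, hd, hcd, hne⟩ := hB {a} a b rfl hab.ne.symm hab
  obtain rfl : c = a := hc
  exact ⟨d, fun h => hne (by rw [h]), hcd⟩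

theorem good_triangle (hB : BL G) (h3 : (U G).card = 3) : Good G := by
  obtain ⟨a, b, c, hab, hac, hbc, hU⟩ := Finset.card_eq_three.1 h3
  have hin : ∀ u v, G.Adj u v → u = a ∨ u = b ∨ u = c := by
    intro u v huv
    have : u ∈ U G := mem_U.2 ⟨v, huv⟩
    rw [hU] at this
    simpa using this
  have key : ∀ {u v w}, U G = {u, v, w} → G.Adj u v ∧ G.Adj u w := by
    intro u v w hU
    have hmem : ∀ t, t ∈ U G ↔ t = u ∨ t = v ∨ t = w := by
      intro t
      rw [hU]
      simp
    obtain ⟨t, hut⟩ := mem_U.1 ((hmem u).2 (.inl rfl))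
    obtain ⟨t', htt, hut'⟩ := hB.two hut
    have h1 := (hmem t).1 (mem_U.2 ⟨u, hut.symm⟩)
    have h2 := (hmem t').1 (mem_U.2 ⟨u, hut'.symm⟩)
    have h3 := hut.ne
    have h4 := hut'.ne
    grind
  obtain ⟨ab, ac⟩ := key hU
  obtain ⟨bc, -⟩ := key (u := b) (v := c) (w := a) (by rw [hU]; ext; simp; tauto)
  have hcyc : IsCyc G {s(a, c), s(a, b), s(b, c)} := by
    refine .of_edge ac (.cons ab (.single bc) (by simp [hab, hac])) ?_
    simp [hab, hac, hbc.symm]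
  refine ⟨{{s(a, c), s(a, b), s(b, c)}, {s(a, c), s(a, b), s(b, c)}}, ⟨?_, ?_⟩, ?_⟩
  · intro C hC
    simp only [Multiset.insert_eq_cons, Multiset.mem_cons, Multiset.mem_singleton, or_self] at hC
    rwa [hC]
  · intro e he
    have : e ∈ ({s(a, c), s(a, b), s(b, c)} : Finset (Sym2 V)) := by
      induction e with
      | _ u v =>
        have huv : G.Adj u v := he
        have h1 := hin u v huv
        have h2 := hin v u huv.symm
        have h4 := huv.ne
        simp only [Finset.mem_insert, Finset.mem_singleton, Sym2.eq_iff]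
        clear key
        grind
    rw [Multiset.insert_eq_cons, ← Multiset.cons_zero, Multiset.countP_cons, Multiset.countP_cons,
      if_pos this]
    simp
  · simp [h3]

/-- A graph without separations of order at most two is 3-connected. -/
theorem TC_of_no (hno : ∀ A B, Sep G A B → 3 ≤ (A ∩ B).card) (h4 : 4 ≤ (U G).card) : TC G := by
  refine ⟨h4, fun x y a b ha hb hax hay hbx hby => ?_⟩
  by_contra hcon
  obtain ⟨K, hK⟩ : ∃ K : Finset V, ∀ z, z ∈ K ↔ In G {z | z ≠ x ∧ z ≠ y} a z :=
    ⟨Finset.univ.filter (fun z => In G {z | z ≠ x ∧ z ≠ y} a z), fun z => by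
      simp only [Finset.mem_filter, Finset.mem_univ, true_and]⟩
  obtain ⟨A, hA⟩ : ∃ A : Finset V, ∀ z, z ∈ A ↔ z ∈ U G ∧ (z ∈ K ∨ z = x ∨ z = y) :=
    ⟨(U G).filter (fun z => z ∈ K ∨ z = x ∨ z = y), fun z => by simp only [Finset.mem_filter]⟩
  have haK : a ∈ K := (hK a).2 (.refl ⟨hax, hay⟩)
  have hbK : b ∉ K := fun h => hcon ((hK b).1 h)
  have hstep : ∀ k ∈ K, ∀ t, G.Adj k t → t ∈ K ∨ t = x ∨ t = y := by
    intro k hk t hkt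
    by_cases htx : t = x
    · exact .inr (.inl htx)
    by_cases hty : t = y
    · exact .inr (.inr hty)
    have hk := (hK k).1 hk
    exact .inl ((hK t).2 (hk.trans (.single hk.right ⟨htx, hty⟩ hkt)))
  have hs : Sep G A (U G \ K) := by
    refine ⟨fun v => ?_, fun c d hcd => ?_, ⟨a, (hA a).2 ⟨ha, .inl haK⟩, by simp [haK]⟩,
      ⟨b, by simp [hb, hbK], fun h => ?_⟩⟩
    · rw [hA, Finset.mem_sdiff]
      by_cases hv : v ∈ K <;> simp +contextual [hv]
    · have h1 : c ∈ U G := mem_U.2 ⟨d, hcd⟩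
      have h2 : d ∈ U G := mem_U.2 ⟨c, hcd.symm⟩
      rw [hA, hA, Finset.mem_sdiff, Finset.mem_sdiff]
      by_cases hc : c ∈ K
      · exact .inl ⟨⟨h1, .inl hc⟩, h2, hstep c hc d hcd⟩
      · by_cases hd : d ∈ K
        · exact .inl ⟨⟨h1, hstep d hd c hcd.symm⟩, h2, .inl hd⟩
        · exact .inr ⟨⟨h1, hc⟩, h2, hd⟩
    · rcases ((hA b).1 h).2 with h | h | h
      exacts [hbK h, hbx h, hby h]
  have h1 : A ∩ (U G \ K) ⊆ {x, y} := by
    intro z hz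
    rw [Finset.mem_inter, hA, Finset.mem_sdiff] at hz
    rw [Finset.mem_insert, Finset.mem_singleton]
    exact hz.1.2.resolve_left hz.2.2
  have h2 := (Finset.card_le_card h1).trans Finset.card_le_two
  have h3 := hno _ _ hs
  omega

/-- Induction on the number of nonisolated vertices, splitting along separations of order at most
two. -/
theorem good_of_planar (hG : IsPlanar G) (hB : BL G) (hU : (U G).Nonempty) : Good G := by
  induction hm : (U G).card using Nat.strong_induction_on generalizing G with
  | _ m ih =>
    subst hm
    by_cases h1 : ∃ A B, Sep G A B ∧ (A ∩ B).card ≤ 1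
    · obtain ⟨A, B, h, h1⟩ := h1
      have key : ∀ {A B}, Sep G A B → (A ∩ B).card ≤ 1 → Good (R G A) := by
        intro A B h h1
        exact ih _ ((Finset.card_le_card U_R_sub).trans_lt h.card_left)
          (planar_mono (fun a b hab => hab.1) hG) (BL_R hB h h1) (U_R_nonempty h) rfl
      exact good_one h h1 (key h h1) (key h.symm (by rwa [Finset.inter_comm]))
    push Not at h1
    by_cases h2 : ∃ A B, Sep G A B ∧ (A ∩ B).card = 2
    · obtain ⟨A, B, h, h2⟩ := h2
      obtain ⟨x, y, hxy, hAB⟩ := Finset.card_eq_two.1 h2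
      have hAB : ∀ z, z ∈ A ∧ z ∈ B ↔ z = x ∨ z = y := by
        intro z
        rw [← Finset.mem_inter, hAB]
        simp
      have key : ∀ {A B}, Sep G A B → (∀ z, z ∈ A ∧ z ∈ B ↔ z = x ∨ z = y) →
          Good (RE G A x y) := by
        intro A B h hAB
        exact ih _ ((Finset.card_le_card U_RE_sub).trans_lt h.card_left)
          (planar_RE hG h1 h hxy hAB) (BL_RE hB h1 h hxy hAB)
          ⟨x, mem_U.2 ⟨y, hxy, ((hAB x).2 (.inl rfl)).1, ((hAB y).2 (.inr rfl)).1, .inr rfl⟩⟩ rfl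
      exact good_two h hxy hAB (key h hAB) (key h.symm fun z => by rw [and_comm, hAB])
    push Not at h2
    have hno : ∀ A B, Sep G A B → 3 ≤ (A ∩ B).card := by
      intro A B h
      have := h1 A B h
      have := h2 A B h
      omega
    by_cases h4 : 4 ≤ (U G).card
    · obtain ⟨S, hS, hc⟩ := (TC_of_no hno h4).dc hG
      exact ⟨S, hS, by omega⟩
    · refine good_triangle hB (le_antisymm (by omega) ?_)
      obtain ⟨a, ha⟩ := hU
      obtain ⟨b, hab⟩ := mem_U.1 ha
      obtain ⟨c, hcb, hac⟩ := hB.two hab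
      have : ({a, b, c} : Finset V) ⊆ U G := by
        intro z hz
        simp only [Finset.mem_insert, Finset.mem_singleton] at hz
        rcases hz with rfl | rfl | rfl
        exacts [ha, mem_U.2 ⟨a, hab.symm⟩, mem_U.2 ⟨a, hac.symm⟩]
      have h5 := Finset.card_le_card this
      rwa [Finset.card_eq_three.2 ⟨a, b, c, hab.ne, hac.ne, hcb.symm, rfl⟩] at h5

end CDC

/-! ### Cycles as subgraphs -/

namespace CDC
set_option linter.unusedSectionVars false
variable {V : Type*} {G : SimpleGraph V} [Fintype V]

theorem BL_of_bridgeless (h : ∀ e ∈ G.edgeSet, ¬ G.IsBridge e) : BL G := by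
  intro Z a b ha hb hab
  have h1 := h s(a, b) hab
  rw [isBridge_iff, not_not] at h1
  obtain ⟨p⟩ := h1
  obtain ⟨d, -, hd1, hd2⟩ := p.exists_boundary_dart Z ha hb
  have h2 := d.adj
  rw [deleteEdges_adj] at h2
  exact ⟨d.fst, d.snd, hd1, hd2, h2.1, h2.2⟩

/-- The subgraph of `G` formed by the edges of `G` in `C` and their ends. -/
def toSub (G : SimpleGraph V) (C : Finset (Sym2 V)) : G.Subgraph where
  verts := {v | ∃ t, s(v, t) ∈ C ∧ G.Adj v t}
  Adj a b := s(a, b) ∈ C ∧ G.Adj a b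
  adj_sub h := h.2
  edge_vert h := ⟨_, h⟩
  symm := ⟨fun a b h => ⟨by rw [Sym2.eq_swap]; exact h.1, h.2.symm⟩⟩

theorem mem_toSub {C : Finset (Sym2 V)} (h : IsCyc G C) (e : Sym2 V) :
    e ∈ (toSub G C).edgeSet ↔ e ∈ C := by
  induction e with
  | _ a b => exact ⟨fun h => h.1, fun h' => ⟨h', h.adj h'⟩⟩

theorem toSub_verts {C : Finset (Sym2 V)} (h : IsCyc G C) {v : V} :
    v ∈ (toSub G C).verts ↔ v ∈ vs C := by
  rw [mem_vs]
  exact ⟨fun ⟨t, ht⟩ => ⟨t, ht.1⟩, fun ⟨t, ht⟩ => ⟨t, ht, h.adj ht⟩⟩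

theorem isCycle_toSub {C : Finset (Sym2 V)} (h : IsCyc G C) : IsCycleSubgraph (toSub G C) := by
  refine ⟨?_, fun v hv => ?_⟩
  · obtain ⟨a, b, hab⟩ := h.nonempty
    obtain ⟨H, hH⟩ : ∃ H : SimpleGraph V, H = (toSub G C).spanningCoe := ⟨_, rfl⟩
    have hC : IsCyc H C := h.transfer fun e he => by
      subst hH
      induction e with
      | _ a b => exact ⟨he, h.adj he⟩
    have key : ∀ {P E u w}, Pth H u w P E → E ⊆ C → ∀ (hu : u ∈ (toSub G C).verts)
        (hw : w ∈ (toSub G C).verts), (toSub G C).coe.Reachable ⟨u, hu⟩ ⟨w, hw⟩ := by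
      intro P E u w p
      induction p with
      | nil u => intro _ hu hw; exact .refl _
      | @cons u v w S E huv p hu' ih =>
        intro hE hu hw
        have hC' : s(u, v) ∈ C := hE (by simp)
        have hv : v ∈ (toSub G C).verts := (toSub_verts h).2 (mem_vs_right hC')
        refine .trans (SimpleGraph.Adj.reachable ?_)
          (ih (fun e he => hE (by simp [he])) hv hw)
        exact ⟨hC', h.adj hC'⟩
    have : Nonempty (toSub G C).verts := ⟨⟨a, (toSub_verts h).2 (mem_vs_left hab)⟩⟩
    refine ⟨fun ⟨u, hu⟩ ⟨w, hw⟩ => ?_⟩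
    by_cases huw : u = w
    · subst huw; exact .refl _
    obtain ⟨P, Q, EP, EQ, hA⟩ := hC.arcs ((toSub_verts h).1 hu) ((toSub_verts h).1 hw) huw
    exact key hA.hp (by rw [hA.un]; exact Finset.subset_union_left) hu hw
  · obtain ⟨y, z, hyz, hdeg⟩ := h.deg ((toSub_verts h).1 hv)
    have : (toSub G C).neighborSet v = {y, z} := by
      ext t
      rw [Set.mem_insert_iff, Set.mem_singleton_iff, ← hdeg]
      exact ⟨fun h => h.1, fun h' => ⟨h', h.adj h'⟩⟩
    rw [this, Set.ncard_pair hyz]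

end CDC

/-- Every bridgeless planar graph on `n` vertices has a cycle double cover of size at most
`3⌊(n-1)/2⌋`. -/
theorem statement_4 {V : Type*} [Fintype V] (G : SimpleGraph V)
    (hplanar : IsPlanar G)
    (hbridgeless : ∀ e ∈ G.edgeSet, ¬ G.IsBridge e) :
    ∃ S : Multiset G.Subgraph, IsCDC G S ∧
      Multiset.card S ≤ 3 * ((Fintype.card V - 1) / 2) := by
  by_cases hU : (CDC.U G).Nonempty
  · obtain ⟨S, hS, hc⟩ := CDC.good_of_planar hplanar (CDC.BL_of_bridgeless hbridgeless) hU
    refine ⟨S.map (CDC.toSub G), ⟨?_, ?_⟩, ?_⟩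
    · intro C hC
      obtain ⟨D, hD, rfl⟩ := Multiset.mem_map.1 hC
      exact CDC.isCycle_toSub (hS.1 D hD)
    · intro e he
      rw [Multiset.countP_map, ← hS.2 e he, Multiset.countP_eq_card_filter]
      congr 1
      exact Multiset.filter_congr fun C hC => CDC.mem_toSub (hS.1 C hC) e
    · have h1 : (CDC.U G).card ≤ Fintype.card V := Finset.card_le_univ _
      rw [Multiset.card_map]
      omega
  · refine ⟨0, ⟨by simp, fun e he => ?_⟩, by simp⟩
    induction e with
    | _ a b => exact absurd ⟨a, CDC.mem_U.2 ⟨b, he⟩⟩ hU
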